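/- Let r₀ > 0 and let z₀ = (z₀,₁, z₀,₂) be a curve such that z₀(α) − (α,0) is 2π-periodic, z₀ extends holomorphically to the closed strip S_{r₀} = {α + iζ ∈ ℂ : |ζ| ≤ r₀}, z₀ is real for real α, the norm ‖z₀‖_{r₀}² = Σ_± ∫_𝕋 |z₀(α ± ir₀) − (α ± ir₀, 0)|² dα + Σ_± ∫_𝕋 |∂_α⁴ z₀(α ± ir₀)|² dα is finite, and z₀ satisfies the arc-chord condition on S_{r₀} (F(z₀)(α+iζ, β) bounded for α+iζ ∈ S_{r₀}, β ∈ 𝕋). Then there exist T > 0 and 0 < r < r₀ and a unique solution z(α,t) of the periodic Muskat contour equation on the time interval [−T, T] (holding also for complex α in the strip S_r), continuous in time with values in the space of curves with finite ‖·‖_r norm, with z(·,0) = z₀, and with z(·,t) satisfying the arc-chord condition on S_r for each t ∈ [−T,T]. No Rayleigh–Taylor assumption is made, and the solution exists both forwards and backwards in time. -/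

import Mathlib

open Real MeasureTheory Set

noncomputable section

/-- Distance from `β` to `2πℤ`. -/
def distTZ (β : ℝ) : ℝ := |β - 2 * π * ((round (β / (2 * π)) : ℤ) : ℝ)|

/-- Closed horizontal strip of half-width `r`. -/
def stripC (r : ℝ) : Set ℂ := {w : ℂ | |w.im| ≤ r}

/-- The complex-extended denominator
`cosh(z₂(γ) - z₂(γ-β)) - cos(z₁(γ) - z₁(γ-β))`. -/
def cQden (Z : ℂ → ℂ × ℂ) (γ : ℂ) (β : ℝ) : ℂ :=
  Complex.cosh ((Z γ).2 - (Z (γ - (β : ℂ))).2)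
    - Complex.cos ((Z γ).1 - (Z (γ - (β : ℂ))).1)

/-- `Z(γ) - (γ,0)` is `2π`-periodic. -/
def cPerCurve (Z : ℂ → ℂ × ℂ) : Prop :=
  ∀ γ : ℂ, Z (γ + ((2 * π : ℝ) : ℂ)) = Z γ + (((2 * π : ℝ) : ℂ), 0)

/-- Complex-extended arc-chord condition on a set `S`. -/
def cArcChordOn (Z : ℂ → ℂ × ℂ) (S : Set ℂ) : Prop :=
  ∃ C > 0, ∀ γ ∈ S, ∀ β : ℝ, distTZ β ^ 2 ≤ C * ‖2 * cQden Z γ β‖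

/-- Right-hand side of the complex-extended periodic Muskat contour equation. -/
def cMuskatRHS (Z : ℂ → ℂ × ℂ) (γ : ℂ) : ℂ × ℂ :=
  ∫ β in (-π)..π,
    (Complex.sin ((Z γ).1 - (Z (γ - (β : ℂ))).1) / cQden Z γ β)
      • (deriv Z γ - deriv Z (γ - (β : ℂ)))

/-- `Z` is a Cauchy–Kowalewski-type solution of the Muskat problem on `[-T,T]`
with values analytic and periodic on the closed strip of half-width `r`,
continuous in time, satisfying the arc-chord condition and the initial
condition `Z(·,0) = Z₀`. -/
def IsCKSol (r T : ℝ) (Z₀ : ℂ → ℂ × ℂ) (Z : ℝ → ℂ → ℂ × ℂ) : Prop :=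
  (∀ t ∈ Icc (-T) T, ∀ w ∈ stripC r, DifferentiableAt ℂ (Z t) w) ∧
  (∀ t ∈ Icc (-T) T, cPerCurve (Z t)) ∧
  (∀ γ ∈ stripC r, ContinuousOn (fun t => Z t γ) (Icc (-T) T)) ∧
  (∀ γ ∈ stripC r, Z 0 γ = Z₀ γ) ∧
  (∀ t ∈ Icc (-T) T, ∀ γ ∈ stripC r,
    HasDerivWithinAt (fun s => Z s γ) (cMuskatRHS (Z t) γ) (Icc (-T) T) t) ∧
  (∀ t ∈ Icc (-T) T, cArcChordOn (Z t) (stripC r))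

section
/-! ### Landau-type estimate for holomorphic functions omitting the integers -/

lemma mk_cauchy {E : Type*} [NormedAddCommGroup E] [NormedSpace ℂ E] {f : ℂ → E} {c : ℂ} {R C : ℝ}
    (hR : 0 < R) (hf : DifferentiableOn ℂ f (Metric.ball c R))
    (hC : ∀ z ∈ Metric.ball c R, ‖f z‖ ≤ C) : ‖deriv f c‖ ≤ 2 * C / R := by
  refine Complex.norm_deriv_le_div_of_mapsTo_ball hf ?_ hR
  intro z hz
  rw [mem_closedBall_iff_norm]
  calc ‖f z - f c‖ ≤ ‖f z‖ + ‖f c‖ := norm_sub_le _ _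
    _ ≤ C + C := add_le_add (hC z hz) (hC c (Metric.mem_ball_self hR))
    _ = 2 * C := by ring

lemma mk_exists_log {f : ℂ → ℂ} {c : ℂ} {R : ℝ} (hR : 0 < R)
    (hf : DifferentiableOn ℂ f (Metric.ball c R)) (h0 : ∀ z ∈ Metric.ball c R, f z ≠ 0) :
    ∃ g : ℂ → ℂ, DifferentiableOn ℂ g (Metric.ball c R) ∧
      ∀ z ∈ Metric.ball c R, Complex.exp (g z) = f z := by
  have hd : DifferentiableOn ℂ (fun z => deriv f z / f z) (Metric.ball c R) :=
    (hf.deriv Metric.isOpen_ball).div hf h0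
  obtain ⟨g, hg0, hg⟩ := hd.isExactOn_ball.with_val_at c (Complex.log (f c))
  refine ⟨g, fun z hz => (hg z hz).differentiableAt.differentiableWithinAt, ?_⟩
  have hder : ∀ z ∈ Metric.ball c R,
      HasDerivAt (fun z => f z * Complex.exp (- g z)) 0 z := by
    intro z hz
    have h1 := (hf.differentiableAt (Metric.isOpen_ball.mem_nhds hz)).hasDerivAt
    have h2 := ((hg z hz).neg).cexp
    have h3 := h1.mul h2
    have h4 := h0 z hz
    have h5 : f z * (deriv f z / f z) = deriv f z := mul_div_cancel₀ _ h4
    refine h3.congr_deriv ?_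
    linear_combination (-Complex.exp (-g z)) * h5
  have hconst : ∀ z ∈ Metric.ball c R, f z * Complex.exp (- g z) = 1 := by
    intro z hz
    have hc : c ∈ Metric.ball c R := Metric.mem_ball_self hR
    have := (convex_ball c R).norm_image_sub_le_of_norm_hasDerivWithin_le (C := 0)
      (f := fun z => f z * Complex.exp (- g z)) (f' := fun _ => 0)
      (fun x hx => (hder x hx).hasDerivWithinAt) (by simp) hc hz
    have h2 : f z * Complex.exp (- g z) = f c * Complex.exp (- g c) := by
      have h3 : ‖f z * Complex.exp (- g z) - f c * Complex.exp (- g c)‖ ≤ 0 := by simpa using this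
      exact sub_eq_zero.mp (norm_le_zero_iff.mp h3)
    rw [h2, hg0, Complex.exp_neg, Complex.exp_log (h0 c hc)]
    exact mul_inv_cancel₀ (h0 c hc)
  intro z hz
  have := hconst z hz
  rw [Complex.exp_neg] at this
  have he := Complex.exp_ne_zero (g z)
  field_simp at this
  exact this.symm

lemma mk_exists_arccos {u : ℂ → ℂ} {c : ℂ} {R : ℝ} (hR : 0 < R)
    (hf : DifferentiableOn ℂ u (Metric.ball c R))
    (h0 : ∀ z ∈ Metric.ball c R, ∀ n : ℤ, u z ≠ n) :
    ∃ g : ℂ → ℂ, DifferentiableOn ℂ g (Metric.ball c R) ∧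
      ∀ z ∈ Metric.ball c R, Complex.cos (g z) = u z := by
  obtain ⟨l, hl, hle⟩ := mk_exists_log (f := fun z => u z ^ 2 - 1) hR (by fun_prop) (by
    intro z hz h
    have h' : (u z - 1) * (u z + 1) = 0 := by linear_combination h
    rcases mul_eq_zero.mp h' with h1 | h1
    · exact h0 z hz 1 (by push_cast; linear_combination h1)
    · exact h0 z hz (-1) (by push_cast; linear_combination h1))
  set w : ℂ → ℂ := fun z => Complex.exp (l z / 2) with hw
  have hw2 : ∀ z ∈ Metric.ball c R, w z ^ 2 = u z ^ 2 - 1 := by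
    intro z hz
    rw [← hle z hz, hw, ← Complex.exp_nat_mul]
    congr 1; push_cast; ring
  have hwd : DifferentiableOn ℂ w (Metric.ball c R) := by
    simp only [hw]; fun_prop
  obtain ⟨m, hm, hme⟩ := mk_exists_log (f := fun z => u z + w z) hR (hf.add hwd) (by
    intro z hz h
    have := hw2 z hz
    have h2 : (u z + w z) * (u z - w z) = 1 := by linear_combination -this
    rw [h] at h2
    simp at h2)
  refine ⟨fun z => -Complex.I * m z, by fun_prop, ?_⟩
  intro z hz
  have h2 : (u z + w z) * (u z - w z) = 1 := by linear_combination -(hw2 z hz)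
  have h3 := hme z hz
  have h4 : Complex.exp (-(m z)) = u z - w z := by
    rw [Complex.exp_neg, h3]
    exact inv_eq_of_mul_eq_one_right h2
  rw [Complex.cos]
  have e1 : -Complex.I * m z * Complex.I = m z := by
    linear_combination (-(m z)) * Complex.I_mul_I
  have e2 : -(-Complex.I * m z) * Complex.I = -m z := by
    linear_combination ((m z)) * Complex.I_mul_I
  rw [e1, e2, h3, h4]; ring

lemma mk_net (w : ℂ) : ∃ ζ ∈ Metric.ball w 6, ∃ n : ℤ, Complex.cos ζ = n := by
  -- vertical part
  have key : ∀ b : ℝ, 0 ≤ b → ∃ y ∈ Icc b (b + 2), ∃ n : ℤ, Real.cosh y = n := by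
    intro b hb
    have h1 : Real.cosh b + 1 ≤ Real.cosh (b + 2) := by
      rw [Real.cosh_add]
      have h2 : 3 ≤ Real.cosh 2 := by
        rw [Real.cosh_eq]
        have ha : (2.7 : ℝ) ^ 2 ≤ Real.exp 2 := by
          have h := Real.exp_one_gt_d9
          have : Real.exp 2 = Real.exp 1 ^ 2 := by rw [← Real.exp_nat_mul]; norm_num
          rw [this]; gcongr; linarith
        have := Real.exp_pos (-2)
        linarith
      have h3 : 0 ≤ Real.sinh b * Real.sinh 2 :=
        mul_nonneg (Real.sinh_nonneg_iff.mpr hb) (Real.sinh_nonneg_iff.mpr (by norm_num))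
      nlinarith [Real.one_le_cosh b]
    have hc : ContinuousOn Real.cosh (Icc b (b + 2)) := Real.continuous_cosh.continuousOn
    have := intermediate_value_Icc (by linarith : b ≤ b + 2) hc
    obtain ⟨y, hy, hye⟩ := this (show ((⌈Real.cosh b⌉ : ℤ) : ℝ) ∈ _ from
      ⟨Int.le_ceil _, by linarith [Int.ceil_lt_add_one (Real.cosh b)]⟩)
    exact ⟨y, hy, _, hye⟩
  have key2 : ∀ b : ℝ, ∃ y : ℝ, |y - b| ≤ 2 ∧ ∃ n : ℤ, Real.cosh y = n := by
    intro b
    rcases le_total 0 b with hb | hb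
    · obtain ⟨y, hy, n, hn⟩ := key b hb
      exact ⟨y, by rw [abs_le]; constructor <;> linarith [hy.1, hy.2], n, hn⟩
    · obtain ⟨y, hy, n, hn⟩ := key (-b) (by linarith)
      exact ⟨-y, by rw [abs_le]; constructor <;> linarith [hy.1, hy.2], n, by rw [Real.cosh_neg, hn]⟩
  obtain ⟨y, hy, n, hn⟩ := key2 w.im
  set k : ℤ := round (w.re / (2 * π)) with hk
  have hpi := Real.pi_pos
  have hkr : |w.re - k * (2 * π)| ≤ π := by
    have := abs_sub_round (w.re / (2 * π))
    rw [← hk] at this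
    have h2 : w.re - k * (2 * π) = (w.re / (2 * π) - k) * (2 * π) := by field_simp
    rw [h2, abs_mul, abs_of_pos (by positivity : 0 < 2 * π)]
    nlinarith
  refine ⟨(y : ℂ) * Complex.I + k * (2 * π), ?_, n, ?_⟩
  · rw [mem_ball_iff_norm]
    refine lt_of_le_of_lt (Complex.norm_le_abs_re_add_abs_im _) ?_
    have e1 : ((y : ℂ) * Complex.I + k * (2 * π) - w).re = -(w.re - k * (2 * π)) := by simp
    have e2 : ((y : ℂ) * Complex.I + k * (2 * π) - w).im = y - w.im := by simp
    rw [e1, e2, abs_neg]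
    linarith [Real.pi_lt_d2]
  · rw [Complex.cos_add_int_mul_two_pi, Complex.cos_mul_I, ← Complex.ofReal_cosh, hn]
    simp

lemma mk_bloch {h : ℂ → ℂ} {c : ℂ} {R : ℝ} (hR : 0 < R)
    (hf : DifferentiableOn ℂ h (Metric.ball c R))
    (hom : ∀ w : ℂ, ∃ ζ ∈ Metric.ball w 6, ζ ∉ h '' Metric.ball c R) :
    ‖deriv h c‖ ≤ 1152 / R := by
  have hdc : ContinuousOn (deriv h) (Metric.ball c R) :=
    (hf.deriv Metric.isOpen_ball).continuousOn
  have hsub : Metric.closedBall c (R / 2) ⊆ Metric.ball c R :=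
    Metric.closedBall_subset_ball (by linarith)
  obtain ⟨z0, hz0, hmax⟩ := (isCompact_closedBall c (R / 2)).exists_isMaxOn
    ⟨c, Metric.mem_closedBall_self (by linarith)⟩
    (f := fun z => (R / 2 - dist z c) * ‖deriv h z‖)
    (by
      apply ContinuousOn.mul
      · fun_prop
      · exact (hdc.mono hsub).norm)
  set M := (R / 2 - dist z0 c) * ‖deriv h z0‖ with hM
  have hMc : R / 2 * ‖deriv h c‖ ≤ M := by
    have := hmax (Metric.mem_closedBall_self (by linarith : 0 ≤ R / 2))
    simpa using this
  suffices hM240 : M ≤ 576 by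
    rw [le_div_iff₀ hR]; nlinarith
  by_contra hcon
  push Not at hcon
  have hd0 : dist z0 c ≤ R / 2 := hz0
  have he0 : 0 < R / 2 - dist z0 c := by
    rcases hd0.lt_or_eq with h1 | h1
    · linarith
    · exfalso; rw [hM, h1] at hcon; norm_num at hcon
  set e := (R / 2 - dist z0 c) / 2 with he
  have hepos : 0 < e := by positivity
  set a := ‖deriv h z0‖ with ha
  have hMa : M = 2 * e * a := by rw [hM, he]; ring
  have hapos : 0 < a := by
    by_contra hc
    have : a = 0 := le_antisymm (not_lt.mp hc) (norm_nonneg _)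
    rw [hMa, this] at hcon; norm_num at hcon
  have hballsub : Metric.ball z0 e ⊆ Metric.ball c R := by
    intro z hz
    have h1 := dist_triangle z z0 c
    rw [Metric.mem_ball] at hz ⊢
    linarith
  have hder : ∀ z ∈ Metric.ball z0 e, ‖deriv h z‖ ≤ 2 * a := by
    intro z hz
    rw [Metric.mem_ball] at hz
    have h1 := dist_triangle z z0 c
    have h2 : e ≤ R / 2 - dist z c := by linarith
    have h3 := hmax (show z ∈ Metric.closedBall c (R / 2) by rw [Metric.mem_closedBall]; linarith)
    have h4 : (R / 2 - dist z c) * ‖deriv h z‖ ≤ 2 * e * a := by rw [← hMa]; exact h3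
    have h5 : e * ‖deriv h z‖ ≤ 2 * e * a := by
      refine le_trans ?_ h4
      gcongr
    nlinarith
  have hder2 : ∀ z ∈ Metric.ball z0 (e / 17), ‖deriv (deriv h) z‖ ≤ 17 / 4 * a / e := by
    intro z hz
    rw [Metric.mem_ball] at hz
    have hs : Metric.ball z (16 * e / 17) ⊆ Metric.ball z0 e := by
      intro y hy
      rw [Metric.mem_ball] at hy ⊢
      linarith [dist_triangle y z z0]
    have := mk_cauchy (f := deriv h) (c := z) (R := 16 * e / 17) (C := 2 * a) (by positivity)
      ((hf.deriv Metric.isOpen_ball).mono (hs.trans hballsub)) (fun y hy => hder y (hs hy))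
    refine this.trans (le_of_eq ?_)
    field_simp; norm_num
  have hlin : ∀ z ∈ Metric.ball z0 (e / 17), ‖deriv h z - deriv h z0‖ ≤ a / 4 := by
    intro z hz
    have hz' := hz
    rw [mem_ball_iff_norm] at hz'
    have := (convex_ball z0 (e / 17)).norm_image_sub_le_of_norm_deriv_le (f := deriv h)
      (C := 17 / 4 * a / e)
      (fun x hx => (hf.deriv Metric.isOpen_ball).differentiableAt
        (Metric.isOpen_ball.mem_nhds (hballsub (Metric.ball_subset_ball (by linarith) hx)))) hder2
      (Metric.mem_ball_self (by positivity)) hz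
    refine this.trans ?_
    calc 17 / 4 * a / e * ‖z - z0‖ ≤ 17 / 4 * a / e * (e / 17) := by gcongr
      _ = a / 4 := by field_simp
  have hlow : ∀ z ∈ Metric.ball z0 (e / 17), 3 / 4 * a * ‖z - z0‖ ≤ ‖h z - h z0‖ := by
    intro z hz
    have hdiff : ∀ x ∈ Metric.ball z0 (e / 17), HasDerivAt (fun y => h y - deriv h z0 * y)
        (deriv h x - deriv h z0) x := by
      intro x hx
      have h1 := (hf.differentiableAt (Metric.isOpen_ball.mem_nhds
        (hballsub (Metric.ball_subset_ball (by linarith : e / 17 ≤ e) hx)))).hasDerivAt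
      have h2 := (hasDerivAt_id x).const_mul (deriv h z0)
      have h3 := h1.sub h2
      simp only [mul_one] at h3
      exact h3
    have := (convex_ball z0 (e / 17)).norm_image_sub_le_of_norm_hasDerivWithin_le (C := a / 4)
      (fun x hx => (hdiff x hx).hasDerivWithinAt) hlin (Metric.mem_ball_self (by positivity)) hz
    have h3 : ‖deriv h z0 * (z - z0)‖ ≤ ‖h z - h z0‖ +
        ‖h z - deriv h z0 * z - (h z0 - deriv h z0 * z0)‖ := by
      have : deriv h z0 * (z - z0) =
        (h z - h z0) - (h z - deriv h z0 * z - (h z0 - deriv h z0 * z0)) := by ring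
      rw [this]; exact norm_sub_le _ _
    rw [norm_mul, ← ha] at h3
    linarith
  -- image contains a ball
  set ρ := e / 18 with hρ
  have hρpos : 0 < ρ := by positivity
  have hcb : Metric.closedBall z0 ρ ⊆ Metric.ball z0 (e / 17) :=
    Metric.closedBall_subset_ball (by rw [hρ]; linarith)
  have hcb2 : Metric.closedBall z0 ρ ⊆ Metric.ball c R :=
    hcb.trans ((Metric.ball_subset_ball (by linarith)).trans hballsub)
  have himg := DiffContOnCl.ball_subset_image_closedBall (f := h) (z₀ := z0) (r := ρ)
    (ε := 3 / 4 * a * ρ)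
    (DifferentiableOn.diffContOnCl (by
      rw [closure_ball _ hρpos.ne']; exact hf.mono hcb2)) hρpos
    (by
      intro z hz
      have h1 := hlow z (hcb (Metric.sphere_subset_closedBall hz))
      rw [mem_sphere_iff_norm] at hz
      rwa [hz] at h1)
    (by
      have : ∀ᶠ z in nhdsWithin z0 {z0}ᶜ, h z ≠ h z0 := by
        have hb : Metric.ball z0 (e / 17) ∈ nhdsWithin z0 {z0}ᶜ :=
          nhdsWithin_le_nhds (Metric.ball_mem_nhds _ (by positivity))
        filter_upwards [hb, self_mem_nhdsWithin] with z hz hzne heq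
        have h1 := hlow z hz
        rw [heq, sub_self, norm_zero] at h1
        have h2 : 0 < ‖z - z0‖ := norm_pos_iff.mpr (sub_ne_zero.mpr hzne)
        have : 0 < 3 / 4 * a * ‖z - z0‖ := by positivity
        linarith
      exact this.frequently.filter_mono nhdsWithin_le_nhds)
  obtain ⟨ζ, hζ, hζn⟩ := hom (h z0)
  apply hζn
  refine image_mono hcb2 (himg ?_)
  refine Metric.ball_subset_ball ?_ hζ
  rw [hMa] at hcon
  rw [hρ]
  nlinarith

/-- Landau-type inequality for functions omitting the integers. -/
lemma mk_landau {u : ℂ → ℂ} {c : ℂ} {R : ℝ} (hR : 0 < R)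
    (hf : DifferentiableOn ℂ u (Metric.ball c R))
    (h0 : ∀ z ∈ Metric.ball c R, ∀ n : ℤ, u z ≠ n) :
    ‖deriv u c‖ ≤ 1152 / R * (1 + ‖u c‖) := by
  obtain ⟨g, hg, hgu⟩ := mk_exists_arccos hR hf h0
  have hb := mk_bloch hR hg (by
    intro w
    obtain ⟨ζ, hζ, n, hn⟩ := mk_net w
    refine ⟨ζ, hζ, ?_⟩
    rintro ⟨z, hz, rfl⟩
    exact h0 z hz n (by rw [← hgu z hz, hn]))
  have hc : c ∈ Metric.ball c R := Metric.mem_ball_self hR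
  have h1 : HasDerivAt (fun z => Complex.cos (g z)) (-Complex.sin (g c) * deriv g c) c :=
    (hg.differentiableAt (Metric.isOpen_ball.mem_nhds hc)).hasDerivAt.ccos
  have h2 : u =ᶠ[nhds c] fun z => Complex.cos (g z) := by
    filter_upwards [Metric.isOpen_ball.mem_nhds hc] with z hz
    exact (hgu z hz).symm
  have h3 : deriv u c = -Complex.sin (g c) * deriv g c := by
    rw [h2.deriv_eq, h1.deriv]
  have h4 : ‖Complex.sin (g c)‖ ≤ 1 + ‖u c‖ := by
    have h5 : Complex.sin (g c) ^ 2 = 1 - u c ^ 2 := by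
      rw [Complex.sin_sq, hgu c hc]
    have h6 : ‖Complex.sin (g c)‖ ^ 2 ≤ (1 + ‖u c‖) ^ 2 := by
      rw [← norm_pow, h5]
      refine (norm_sub_le _ _).trans ?_
      rw [norm_one, norm_pow]
      nlinarith [norm_nonneg (u c)]
    exact (sq_le_sq₀ (norm_nonneg _) (by positivity)).mp h6
  rw [h3, norm_mul, norm_neg, mul_comm]
  gcongr

end

section
/-! ### Generic tools -/

lemma mk_contDeriv {E : Type*} [NormedAddCommGroup E] [NormedSpace ℂ E] [CompleteSpace E]
    {f : ℝ → ℂ → E} {s : Set ℝ} {γ : ℂ} {ρ C : ℝ} (hρ : 0 < ρ)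
    (hol : ∀ x ∈ s, DifferentiableOn ℂ (f x) (Metric.ball γ ρ))
    (hb : ∀ x ∈ s, ∀ w ∈ Metric.ball γ ρ, ‖f x w‖ ≤ C)
    (hc : ∀ w ∈ Metric.ball γ ρ, ContinuousOn (fun x => f x w) s) :
    ContinuousOn (fun x => deriv (f x) γ) s := by
  have hsub : Metric.closedBall γ (ρ / 2) ⊆ Metric.ball γ ρ :=
    Metric.closedBall_subset_ball (by linarith)
  have hsph : ∀ θ, circleMap γ (ρ / 2) θ ∈ Metric.ball γ ρ := fun θ =>
    hsub (circleMap_mem_closedBall γ (by linarith) θ)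
  have key : ContinuousOn (fun x => Complex.cderiv (ρ / 2) (f x) γ) s := by
    intro x₀ hx₀
    unfold Complex.cderiv
    apply ContinuousWithinAt.const_smul
    unfold circleIntegral
    refine intervalIntegral.continuousWithinAt_of_dominated_interval
      (bound := fun _ => |ρ / 2| * (((ρ / 2) ^ 2)⁻¹ * C)) ?_ ?_ ?_ ?_
    · filter_upwards [self_mem_nhdsWithin] with x hx
      apply Continuous.aestronglyMeasurable
      have h1 : Continuous (fun θ => f x (circleMap γ (ρ / 2) θ)) :=
        (hol x hx).continuousOn.comp_continuous (continuous_circleMap γ (ρ / 2)) hsph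
      have h2 : Continuous (fun θ => ((circleMap γ (ρ / 2) θ - γ) ^ 2)⁻¹) := by
        apply Continuous.inv₀
        · fun_prop
        · intro θ
          simp [circleMap, hρ.ne']
      simp only [deriv_circleMap]
      exact (by fun_prop : Continuous fun θ => circleMap 0 (ρ / 2) θ * Complex.I).smul (h2.smul h1)
    · filter_upwards [self_mem_nhdsWithin] with x hx
      refine Filter.Eventually.of_forall (fun θ _ => ?_)
      rw [norm_smul, norm_smul, deriv_circleMap]
      have h3 := hb x hx _ (hsph θ)
      have e1 : ‖circleMap 0 (ρ / 2) θ * Complex.I‖ = |ρ / 2| := by simp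
      have e2 : ‖((circleMap γ (ρ / 2) θ - γ) ^ 2)⁻¹‖ = ((ρ / 2) ^ 2)⁻¹ := by
        rw [circleMap_sub_center, norm_inv, norm_pow, norm_circleMap_zero, sq_abs]
      rw [e1, e2]
      gcongr
    · simp
    · refine Filter.Eventually.of_forall (fun θ _ => ?_)
      apply ContinuousWithinAt.const_smul
      apply ContinuousWithinAt.const_smul
      exact hc _ (hsph θ) x₀ hx₀
  refine key.congr (fun x hx => ?_)
  exact (Complex.cderiv_eq_deriv Metric.isOpen_ball (hol x hx) (by linarith) hsub).symm

lemma mk_paramInt {E : Type*} [NormedAddCommGroup E] [NormedSpace ℂ E] [CompleteSpace E]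
    {f : ℝ → ℂ → E} {a b : ℝ} {γ : ℂ} {ρ C : ℝ} (hρ : 0 < ρ)
    (hol : ∀ x ∈ uIcc a b, DifferentiableOn ℂ (f x) (Metric.ball γ ρ))
    (hb : ∀ x ∈ uIcc a b, ∀ w ∈ Metric.ball γ ρ, ‖f x w‖ ≤ C)
    (hc : ∀ w ∈ Metric.ball γ ρ, ContinuousOn (fun x => f x w) (uIcc a b)) :
    HasDerivAt (fun w => ∫ x in a..b, f x w) (∫ x in a..b, deriv (f x) γ) γ := by
  have hγ : γ ∈ Metric.ball γ ρ := Metric.mem_ball_self hρ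
  have hio : uIoc a b ⊆ uIcc a b := uIoc_subset_uIcc
  have hcd := mk_contDeriv hρ hol hb hc
  refine (intervalIntegral.hasDerivAt_integral_of_dominated_loc_of_deriv_le (𝕜 := ℂ)
    (F := fun w x => f x w) (F' := fun w x => deriv (f x) w) (s := Metric.ball γ (ρ / 2))
    (bound := fun _ => 2 * C / (ρ / 2)) (Metric.ball_mem_nhds _ (by linarith)) ?_ ?_ ?_ ?_ ?_ ?_).2
  · filter_upwards [Metric.ball_mem_nhds γ hρ] with w hw
    exact ((hc w hw).mono hio).aestronglyMeasurable measurableSet_uIoc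
  · exact (hc γ hγ).intervalIntegrable
  · exact (hcd.mono hio).aestronglyMeasurable measurableSet_uIoc
  · refine Filter.Eventually.of_forall (fun x hx w hw => ?_)
    have hs : Metric.ball w (ρ / 2) ⊆ Metric.ball γ ρ := by
      apply Metric.ball_subset_ball'
      rw [Metric.mem_ball] at hw; linarith
    exact mk_cauchy (by linarith) ((hol x (hio hx)).mono hs) (fun z hz => hb x (hio hx) z (hs hz))
  · simp
  · refine Filter.Eventually.of_forall (fun x hx w hw => ?_)
    exact ((hol x (hio hx)).differentiableAt (Metric.isOpen_ball.mem_nhds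
      (Metric.ball_subset_ball (by linarith) hw))).hasDerivAt

/-- weighted time integral estimates -/
lemma mk_int32_pos {E : Type*} [NormedAddCommGroup E] [NormedSpace ℝ E] {G : ℝ → E}
    {A c K t : ℝ} (hK : 0 < K) (hA : 0 ≤ A) (ht : 0 ≤ t) (hct : 0 < c - K * t)
    (hG : ∀ τ ∈ Icc 0 t, ‖G τ‖ ≤ A / ((c - K * τ) * √(c - K * τ))) :
    ‖∫ τ in (0:ℝ)..t, G τ‖ ≤ 2 * A / K * (1 / √(c - K * t)) := by
  have hpos : ∀ τ ∈ Icc 0 t, 0 < c - K * τ := by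
    intro τ hτ; nlinarith [hτ.2]
  have hder : ∀ τ ∈ uIcc 0 t, HasDerivAt (fun τ => 2 * A / K * (1 / √(c - K * τ)))
      (A / ((c - K * τ) * √(c - K * τ))) τ := by
    intro τ hτ
    rw [uIcc_of_le ht] at hτ
    have h0 := hpos τ hτ
    have h1 : HasDerivAt (fun τ => c - K * τ) (-K) τ := by
      simpa using ((hasDerivAt_id τ).const_mul K).const_sub c
    have h2 := (h1.sqrt h0.ne').inv (Real.sqrt_pos.mpr h0).ne'
    have h3 := h2.const_mul (2 * A / K)
    simp only [one_div]
    refine h3.congr_deriv ?_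
    rw [Real.sq_sqrt h0.le]
    have := (Real.sqrt_pos.mpr h0).ne'
    field_simp
  have hcont : ContinuousOn (fun τ => A / ((c - K * τ) * √(c - K * τ))) (uIcc 0 t) := by
    rw [uIcc_of_le ht]
    apply ContinuousOn.div
    · fun_prop
    · fun_prop
    · intro τ hτ
      have h0 := hpos τ hτ
      have := (Real.sqrt_pos.mpr h0)
      positivity
  have hintg := hcont.intervalIntegrable (μ := volume)
  have := intervalIntegral.norm_integral_le_of_norm_le (f := G) (μ := volume) ht
    (Filter.Eventually.of_forall (fun τ hτ => hG τ ⟨hτ.1.le, hτ.2⟩)) hintg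
  refine this.trans ?_
  rw [intervalIntegral.integral_eq_sub_of_hasDerivAt hder hintg]
  have : 0 ≤ 2 * A / K * (1 / √(c - K * 0)) := by positivity
  linarith

lemma mk_int32 {E : Type*} [NormedAddCommGroup E] [NormedSpace ℝ E] {G : ℝ → E}
    {A c K t : ℝ} (hK : 0 < K) (hA : 0 ≤ A) (hct : 0 < c - K * |t|)
    (hG : ∀ τ, |τ| ≤ |t| → ‖G τ‖ ≤ A / ((c - K * |τ|) * √(c - K * |τ|))) :
    ‖∫ τ in (0:ℝ)..t, G τ‖ ≤ 2 * A / K * (1 / √(c - K * |t|)) := by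
  rcases le_total 0 t with ht | ht
  · rw [abs_of_nonneg ht] at hct hG ⊢
    refine mk_int32_pos hK hA ht hct (fun τ hτ => ?_)
    have := hG τ (by rw [abs_of_nonneg hτ.1]; exact hτ.2)
    rwa [abs_of_nonneg hτ.1] at this
  · rw [abs_of_nonpos ht] at hct hG ⊢
    have := mk_int32_pos (G := fun τ => G (-τ)) hK hA (by linarith : 0 ≤ -t) hct (fun τ hτ => ?_)
    · rw [intervalIntegral.integral_comp_neg, neg_neg, neg_zero,
        intervalIntegral.integral_symm, norm_neg] at this
      exact this
    · have := hG (-τ) (by rw [abs_neg, abs_of_nonneg hτ.1]; exact hτ.2)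
      rwa [abs_neg, abs_of_nonneg hτ.1] at this

/-- the weaker singularity integrates to something bounded -/
lemma mk_int12 {E : Type*} [NormedAddCommGroup E] [NormedSpace ℝ E] {G : ℝ → E}
    {A c K t : ℝ} (hK : 0 < K) (hA : 0 ≤ A) (hc1 : c ≤ 1) (hct : 0 < c - K * |t|)
    (hG : ∀ τ, |τ| ≤ |t| → ‖G τ‖ ≤ A / √(c - K * |τ|)) :
    ‖∫ τ in (0:ℝ)..t, G τ‖ ≤ 2 * A / K := by
  have main : ∀ (G : ℝ → E) (t : ℝ), 0 ≤ t → 0 < c - K * t →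
      (∀ τ ∈ Icc 0 t, ‖G τ‖ ≤ A / √(c - K * τ)) → ‖∫ τ in (0:ℝ)..t, G τ‖ ≤ 2 * A / K := by
    intro G t ht hct hG
    have hpos : ∀ τ ∈ Icc 0 t, 0 < c - K * τ := by
      intro τ hτ; nlinarith [hτ.2]
    have hder : ∀ τ ∈ uIcc 0 t, HasDerivAt (fun τ => -(2 * A / K) * √(c - K * τ))
        (A / √(c - K * τ)) τ := by
      intro τ hτ
      rw [uIcc_of_le ht] at hτ
      have h0 := hpos τ hτ
      have h1 : HasDerivAt (fun τ => c - K * τ) (-K) τ := by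
        simpa using ((hasDerivAt_id τ).const_mul K).const_sub c
      have h2 := (h1.sqrt h0.ne')
      have h3 := h2.const_mul (-(2 * A / K))
      refine h3.congr_deriv ?_
      have := (Real.sqrt_pos.mpr h0).ne'
      field_simp
    have hcont : ContinuousOn (fun τ => A / √(c - K * τ)) (uIcc 0 t) := by
      rw [uIcc_of_le ht]
      apply ContinuousOn.div
      · fun_prop
      · fun_prop
      · intro τ hτ
        exact (Real.sqrt_pos.mpr (hpos τ hτ)).ne'
    have hintg := hcont.intervalIntegrable (μ := volume)
    have := intervalIntegral.norm_integral_le_of_norm_le (f := G) (μ := volume) ht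
      (Filter.Eventually.of_forall (fun τ hτ => hG τ ⟨hτ.1.le, hτ.2⟩)) hintg
    refine this.trans ?_
    rw [intervalIntegral.integral_eq_sub_of_hasDerivAt hder hintg]
    have h1 : 0 ≤ 2 * A / K := by positivity
    have h2 : √(c - K * 0) ≤ 1 := by
      exact Real.sqrt_le_iff.mpr ⟨by norm_num, by linarith⟩
    have h3 := Real.sqrt_nonneg (c - K * t)
    nlinarith
  rcases le_total 0 t with ht | ht
  · rw [abs_of_nonneg ht] at hct hG
    refine main G t ht hct (fun τ hτ => ?_)
    have := hG τ (by rw [abs_of_nonneg hτ.1]; exact hτ.2)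
    rwa [abs_of_nonneg hτ.1] at this
  · rw [abs_of_nonpos ht] at hct hG
    have := main (fun τ => G (-τ)) (-t) (by linarith : 0 ≤ -t) hct (fun τ hτ => ?_)
    · rw [intervalIntegral.integral_comp_neg, neg_neg, neg_zero,
        intervalIntegral.integral_symm, norm_neg] at this
      exact this
    · have := hG (-τ) (by rw [abs_neg, abs_of_nonneg hτ.1]; exact hτ.2)
      rwa [abs_neg, abs_of_nonneg hτ.1] at this

/-- lower bound for a derivative -/
lemma mk_deriv_ge {𝕜 E : Type*} [NontriviallyNormedField 𝕜] [NormedAddCommGroup E] [NormedSpace 𝕜 E]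
    {g : 𝕜 → E} {g' : E} {a : 𝕜} {c : ℝ} (hg : HasDerivAt g g' a)
    (hlow : ∀ᶠ x in nhds a, c * ‖x - a‖ ≤ ‖g x - g a‖) : c ≤ ‖g'‖ := by
  have h1 := (hasDerivAt_iff_tendsto_slope.mp hg).norm
  refine ge_of_tendsto h1 ?_
  filter_upwards [nhdsWithin_le_nhds hlow, self_mem_nhdsWithin] with x hx hxa
  have hpos : 0 < ‖x - a‖ := norm_pos_iff.mpr (sub_ne_zero.mpr hxa)
  rw [slope_def_module, norm_smul, norm_inv, inv_mul_eq_div, le_div_iff₀ hpos]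
  exact hx

end

section
/-! ### Trigonometric estimates -/

lemma mk_sin_sub_le {x : ℂ} (hx : ‖x‖ ≤ 1) : ‖Complex.sin x - x‖ ≤ ‖x‖ ^ 2 := by
  have h1 := Complex.norm_exp_sub_one_sub_id_le (x := x * Complex.I) (by simpa using hx)
  have h2 := Complex.norm_exp_sub_one_sub_id_le (x := -x * Complex.I) (by simpa using hx)
  have e : Complex.sin x - x = ((Complex.exp (-x * Complex.I) - 1 - -x * Complex.I) -
      (Complex.exp (x * Complex.I) - 1 - x * Complex.I)) * (Complex.I / 2) := by
    rw [Complex.sin]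
    linear_combination (-x) * Complex.I_mul_I
  rw [e, norm_mul]
  have h3 := norm_sub_le (Complex.exp (-x * Complex.I) - 1 - -x * Complex.I)
    (Complex.exp (x * Complex.I) - 1 - x * Complex.I)
  have e2 : ‖Complex.I / 2‖ = 1 / 2 := by simp
  simp only [norm_mul, norm_neg, Complex.norm_I, mul_one] at h1 h2
  rw [e2]; linarith

lemma mk_cos_sub_le {x : ℂ} (hx : ‖x‖ ≤ 1) : ‖Complex.cos x - 1‖ ≤ ‖x‖ ^ 2 := by
  have h1 := Complex.norm_exp_sub_one_sub_id_le (x := x * Complex.I) (by simpa using hx)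
  have h2 := Complex.norm_exp_sub_one_sub_id_le (x := -x * Complex.I) (by simpa using hx)
  have e : Complex.cos x - 1 = ((Complex.exp (-x * Complex.I) - 1 - -x * Complex.I) +
      (Complex.exp (x * Complex.I) - 1 - x * Complex.I)) / 2 := by
    rw [Complex.cos]
    ring
  rw [e, norm_div]
  have h3 := norm_add_le (Complex.exp (-x * Complex.I) - 1 - -x * Complex.I)
    (Complex.exp (x * Complex.I) - 1 - x * Complex.I)
  have e2 : ‖(2:ℂ)‖ = 2 := by simp
  simp only [norm_mul, norm_neg, Complex.norm_I, mul_one] at h1 h2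
  rw [e2]; linarith

lemma mk_sin_le {x : ℂ} (hx : ‖x‖ ≤ 1) : ‖Complex.sin x‖ ≤ 2 * ‖x‖ := by
  have h1 := mk_sin_sub_le hx
  have h2 : ‖Complex.sin x‖ ≤ ‖Complex.sin x - x‖ + ‖x‖ := by
    simpa using norm_add_le (Complex.sin x - x) x
  nlinarith [norm_nonneg x]

lemma mk_sin_ge {x : ℂ} (hx : ‖x‖ ≤ 1 / 2) : ‖x‖ / 2 ≤ ‖Complex.sin x‖ := by
  have h1 := mk_sin_sub_le (x := x) (by linarith)
  have h2 : ‖x‖ ≤ ‖Complex.sin x - x‖ + ‖Complex.sin x‖ := by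
    have := norm_sub_le (Complex.sin x) (Complex.sin x - x)
    simp only [sub_sub_cancel] at this; linarith
  nlinarith [norm_nonneg x]

lemma mk_cos_le (x : ℂ) : ‖Complex.cos x‖ ≤ 1 + ‖Complex.sin x‖ := by
  have h6 : ‖Complex.cos x‖ ^ 2 ≤ (1 + ‖Complex.sin x‖) ^ 2 := by
    rw [← norm_pow, Complex.cos_sq']
    refine (norm_sub_le _ _).trans ?_
    rw [norm_one, norm_pow]
    nlinarith [norm_nonneg (Complex.sin x)]
  exact (sq_le_sq₀ (norm_nonneg _) (by positivity)).mp h6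

lemma mk_sin_le_exp (x : ℂ) : ‖Complex.sin x‖ ≤ ‖x‖ * Real.exp ‖x‖ := by
  have hcos : ∀ y ∈ Metric.closedBall (0:ℂ) ‖x‖, ‖deriv Complex.sin y‖ ≤ Real.exp ‖x‖ := by
    intro y hy
    rw [Complex.deriv_sin, Complex.cos]
    have hy' : ‖y‖ ≤ ‖x‖ := by simpa using hy
    have h1 : ‖Complex.exp (y * Complex.I)‖ ≤ Real.exp ‖x‖ := by
      refine (Complex.norm_exp_le_exp_norm _).trans ?_
      simpa using hy'
    have h2 : ‖Complex.exp (-y * Complex.I)‖ ≤ Real.exp ‖x‖ := by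
      refine (Complex.norm_exp_le_exp_norm _).trans ?_
      simpa using hy'
    rw [norm_div]
    have e2 : ‖(2:ℂ)‖ = 2 := by simp
    rw [e2]
    have := norm_add_le (Complex.exp (y * Complex.I)) (Complex.exp (-y * Complex.I))
    linarith
  have := (convex_closedBall (0:ℂ) ‖x‖).norm_image_sub_le_of_norm_deriv_le (f := Complex.sin)
    (fun y _ => Complex.differentiable_sin y) hcos (show (0:ℂ) ∈ _ by simp) (show x ∈ _ by simp)
  simp only [Complex.sin_zero, sub_zero] at this
  linarith

lemma mk_sin_perturb {x y : ℂ} (h1 : ‖y - x‖ ≤ 1 / 12) (h2 : ‖y - x‖ ≤ ‖Complex.sin x‖ / 8) :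
    ‖Complex.sin x‖ / 2 ≤ ‖Complex.sin y‖ := by
  set θ := y - x with hθ
  have hs := mk_sin_le (x := θ) (by linarith)
  have hc := mk_cos_sub_le (x := θ) (by linarith)
  have hcx := mk_cos_le x
  have e : Complex.sin x = Complex.sin y - Complex.sin x * (Complex.cos θ - 1)
      - Complex.cos x * Complex.sin θ := by
    have : y = x + θ := by rw [hθ]; ring
    rw [this, Complex.sin_add]; ring
  have h3 : ‖Complex.sin x‖ ≤ ‖Complex.sin y‖ + ‖Complex.sin x‖ * ‖Complex.cos θ - 1‖
      + ‖Complex.cos x‖ * ‖Complex.sin θ‖ := by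
    rw [← norm_mul, ← norm_mul]
    conv_lhs => rw [e]
    exact (norm_sub_le _ _).trans (add_le_add (norm_sub_le _ _) le_rfl)
  have h4 : ‖Complex.cos x‖ * ‖Complex.sin θ‖ ≤ (1 + ‖Complex.sin x‖) * (2 * ‖θ‖) := by gcongr
  have h5 : ‖Complex.sin x‖ * ‖Complex.cos θ - 1‖ ≤ ‖Complex.sin x‖ * (1 / 144) := by
    gcongr
    refine hc.trans ?_
    nlinarith [norm_nonneg θ]
  have h6 : ‖Complex.sin x‖ * ‖θ‖ ≤ ‖Complex.sin x‖ * (1 / 12) := by gcongr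
  nlinarith [norm_nonneg (Complex.sin x)]

lemma mk_cot_le {x : ℂ} {s : ℝ} (hs : 0 < s) (h : s ≤ ‖Complex.sin x‖) :
    ‖Complex.cot x‖ ≤ 1 + 1 / s := by
  have h0 : 0 < ‖Complex.sin x‖ := hs.trans_le h
  rw [Complex.cot, norm_div]
  calc ‖Complex.cos x‖ / ‖Complex.sin x‖ ≤ (1 + ‖Complex.sin x‖) / ‖Complex.sin x‖ := by
        gcongr; exact mk_cos_le x
    _ = 1 + 1 / ‖Complex.sin x‖ := by field_simp; ring
    _ ≤ 1 + 1 / s := by gcongr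

lemma mk_cot_lip {x y : ℂ} {s : ℝ} (hs : 0 < s) (hx : s ≤ ‖Complex.sin x‖)
    (hy : s ≤ ‖Complex.sin y‖) (hxy : ‖x - y‖ ≤ 1) :
    ‖Complex.cot x - Complex.cot y‖ ≤ 2 / s ^ 2 * ‖x - y‖ := by
  have h0 : Complex.sin x ≠ 0 := norm_pos_iff.mp (hs.trans_le hx)
  have h1 : Complex.sin y ≠ 0 := norm_pos_iff.mp (hs.trans_le hy)
  have e : Complex.cot x - Complex.cot y =
      Complex.sin (y - x) / (Complex.sin x * Complex.sin y) := by
    rw [Complex.cot, Complex.cot, Complex.sin_sub]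
    field_simp
  rw [e, norm_div, norm_mul]
  have h2 := mk_sin_le (x := y - x) (by rw [norm_sub_rev]; exact hxy)
  rw [norm_sub_rev y x] at h2
  calc ‖Complex.sin (y - x)‖ / (‖Complex.sin x‖ * ‖Complex.sin y‖) ≤ 2 * ‖x - y‖ / (s * s) := by
        gcongr
    _ = _ := by ring

/-- The linear functional `a ↦ a₁ + σ a₂`. -/
def mkL (σ : ℂ) (a : ℂ × ℂ) : ℂ := a.1 + σ * a.2

lemma mkL_sub (σ : ℂ) (a b : ℂ × ℂ) : mkL σ (a - b) = mkL σ a - mkL σ b := by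
  simp [mkL]; ring

lemma mk_norm_sigma {σ : ℂ} (hσ : σ ^ 2 = -1) : ‖σ‖ = 1 := by
  have : ‖σ‖ ^ 2 = 1 := by rw [← norm_pow, hσ]; simp
  exact by nlinarith [norm_nonneg σ]

lemma mkL_norm {σ : ℂ} (hσ : σ ^ 2 = -1) (a : ℂ × ℂ) : ‖mkL σ a‖ ≤ 2 * ‖a‖ := by
  have := mk_norm_sigma hσ
  calc ‖mkL σ a‖ ≤ ‖a.1‖ + ‖σ * a.2‖ := norm_add_le _ _
    _ = ‖a.1‖ + ‖a.2‖ := by rw [norm_mul, this, one_mul]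
    _ ≤ ‖a‖ + ‖a‖ := add_le_add (norm_fst_le a) (norm_snd_le a)
    _ = _ := by ring

lemma mk_trig (a b σ : ℂ) (hσ : σ ^ 2 = -1) : Complex.cosh b - Complex.cos a =
    2 * (Complex.sin ((a + σ * b) / 2) * Complex.sin ((a + (-σ) * b) / 2)) := by
  have h1 : Complex.cosh b = Complex.cos (σ * b) := by
    have : σ = Complex.I ∨ σ = -Complex.I := by
      have : (σ - Complex.I) * (σ + Complex.I) = 0 := by
        linear_combination hσ - Complex.I_mul_I
      rcases mul_eq_zero.mp this with h | h
      · left; linear_combination h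
      · right; linear_combination h
    rcases this with h | h
    · rw [h, mul_comm, Complex.cos_mul_I]
    · rw [h, neg_mul, Complex.cos_neg, mul_comm, Complex.cos_mul_I]
  have e1 : a = (a + σ * b) / 2 + (a + (-σ) * b) / 2 := by ring
  have e2 : σ * b = (a + σ * b) / 2 - (a + (-σ) * b) / 2 := by ring
  rw [h1, show Complex.cos a = Complex.cos ((a + σ * b) / 2 + (a + (-σ) * b) / 2) by rw [← e1],
    show Complex.cos (σ * b) = Complex.cos ((a + σ * b) / 2 - (a + (-σ) * b) / 2) by rw [← e2]]
  generalize (a + σ * b) / 2 = x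
  generalize (a + (-σ) * b) / 2 = y
  rw [Complex.cos_sub, Complex.cos_add]; ring

lemma mk_kappa (a b σ : ℂ) (hσ : σ ^ 2 = -1)
    (h1 : Complex.sin ((a + σ * b) / 2) ≠ 0) (h2 : Complex.sin ((a + (-σ) * b) / 2) ≠ 0) :
    Complex.sin a / (Complex.cosh b - Complex.cos a) =
    (1 / 2 : ℂ) * (Complex.cot ((a + σ * b) / 2) + Complex.cot ((a + (-σ) * b) / 2)) := by
  rw [mk_trig a b σ hσ]
  have e1 : a = (a + σ * b) / 2 + (a + (-σ) * b) / 2 := by ring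
  conv_lhs => rw [show Complex.sin a = Complex.sin ((a + σ * b) / 2 + (a + (-σ) * b) / 2) by rw [← e1]]
  generalize (a + σ * b) / 2 = x at *
  generalize (a + (-σ) * b) / 2 = y at *
  rw [Complex.sin_add, Complex.cot, Complex.cot]
  field_simp
  ring

end

section
/-! ### Strips, periodicity -/

/-- Open horizontal strip. -/
def mkS (ρ : ℝ) : Set ℂ := {w : ℂ | |w.im| < ρ}

lemma mkS_open (ρ : ℝ) : IsOpen (mkS ρ) :=
  isOpen_lt (continuous_abs.comp Complex.continuous_im) continuous_const

lemma mkS_convex (ρ : ℝ) : Convex ℝ (mkS ρ) := by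
  have : mkS ρ = Complex.imLm ⁻¹' (Ioo (-ρ) ρ) := by
    ext w; simp [mkS, abs_lt]
  rw [this]
  exact (convex_Ioo _ _).linear_preimage _

lemma mkS_mono {a b : ℝ} (h : a ≤ b) : mkS a ⊆ mkS b := fun _ hw => lt_of_lt_of_le hw h

lemma mkS_ball {ρ d : ℝ} {γ : ℂ} (h : |γ.im| + d ≤ ρ) : Metric.ball γ d ⊆ mkS ρ := by
  intro w hw
  rw [mem_ball_iff_norm] at hw
  have h1 := Complex.abs_im_le_norm (w - γ)
  rw [Complex.sub_im] at h1
  have h2 := abs_add_le (w.im - γ.im) γ.im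
  rw [sub_add_cancel] at h2
  change |w.im| < ρ
  linarith

lemma mkS_per {ρ : ℝ} {γ : ℂ} (h : γ ∈ mkS ρ) (x : ℝ) : γ + (x : ℂ) ∈ mkS ρ := by
  simpa [mkS] using h

lemma mk_per_int {Z : ℂ → ℂ × ℂ} (hZ : cPerCurve Z) (γ : ℂ) (n : ℤ) :
    Z (γ + ((2 * π * n : ℝ) : ℂ)) = Z γ + (((2 * π * n : ℝ) : ℂ), 0) := by
  have hp : Function.Periodic (fun γ => Z γ - (γ, 0)) ((2 * π : ℝ) : ℂ) := by
    intro γ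
    simp only
    rw [hZ γ]
    ext <;> simp
  have h := hp.int_mul n γ
  have e : γ + ((2 * π * n : ℝ) : ℂ) = γ + n * ((2 * π : ℝ) : ℂ) := by push_cast; ring
  rw [e]
  have h2 := eq_add_of_sub_eq h
  rw [h2]
  ext
  · simp; ring
  · simp

lemma mk_deriv_per {Z : ℂ → ℂ × ℂ} (hZ : cPerCurve Z) (γ : ℂ) (n : ℤ) :
    deriv Z (γ + ((2 * π * n : ℝ) : ℂ)) = deriv Z γ := by
  rw [← deriv_comp_add_const]
  have : (fun x => Z (x + ((2 * π * n : ℝ) : ℂ))) = fun x => Z x + (((2 * π * n : ℝ) : ℂ), 0) := by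
    funext x; exact mk_per_int hZ x n
  rw [this, deriv_add_const]

lemma mk_reduce (x : ℝ) : ∃ n : ℤ, |x + 2 * π * n| ≤ π := by
  refine ⟨-round (x / (2 * π)), ?_⟩
  have hpi := Real.pi_pos
  have := abs_sub_round (x / (2 * π))
  have h2 : x + 2 * π * ((-round (x / (2 * π)) : ℤ) : ℝ) =
      (x / (2 * π) - round (x / (2 * π))) * (2 * π) := by push_cast; field_simp; ring
  rw [h2, abs_mul, abs_of_pos (by positivity : 0 < 2 * π)]
  nlinarith

lemma mk_bdd_strip {E : Type*} [NormedAddCommGroup E] {g : ℂ → E} {ρ : ℝ}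
    (hg : ContinuousOn g (stripC ρ))
    (hp : ∀ γ : ℂ, ∀ n : ℤ, g (γ + ((2 * π * n : ℝ) : ℂ)) = g γ) :
    ∃ C, 0 ≤ C ∧ ∀ γ ∈ stripC ρ, ‖g γ‖ ≤ C := by
  have hcomp : IsCompact (Icc (-π) π ×ℂ Icc (-ρ) ρ) := isCompact_Icc.reProdIm isCompact_Icc
  have hsub : (Icc (-π) π ×ℂ Icc (-ρ) ρ) ⊆ stripC ρ := by
    intro w hw
    exact abs_le.mpr hw.2
  obtain ⟨C, hC⟩ := hcomp.exists_bound_of_continuousOn (hg.mono hsub)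
  refine ⟨max C 0, le_max_right _ _, fun γ hγ => ?_⟩
  obtain ⟨n, hn⟩ := mk_reduce γ.re
  rw [← hp γ n]
  refine (hC _ ?_).trans (le_max_left _ _)
  constructor
  · simp only [mem_preimage, Complex.add_re, Complex.ofReal_re]
    exact abs_le.mp hn
  · simp only [mem_preimage, Complex.add_im, Complex.ofReal_im, add_zero]
    exact abs_le.mp hγ

lemma mkL_hasDerivAt {Z : ℂ → ℂ × ℂ} {Z' : ℂ × ℂ} {w : ℂ} (σ : ℂ) (h : HasDerivAt Z Z' w) :
    HasDerivAt (fun w => mkL σ (Z w)) (mkL σ Z') w := by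
  have := ((ContinuousLinearMap.fst ℂ ℂ ℂ + σ • ContinuousLinearMap.snd ℂ ℂ ℂ).hasFDerivAt
    (x := Z w)).comp_hasDerivAt w h
  simpa [mkL, Function.comp_def] using this

lemma mkL_continuous (σ : ℂ) : Continuous (mkL σ) := by
  unfold mkL; fun_prop

lemma mkL_differentiableOn {Z : ℂ → ℂ × ℂ} {U : Set ℂ} (σ : ℂ) (h : DifferentiableOn ℂ Z U) :
    DifferentiableOn ℂ (fun w => mkL σ (Z w)) U := by
  unfold mkL; fun_prop

/-- The (split) arc-chord condition on an open strip. -/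
def MkAC (ρ c : ℝ) (Z : ℂ → ℂ × ℂ) : Prop :=
  ∀ σ : ℂ, σ ^ 2 = -1 → ∀ γ ∈ mkS ρ, ∀ s ∈ mkS ρ, |γ.re - s.re| ≤ 4 →
    c * ‖γ - s‖ ≤ ‖Complex.sin (mkL σ (Z γ - Z s) / 2)‖

/-- Base curve data. -/
structure MkBase (h c M : ℝ) (Zs : ℂ → ℂ × ℂ) : Prop where
  hpos : 0 < h
  h1 : 4 * h ≤ 1
  cpos : 0 < c
  Mnn : 0 ≤ M
  hol : DifferentiableOn ℂ Zs (mkS (4 * h))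
  per : cPerCurve Zs
  dbd : ∀ γ ∈ mkS (4 * h), ‖deriv Zs γ‖ ≤ M
  ac : MkAC (4 * h) c Zs

lemma mk_cQden (Z : ℂ → ℂ × ℂ) (γ : ℂ) (β : ℝ) {σ : ℂ} (hσ : σ ^ 2 = -1) :
    cQden Z γ β = 2 * (Complex.sin (mkL σ (Z γ - Z (γ - β)) / 2) *
      Complex.sin (mkL (-σ) (Z γ - Z (γ - β)) / 2)) := by
  unfold cQden
  rw [mk_trig _ _ σ hσ]
  rfl

lemma mk_distTZ_ge {β : ℝ} (hβ : |β| ≤ 4) : |β| / 2 ≤ distTZ β := by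
  unfold distTZ
  generalize round (β / (2 * π)) = n
  have hpi := Real.pi_gt_three
  rcases eq_or_ne n 0 with rfl | hn
  · simp
  · have h1 : (1:ℝ) ≤ |(n:ℝ)| := by exact_mod_cast Int.one_le_abs hn
    have h2 : |2 * π * (n:ℝ)| = 2 * π * |(n:ℝ)| := by
      rw [abs_mul, abs_of_pos (by positivity)]
    have h3 := abs_sub_abs_le_abs_sub (2 * π * (n:ℝ)) β
    rw [abs_sub_comm, h2] at h3
    nlinarith

lemma mk_lip_strip {Z : ℂ → ℂ × ℂ} {ρ M : ℝ} (hol : DifferentiableOn ℂ Z (mkS ρ))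
    (hM : ∀ γ ∈ mkS ρ, ‖deriv Z γ‖ ≤ M) {a b : ℂ} (ha : a ∈ mkS ρ) (hb : b ∈ mkS ρ) :
    ‖Z a - Z b‖ ≤ M * ‖a - b‖ :=
  (mkS_convex ρ).norm_image_sub_le_of_norm_deriv_le
    (fun x hx => hol.differentiableAt ((mkS_open ρ).mem_nhds hx)) hM hb ha

/-- arc-chord on the real line, for each factor -/
lemma mk_real_ac {Z : ℂ → ℂ × ℂ} {ρ M r : ℝ} (hρ : 0 < ρ) (hr : 0 ≤ r) (hM0 : 0 ≤ M)
    (hol : DifferentiableOn ℂ Z (mkS ρ))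
    (hM : ∀ γ ∈ mkS ρ, ‖deriv Z γ‖ ≤ M) (hac : cArcChordOn Z (stripC r)) :
    ∃ c > 0, ∀ σ : ℂ, σ ^ 2 = -1 → ∀ x y : ℝ, |x - y| ≤ 4 →
      c * |x - y| ≤ ‖Complex.sin (mkL σ (Z x - Z y) / 2)‖ := by
  obtain ⟨C, hC, hac⟩ := hac
  set D := 16 * C * ((M + 1) * Real.exp (4 * M)) with hD
  have hDpos : 0 < D := by positivity
  refine ⟨1 / D, by positivity, fun σ hσ x y hxy => ?_⟩
  have h1 := hac x (by simpa [stripC] using hr) (x - y)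
  rw [mk_cQden Z x (x - y) hσ] at h1
  have e : (x : ℂ) - ((x - y : ℝ) : ℂ) = y := by push_cast; ring
  rw [e] at h1
  set A := Complex.sin (mkL σ (Z x - Z y) / 2)
  have hx : (x : ℂ) ∈ mkS ρ := by simpa [mkS] using hρ
  have hy : (y : ℂ) ∈ mkS ρ := by simpa [mkS] using hρ
  have h2 : ‖mkL (-σ) (Z x - Z y) / 2‖ ≤ M * |x - y| := by
    rw [norm_div]
    have := mkL_norm (σ := -σ) (by simpa using hσ) (Z x - Z y)
    have h3 := mk_lip_strip hol hM hx hy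
    have h4 : ‖(x:ℂ) - y‖ = |x - y| := by
      rw [← Complex.ofReal_sub, Complex.norm_real, Real.norm_eq_abs]
    rw [h4] at h3
    have e2 : ‖(2:ℂ)‖ = 2 := by simp
    rw [e2]; linarith
  have h5 : ‖Complex.sin (mkL (-σ) (Z x - Z y) / 2)‖ ≤ (M + 1) * Real.exp (4 * M) * |x - y| := by
    refine (mk_sin_le_exp _).trans ?_
    have h6 : M * |x - y| ≤ 4 * M := by nlinarith
    calc ‖mkL (-σ) (Z x - Z y) / 2‖ * Real.exp ‖mkL (-σ) (Z x - Z y) / 2‖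
        ≤ (M * |x - y|) * Real.exp (4 * M) := by
          gcongr; exact h2.trans h6
      _ ≤ ((M + 1) * |x - y|) * Real.exp (4 * M) := by gcongr; linarith
      _ = _ := by ring
  have h7 := mk_distTZ_ge hxy
  have h8 : (|x - y| / 2) ^ 2 ≤ distTZ (x - y) ^ 2 := by gcongr
  have h9 : C * ‖2 * (2 * (A * Complex.sin (mkL (-σ) (Z x - Z y) / 2)))‖ ≤
      C * (4 * (‖A‖ * ((M + 1) * Real.exp (4 * M) * |x - y|))) := by
    rw [norm_mul, norm_mul, norm_mul]
    have e2 : ‖(2:ℂ)‖ = 2 := by simp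
    rw [e2]
    have : ‖A‖ * ‖Complex.sin (mkL (-σ) (Z x - Z y) / 2)‖ ≤
      ‖A‖ * ((M + 1) * Real.exp (4 * M) * |x - y|) := by gcongr
    exact mul_le_mul_of_nonneg_left (by linarith) hC.le
  have h10 : |x - y| ^ 2 ≤ D * ‖A‖ * |x - y| := by
    have : |x - y| ^ 2 = 4 * (|x - y| / 2) ^ 2 := by ring
    rw [this]
    calc 4 * (|x - y| / 2) ^ 2 ≤ 4 * (C * (4 * (‖A‖ * ((M + 1) * Real.exp (4 * M) * |x - y|)))) := by
          gcongr; exact h8.trans (h1.trans h9)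
      _ = _ := by rw [hD]; ring
  rw [div_mul_eq_mul_div, one_mul, div_le_iff₀ hDpos]
  rcases (abs_nonneg (x - y)).eq_or_lt with h0 | h0
  · rw [← h0]; positivity
  · nlinarith

end

section
lemma mkL_smul (σ w : ℂ) (a : ℂ × ℂ) : mkL σ (w • a) = w * mkL σ a := by
  simp [mkL]; ring

lemma mkL_zero (σ : ℂ) : mkL σ 0 = 0 := by simp [mkL]

lemma mk_two : ‖(2:ℂ)‖ = 2 := by simp

lemma mk_im_norm (γ : ℂ) : ‖γ - (γ.re : ℂ)‖ = |γ.im| := by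
  have : γ - (γ.re : ℂ) = γ.im * Complex.I := by
    apply Complex.ext <;> simp
  rw [this]; simp

lemma mkS_sub_strip (r : ℝ) : mkS r ⊆ stripC r := by
  intro w hw
  have h : |w.im| < r := hw
  exact h.le

lemma strip_sub_mkS {a b : ℝ} (h : a < b) : stripC a ⊆ mkS b := by
  intro w hw
  have h1 : |w.im| ≤ a := hw
  exact lt_of_le_of_lt h1 h

lemma mk_base {Z : ℂ → ℂ × ℂ} {r H : ℝ} (hr : 0 < r) (hH : 0 < H)
    (hol : ∀ w ∈ stripC r, DifferentiableAt ℂ Z w) (hper : cPerCurve Z)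
    (hac : cArcChordOn Z (stripC r)) :
    ∃ h c M, h ≤ H ∧ MkBase h c M Z := by
  have holr : DifferentiableOn ℂ Z (mkS r) := fun w hw =>
    (hol w (mkS_sub_strip r hw)).differentiableWithinAt
  have hdr : DifferentiableOn ℂ (deriv Z) (mkS r) := holr.deriv (mkS_open r)
  obtain ⟨M, hM0, hM⟩ := mk_bdd_strip (g := deriv Z) (ρ := r / 2)
    (hdr.continuousOn.mono (strip_sub_mkS (by linarith)))
    (mk_deriv_per hper)
  have hMS : ∀ γ ∈ mkS (r / 4), ‖deriv Z γ‖ ≤ M := fun γ hγ =>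
    hM γ (mkS_sub_strip _ (mkS_mono (by linarith) hγ))
  set M2 := 2 * M / (r / 4) with hM2
  have hM20 : 0 ≤ M2 := by positivity
  have hdd : ∀ γ ∈ mkS (r / 4), ‖deriv (deriv Z) γ‖ ≤ M2 := by
    intro γ hγ
    have hb : Metric.ball γ (r / 4) ⊆ mkS (r / 2) :=
      mkS_ball (by have : |γ.im| < r / 4 := hγ; linarith)
    exact mk_cauchy (by linarith) (hdr.mono (hb.trans (mkS_mono (by linarith))))
      (fun z hz => hM z (mkS_sub_strip _ (hb hz)))
  have hlip2 : ∀ a ∈ mkS (r / 4), ∀ b ∈ mkS (r / 4), ‖deriv Z a - deriv Z b‖ ≤ M2 * ‖a - b‖ :=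
    fun a ha b hb => mk_lip_strip (hdr.mono (mkS_mono (by linarith))) hdd ha hb
  have hol4 : DifferentiableOn ℂ Z (mkS (r / 4)) := holr.mono (mkS_mono (by linarith))
  obtain ⟨c, hc, hreal⟩ := mk_real_ac (by linarith : 0 < r / 4) hr.le hM0 hol4 hMS hac
  have hZ' : ∀ σ : ℂ, σ ^ 2 = -1 → ∀ x : ℝ, 2 * c ≤ ‖mkL σ (deriv Z x)‖ := by
    intro σ hσ x
    have hx : (x:ℂ) ∈ mkS (r / 4) := by simpa [mkS] using hr
    have h1 : HasDerivAt Z (deriv Z x) (x:ℂ) :=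
      (hol4.differentiableAt ((mkS_open _).mem_nhds hx)).hasDerivAt
    have h2 := (mkL_hasDerivAt σ (h1.const_sub (Z x))).div_const 2
    have h3 := h2.csin.comp_ofReal
    have h4 := mk_deriv_ge (c := c) h3 (by
      filter_upwards [Metric.ball_mem_nhds x (by norm_num : (0:ℝ) < 4)] with y hy
      rw [mem_ball_iff_norm, Real.norm_eq_abs] at hy
      have h5 := hreal σ hσ x y (by rw [abs_sub_comm]; exact hy.le)
      rw [abs_sub_comm] at h5
      simpa [mkL_zero] using h5)
    rw [sub_self, mkL_zero, zero_div, Complex.cos_zero, one_mul, norm_div, mk_two] at h4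
    have e : mkL σ (-deriv Z (x:ℂ)) = - mkL σ (deriv Z x) := by simp [mkL]; ring
    rw [e, norm_neg] at h4
    linarith
  set η := min (1 / (2 * (M + 1))) (c / (4 * (M2 + 1))) with hη
  have hη0 : 0 < η := by positivity
  have hη1 : M * η ≤ 1 / 2 := by
    have h1 : η ≤ 1 / (2 * (M + 1)) := min_le_left _ _
    rw [le_div_iff₀ (by positivity)] at h1
    nlinarith
  have hη2 : M2 * (2 * η) ≤ c / 2 := by
    have h1 : η ≤ c / (4 * (M2 + 1)) := min_le_right _ _
    rw [le_div_iff₀ (by positivity)] at h1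
    nlinarith
  set h := min H (min (1 / 4) (min (r / 16) (min (η / 16) (min (1 / (96 * (M + 1)))
    (c * η / (128 * (M + 1))))))) with hh
  have hh0 : 0 < h := by positivity
  have l1 : h ≤ H := min_le_left _ _
  have l2 : h ≤ 1 / 4 := (min_le_right _ _).trans (min_le_left _ _)
  have l3 : h ≤ r / 16 := (min_le_right _ _).trans ((min_le_right _ _).trans (min_le_left _ _))
  have l4 : h ≤ η / 16 := (min_le_right _ _).trans ((min_le_right _ _).trans
    ((min_le_right _ _).trans (min_le_left _ _)))
  have l5 : h ≤ 1 / (96 * (M + 1)) := (min_le_right _ _).trans ((min_le_right _ _).trans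
    ((min_le_right _ _).trans ((min_le_right _ _).trans (min_le_left _ _))))
  have l6 : h ≤ c * η / (128 * (M + 1)) := (min_le_right _ _).trans ((min_le_right _ _).trans
    ((min_le_right _ _).trans ((min_le_right _ _).trans (min_le_right _ _))))
  have l5' : 8 * M * h ≤ 1 / 12 := by
    rw [le_div_iff₀ (by positivity)] at l5; nlinarith
  have l6' : 8 * M * h ≤ c * η / 16 := by
    rw [le_div_iff₀ (by positivity)] at l6; nlinarith
  have hsub : mkS (4 * h) ⊆ mkS (r / 4) := mkS_mono (by linarith)
  refine ⟨h, c / 4, M, l1, hh0, by linarith, by positivity, hM0, hol4.mono hsub, hper,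
    fun γ hγ => hMS γ (hsub hγ), ?_⟩
  intro σ hσ γ hγ s hs hre
  have hγ' : |γ.im| < 4 * h := hγ
  have hs' : |s.im| < 4 * h := hs
  have hlipL : ‖mkL σ (Z γ - Z s) / 2‖ ≤ M * ‖γ - s‖ := by
    rw [norm_div, mk_two]
    have h1 := mkL_norm hσ (Z γ - Z s)
    have h2 := mk_lip_strip hol4 hMS (hsub hγ) (hsub hs)
    linarith
  rcases le_total ‖γ - s‖ η with hw | hw
  · -- close points
    set x : ℝ := γ.re with hx
    have hxm : (x:ℂ) ∈ mkS (r / 4) := by simpa [mkS] using hr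
    set B := mkS (4 * h) ∩ Metric.closedBall (x:ℂ) (‖γ - s‖ + 4 * h) with hB
    have hBc : Convex ℝ B := (mkS_convex _).inter (convex_closedBall _ _)
    have hγB : γ ∈ B := by
      refine ⟨hγ, ?_⟩
      rw [mem_closedBall_iff_norm, mk_im_norm]
      linarith [norm_nonneg (γ - s)]
    have hsB : s ∈ B := by
      refine ⟨hs, ?_⟩
      rw [mem_closedBall_iff_norm]
      have : s - (x:ℂ) = -(γ - s) + (γ - (x:ℂ)) := by ring
      rw [this]
      refine (norm_add_le _ _).trans ?_
      rw [norm_neg, mk_im_norm]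
      linarith
    have hder : ∀ z ∈ B, HasDerivWithinAt (fun z => Z z - z • deriv Z x)
        (deriv Z z - deriv Z x) B z := by
      intro z hz
      have h1 : HasDerivAt Z (deriv Z z) z :=
        (hol4.differentiableAt ((mkS_open _).mem_nhds (hsub hz.1))).hasDerivAt
      have h2 := h1.sub ((hasDerivAt_id z).smul_const (deriv Z x))
      rw [one_smul] at h2
      exact h2.hasDerivWithinAt
    have hbd : ∀ z ∈ B, ‖deriv Z z - deriv Z x‖ ≤ M2 * (‖γ - s‖ + 4 * h) := by
      intro z hz
      refine (hlip2 z (hsub hz.1) x hxm).trans ?_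
      have := hz.2
      rw [mem_closedBall_iff_norm] at this
      gcongr
    have h3 := hBc.norm_image_sub_le_of_norm_hasDerivWithin_le hder hbd hsB hγB
    have e1 : (Z γ - γ • deriv Z x - (Z s - s • deriv Z x)) =
        (Z γ - Z s) - (γ - s) • deriv Z x := by rw [sub_smul]; abel
    simp only [e1] at h3
    have h4 := mkL_norm hσ ((Z γ - Z s) - (γ - s) • deriv Z x)
    rw [mkL_sub, mkL_smul] at h4
    have h5 : ‖γ - s‖ * (2 * c) ≤ ‖(γ - s) * mkL σ (deriv Z x)‖ := by
      rw [norm_mul]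
      have := hZ' σ hσ x
      gcongr
    have h6 : ‖(γ - s) * mkL σ (deriv Z x)‖ ≤ ‖mkL σ (Z γ - Z s)‖ +
        ‖mkL σ (Z γ - Z s) - (γ - s) * mkL σ (deriv Z x)‖ := by
      have := norm_sub_le (mkL σ (Z γ - Z s)) (mkL σ (Z γ - Z s) - (γ - s) * mkL σ (deriv Z x))
      simpa using this
    have h7 : M2 * (‖γ - s‖ + 4 * h) ≤ c / 2 := by
      refine le_trans ?_ hη2
      gcongr; linarith
    have h8 : M2 * (‖γ - s‖ + 4 * h) * ‖γ - s‖ ≤ c / 2 * ‖γ - s‖ := by gcongr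
    have h9 : c * ‖γ - s‖ ≤ ‖mkL σ (Z γ - Z s)‖ := by linarith
    have h10 := mk_sin_ge (x := mkL σ (Z γ - Z s) / 2) (by
      refine hlipL.trans (le_trans ?_ hη1); gcongr)
    rw [norm_div, mk_two] at h10
    linarith
  · -- separated points
    have hxm : (γ.re:ℂ) ∈ mkS (r / 4) := by simpa [mkS] using hr
    have hym : (s.re:ℂ) ∈ mkS (r / 4) := by simpa [mkS] using hr
    have h1 := hreal σ hσ γ.re s.re hre
    have hβ : ‖γ - s‖ ≤ |γ.re - s.re| + 8 * h := by
      have h2 := Complex.norm_le_abs_re_add_abs_im (γ - s)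
      rw [Complex.sub_re, Complex.sub_im] at h2
      have h3 := abs_sub γ.im s.im
      linarith
    have hθ : ‖mkL σ (Z γ - Z s) / 2 - mkL σ (Z γ.re - Z s.re) / 2‖ ≤ 8 * M * h := by
      have e : mkL σ (Z γ - Z s) / 2 - mkL σ (Z γ.re - Z s.re) / 2 =
          mkL σ ((Z γ - Z γ.re) - (Z s - Z s.re)) / 2 := by
        simp only [mkL_sub]; ring
      rw [e, norm_div, mk_two]
      have h2 := mkL_norm hσ ((Z γ - Z γ.re) - (Z s - Z s.re))
      have h3 := norm_sub_le (Z γ - Z γ.re) (Z s - Z s.re)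
      have h4 := mk_lip_strip hol4 hMS (hsub hγ) hxm
      have h5 := mk_lip_strip hol4 hMS (hsub hs) hym
      rw [mk_im_norm] at h4 h5
      have h6 : M * |γ.im| ≤ M * (4 * h) := by gcongr
      have h7 : M * |s.im| ≤ M * (4 * h) := by gcongr
      linarith
    have hβ2 : η / 2 ≤ |γ.re - s.re| := by linarith
    have hsin : c * (η / 2) ≤ ‖Complex.sin (mkL σ (Z γ.re - Z s.re) / 2)‖ :=
      le_trans (by gcongr) h1
    have := mk_sin_perturb (hθ.trans l5') (by linarith)
    have h8 : c * ‖γ - s‖ ≤ c * (2 * |γ.re - s.re|) := by gcongr; linarith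
    linarith

/-- arc-chord is stable under small perturbations of the derivative -/
lemma mk_ac_perturb {Z W : ℂ → ℂ × ℂ} {ρ c e : ℝ} (hρ : ρ ≤ 1)
    (hZ : DifferentiableOn ℂ Z (mkS ρ)) (hW : DifferentiableOn ℂ W (mkS ρ))
    (hac : MkAC ρ c Z) (hd : ∀ γ ∈ mkS ρ, ‖deriv W γ - deriv Z γ‖ ≤ e)
    (he1 : e ≤ 1 / 72) (he2 : e ≤ c / 8) : MkAC ρ (c / 2) W := by
  intro σ hσ γ hγ s hs hre
  have h1 := hac σ hσ γ hγ s hs hre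
  have hn : ‖γ - s‖ ≤ 6 := by
    have h2 := Complex.norm_le_abs_re_add_abs_im (γ - s)
    rw [Complex.sub_re, Complex.sub_im] at h2
    have h3 := abs_sub γ.im s.im
    have h4 : |γ.im| < ρ := hγ
    have h5 : |s.im| < ρ := hs
    linarith
  have e0 : 0 ≤ e := (norm_nonneg _).trans (hd γ hγ)
  have hlip : ‖(W γ - Z γ) - (W s - Z s)‖ ≤ e * ‖γ - s‖ :=
    (mkS_convex ρ).norm_image_sub_le_of_norm_hasDerivWithin_le (f := fun x => W x - Z x)
      (f' := fun x => deriv W x - deriv Z x)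
      (fun x hx => ((hW.differentiableAt ((mkS_open ρ).mem_nhds hx)).hasDerivAt.sub
        (hZ.differentiableAt ((mkS_open ρ).mem_nhds hx)).hasDerivAt).hasDerivWithinAt) hd hs hγ
  have hθ : ‖mkL σ (W γ - W s) / 2 - mkL σ (Z γ - Z s) / 2‖ ≤ e * ‖γ - s‖ := by
    have e : mkL σ (W γ - W s) / 2 - mkL σ (Z γ - Z s) / 2 =
        mkL σ ((W γ - Z γ) - (W s - Z s)) / 2 := by
      simp only [mkL_sub]; ring
    rw [e, norm_div, mk_two]
    have := mkL_norm hσ ((W γ - Z γ) - (W s - Z s))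
    linarith
  have := mk_sin_perturb (hθ.trans (by nlinarith)) (hθ.trans (by
    have : e * ‖γ - s‖ ≤ c / 8 * ‖γ - s‖ := by gcongr
    linarith))
  linarith

lemma mk_ac_arcchord {Z : ℂ → ℂ × ℂ} {ρ c r : ℝ} (hc : 0 < c) (hr : r < ρ)
    (hper : cPerCurve Z) (hac : MkAC ρ c Z) : cArcChordOn Z (stripC r) := by
  refine ⟨1 / (4 * c ^ 2), by positivity, fun γ hγ β => ?_⟩
  have hI : Complex.I ^ 2 = -1 := Complex.I_sq
  rw [mk_cQden Z γ β hI]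
  set n := round (β / (2 * π)) with hn
  set b := β - 2 * π * n with hb
  have hbd : distTZ β = |b| := rfl
  have hb4 : |b| ≤ 4 := by
    have := abs_sub_round (β / (2 * π))
    have hpi := Real.pi_pos
    have h2 : b = (β / (2 * π) - n) * (2 * π) := by rw [hb]; field_simp
    rw [h2, abs_mul, abs_of_pos (by positivity : 0 < 2 * π)]
    nlinarith [Real.pi_lt_four]
  have hγ' : γ ∈ mkS ρ := strip_sub_mkS hr hγ
  have hsm : γ - (b:ℂ) ∈ mkS ρ := by
    have := mkS_per hγ' (-b); simpa [sub_eq_add_neg] using this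
  have key : ∀ σ : ℂ, σ ^ 2 = -1 → c * |b| ≤ ‖Complex.sin (mkL σ (Z γ - Z (γ - β)) / 2)‖ := by
    intro σ hσ
    have h1 := hac σ hσ γ hγ' (γ - (b:ℂ)) hsm (by simpa using hb4)
    have e1 : γ - (γ - (b:ℂ)) = b := by ring
    rw [e1, Complex.norm_real, Real.norm_eq_abs] at h1
    have e2 : γ - (b:ℂ) = (γ - β) + ((2 * π * n : ℝ) : ℂ) := by rw [hb]; push_cast; ring
    rw [e2, mk_per_int hper] at h1
    have e3 : mkL σ (Z γ - (Z (γ - β) + (((2 * π * n : ℝ) : ℂ), 0))) / 2 =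
        mkL σ (Z γ - Z (γ - β)) / 2 - n * π := by
      simp [mkL]; ring
    rw [e3, Complex.sin_antiperiodic.sub_int_mul_eq] at h1
    simpa using h1
  have k1 := key Complex.I hI
  have k2 := key (-Complex.I) (by simp)
  rw [hbd, norm_mul, norm_mul, norm_mul, mk_two]
  have h3 : (c * |b|) * (c * |b|) ≤ ‖Complex.sin (mkL Complex.I (Z γ - Z (γ - β)) / 2)‖ *
      ‖Complex.sin (mkL (-Complex.I) (Z γ - Z (γ - β)) / 2)‖ := by gcongr
  rw [div_mul_eq_mul_div, one_mul, le_div_iff₀ (by positivity)]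
  nlinarith

end

section
/-! ### The split kernel and contour shift -/

/-- split kernel -/
def mkG (σ : ℂ) (Z : ℂ → ℂ × ℂ) (γ s : ℂ) : ℂ × ℂ :=
  Complex.cot (mkL σ (Z γ - Z s) / 2) • (deriv Z γ - deriv Z s)

/-- kernel integrated over the horizontal line at height `y` -/
def mkI (σ : ℂ) (Z : ℂ → ℂ × ℂ) (γ : ℂ) (y : ℝ) : ℂ × ℂ :=
  ∫ x in (-π)..π, mkG σ Z γ (x + y * Complex.I)

lemma mk_cot_per (x : ℂ) (n : ℤ) : Complex.cot (x + n * (π : ℂ)) = Complex.cot x := by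
  unfold Complex.cot
  rw [Complex.sin_antiperiodic.add_int_mul_eq, Complex.cos_antiperiodic.add_int_mul_eq]
  rcases Int.units_eq_one_or (n.negOnePow) with h | h <;> rw [h] <;> simp

lemma mk_L_per (σ : ℂ) {Z : ℂ → ℂ × ℂ} (hZ : cPerCurve Z) (γ s : ℂ) (n : ℤ) :
    mkL σ (Z (γ + ((2 * π * n : ℝ) : ℂ)) - Z s) / 2 = mkL σ (Z γ - Z s) / 2 + n * (π : ℂ) := by
  rw [mk_per_int hZ]
  simp [mkL]; ring

lemma mk_L_per' (σ : ℂ) {Z : ℂ → ℂ × ℂ} (hZ : cPerCurve Z) (γ s : ℂ) (n : ℤ) :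
    mkL σ (Z γ - Z (s + ((2 * π * n : ℝ) : ℂ))) / 2 =
      mkL σ (Z γ - Z s) / 2 + ((-n : ℤ) : ℂ) * (π : ℂ) := by
  rw [mk_per_int hZ]
  simp [mkL]; ring

lemma mkG_per_left (σ : ℂ) {Z : ℂ → ℂ × ℂ} (hZ : cPerCurve Z) (γ s : ℂ) (n : ℤ) :
    mkG σ Z (γ + ((2 * π * n : ℝ) : ℂ)) s = mkG σ Z γ s := by
  unfold mkG
  rw [mk_L_per σ hZ, mk_cot_per, mk_deriv_per hZ]

lemma mkG_per_right (σ : ℂ) {Z : ℂ → ℂ × ℂ} (hZ : cPerCurve Z) (γ s : ℂ) (n : ℤ) :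
    mkG σ Z γ (s + ((2 * π * n : ℝ) : ℂ)) = mkG σ Z γ s := by
  unfold mkG
  rw [mk_L_per' σ hZ, mk_cot_per, mk_deriv_per hZ]

lemma mk_sin_per (σ : ℂ) {Z : ℂ → ℂ × ℂ} (hZ : cPerCurve Z) (γ s : ℂ) (n : ℤ) :
    ‖Complex.sin (mkL σ (Z (γ + ((2 * π * n : ℝ) : ℂ)) - Z s) / 2)‖ =
      ‖Complex.sin (mkL σ (Z γ - Z s) / 2)‖ := by
  rw [mk_L_per σ hZ, Complex.sin_antiperiodic.add_int_mul_eq]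
  rcases Int.units_eq_one_or (n.negOnePow) with h | h <;> rw [h] <;> simp

/-- the desingularised kernel -/
def mkGt (σ : ℂ) (Z : ℂ → ℂ × ℂ) (γ s : ℂ) : ℂ × ℂ :=
  -(Complex.cos (mkL σ (Z γ - Z s) / 2) /
    dslope (fun s => Complex.sin (mkL σ (Z γ - Z s) / 2)) γ s) • dslope (deriv Z) γ s

lemma mkGt_eq (σ : ℂ) (Z : ℂ → ℂ × ℂ) {γ s : ℂ} (h : s ≠ γ) : mkGt σ Z γ s = mkG σ Z γ s := by
  unfold mkGt mkG
  rw [dslope_of_ne _ h, dslope_of_ne _ h, slope_def_field, slope_def_module]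
  have h0 : s - γ ≠ 0 := sub_ne_zero.mpr h
  simp only [sub_self, mkL_zero, zero_div, Complex.sin_zero, sub_zero]
  have e : -(Complex.cos (mkL σ (Z γ - Z s) / 2) / (Complex.sin (mkL σ (Z γ - Z s) / 2) /
      (s - γ))) * (s - γ)⁻¹ = -Complex.cot (mkL σ (Z γ - Z s) / 2) := by
    unfold Complex.cot
    rw [div_div_eq_mul_div]
    field_simp
  rw [smul_smul, e, neg_smul, ← smul_neg, neg_sub]

lemma mkGt_diff {σ : ℂ} (hσ : σ ^ 2 = -1) {Z : ℂ → ℂ × ℂ} {ρ c : ℝ} (hc : 0 < c)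
    (hol : DifferentiableOn ℂ Z (mkS ρ)) (hac : MkAC ρ c Z) {γ : ℂ} (hγ : γ ∈ mkS ρ) :
    DifferentiableOn ℂ (mkGt σ Z γ) (mkS ρ ∩ {s | |γ.re - s.re| < 4}) := by
  set U := mkS ρ ∩ {s : ℂ | |γ.re - s.re| < 4} with hU
  have hUo : IsOpen U := (mkS_open ρ).inter (isOpen_lt (by fun_prop) continuous_const)
  have hγU : γ ∈ U := ⟨hγ, by simp⟩
  have hUn : U ∈ nhds γ := hUo.mem_nhds hγU
  have hZU : DifferentiableOn ℂ Z U := hol.mono inter_subset_left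
  have hdZ : DifferentiableOn ℂ (deriv Z) U := hZU.deriv hUo
  set φ := fun s => Complex.sin (mkL σ (Z γ - Z s) / 2) with hφ
  have hL : DifferentiableOn ℂ (fun s => mkL σ (Z γ - Z s) / 2) U :=
    (mkL_differentiableOn σ (hZU.const_sub (Z γ))).div_const 2
  have hφd : DifferentiableOn ℂ φ U := hL.csin
  have hφ0 : φ γ = 0 := by simp [hφ, mkL_zero]
  have hlow : ∀ s ∈ U, c * ‖s - γ‖ ≤ ‖φ s - φ γ‖ := by
    intro s hs
    rw [hφ0, sub_zero, norm_sub_rev]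
    exact hac σ hσ γ hγ s hs.1 (le_of_lt hs.2)
  have hne : ∀ s ∈ U, dslope φ γ s ≠ 0 := by
    intro s hs
    rcases eq_or_ne s γ with rfl | h
    · rw [dslope_same]
      have := mk_deriv_ge ((hφd.differentiableAt hUn).hasDerivAt)
        (Filter.eventually_of_mem hUn hlow)
      exact norm_pos_iff.mp (hc.trans_le this)
    · rw [dslope_of_ne _ h, slope_def_field]
      have h1 : 0 < ‖s - γ‖ := norm_pos_iff.mpr (sub_ne_zero.mpr h)
      have h2 := hlow s hs
      have h3 : 0 < ‖φ s - φ γ‖ := lt_of_lt_of_le (by positivity) h2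
      exact div_ne_zero (norm_pos_iff.mp h3) (norm_pos_iff.mp h1)
  have hd1 := (Complex.differentiableOn_dslope hUn).mpr hφd
  have hd2 := (Complex.differentiableOn_dslope hUn).mpr hdZ
  exact (((hL.ccos).div hd1 hne).neg).smul hd2

lemma mk_shift {σ : ℂ} (hσ : σ ^ 2 = -1) {Z : ℂ → ℂ × ℂ} {ρ c : ℝ} (hc : 0 < c)
    (hol : DifferentiableOn ℂ Z (mkS ρ)) (hper : cPerCurve Z) (hac : MkAC ρ c Z) {γ : ℂ}
    (hγ : γ ∈ mkS ρ) {y : ℝ} (hy : |y| < ρ) :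
    IntervalIntegrable (fun β : ℝ => mkG σ Z γ (γ - β)) volume (-π) π ∧
    mkI σ Z γ y = ∫ β in (-π)..π, mkG σ Z γ (γ - β) := by
  have hd := mkGt_diff hσ hc hol hac hγ
  set U := mkS ρ ∩ {s : ℂ | |γ.re - s.re| < 4} with hU
  have hpi := Real.pi_lt_d2
  have hpi0 := Real.pi_pos
  have hγ' : |γ.im| < ρ := hγ
  have hae : ∀ a : ℝ, ∀ᵐ β : ℝ ∂volume, β ≠ a := fun a => by
    simpa using (MeasureTheory.Measure.ae_ne volume a)
  have hcongr : (fun β : ℝ => mkGt σ Z γ (γ - β)) =ᵐ[volume] fun β : ℝ => mkG σ Z γ (γ - β) := by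
    filter_upwards [hae 0] with β hβ
    refine mkGt_eq σ Z ?_
    simpa using hβ
  have hmaps : MapsTo (fun β : ℝ => γ - (β:ℂ)) (uIcc (-π) π) U := by
    intro β hβ
    rw [uIcc_of_le (by linarith)] at hβ
    have : |β| ≤ π := abs_le.mpr hβ
    refine ⟨by simpa [mkS] using hγ', ?_⟩
    simp only [mem_ofPred_eq, Complex.sub_re, Complex.ofReal_re, sub_sub_cancel]
    linarith
  constructor
  · have : IntervalIntegrable (fun β : ℝ => mkGt σ Z γ (γ - β)) volume (-π) π := by
      apply ContinuousOn.intervalIntegrable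
      exact hd.continuousOn.comp (by fun_prop) hmaps
    exact this.congr_ae (ae_restrict_of_ae hcongr)
  · have hrect := Complex.integral_boundary_rect_eq_zero_of_differentiableOn (mkGt σ Z γ)
      (⟨γ.re - π, γ.im⟩ : ℂ) (⟨γ.re + π, y⟩ : ℂ) (hd.mono ?_)
    swap
    · rintro s ⟨h1, h2⟩
      simp only [mem_preimage] at h1 h2
      rw [uIcc_of_le (by linarith)] at h1
      refine ⟨?_, ?_⟩
      · have : uIcc γ.im y ⊆ Ioo (-ρ) ρ := by
          apply (ordConnected_Ioo).uIcc_subset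
          · exact abs_lt.mp hγ'
          · exact abs_lt.mp hy
        exact abs_lt.mpr (this h2)
      · simp only [mem_ofPred_eq]
        rw [abs_lt]; constructor <;> linarith [h1.1, h1.2]
    simp only at hrect
    have hside : (∫ v in γ.im..y, mkGt σ Z γ (((γ.re + π : ℝ) : ℂ) + v * Complex.I)) =
        ∫ v in γ.im..y, mkGt σ Z γ (((γ.re - π : ℝ) : ℂ) + v * Complex.I) := by
      congr 1
      funext v
      rw [mkGt_eq, mkGt_eq,
        ← mkG_per_right σ hper γ (((γ.re - π : ℝ) : ℂ) + v * Complex.I) 1]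
      · congr 1; push_cast; ring
      · intro h; have := congrArg Complex.re h; simp at this
      · intro h; have := congrArg Complex.re h; simp at this
    rw [hside, add_sub_cancel_right, sub_eq_zero] at hrect
    have hbot : (∫ x in (γ.re - π)..(γ.re + π), mkGt σ Z γ (x + γ.im * Complex.I)) =
        ∫ β in (-π)..π, mkG σ Z γ (γ - β) := by
      rw [← intervalIntegral.integral_congr_ae (hcongr.mono fun _ h _ => h)]
      have := intervalIntegral.integral_comp_sub_left (a := -π) (b := π)
        (fun x : ℝ => mkGt σ Z γ (x + γ.im * Complex.I)) γ.re
      rw [sub_neg_eq_add] at this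
      rw [← this]
      congr 1
      funext β
      congr 1
      apply Complex.ext <;> simp
    have htop : (∫ x in (γ.re - π)..(γ.re + π), mkGt σ Z γ (x + y * Complex.I)) = mkI σ Z γ y := by
      have e1 : (∫ x in (γ.re - π)..(γ.re + π), mkGt σ Z γ (x + y * Complex.I)) =
          ∫ x in (γ.re - π)..(γ.re + π), mkG σ Z γ (x + y * Complex.I) := by
        refine intervalIntegral.integral_congr_ae ?_
        filter_upwards [hae γ.re] with x hx _
        refine mkGt_eq σ Z ?_
        intro h
        have := congrArg Complex.re h
        simp at this
        exact hx this
      have hp : Function.Periodic (fun x : ℝ => mkG σ Z γ (x + y * Complex.I)) (2 * π) := by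
        intro x
        simp only
        rw [← mkG_per_right σ hper γ (x + y * Complex.I) 1]
        congr 1; push_cast; ring
      have := hp.intervalIntegral_add_eq (γ.re - π) (-π)
      rw [e1, mkI]
      convert this using 2 <;> ring
    rw [← hbot, ← htop]
    exact hrect.symm

lemma mk_rhs {Z : ℂ → ℂ × ℂ} {ρ c : ℝ} (hc : 0 < c)
    (hol : DifferentiableOn ℂ Z (mkS ρ)) (hper : cPerCurve Z) (hac : MkAC ρ c Z) {γ : ℂ}
    (hγ : γ ∈ mkS ρ) {y : ℝ} (hy : |y| < ρ) :
    cMuskatRHS Z γ = (1 / 2 : ℂ) • (mkI Complex.I Z γ y + mkI (-Complex.I) Z γ y) := by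
  have hI : Complex.I ^ 2 = -1 := Complex.I_sq
  have hI' : (-Complex.I) ^ 2 = -1 := by simp
  obtain ⟨i1, e1⟩ := mk_shift hI hc hol hper hac hγ hy
  obtain ⟨i2, e2⟩ := mk_shift hI' hc hol hper hac hγ hy
  rw [e1, e2, ← intervalIntegral.integral_add i1 i2, ← intervalIntegral.integral_smul]
  unfold cMuskatRHS
  refine intervalIntegral.integral_congr_ae ?_
  have hae : ∀ᵐ β : ℝ ∂volume, β ≠ 0 := by
    simpa using (MeasureTheory.Measure.ae_ne volume (0:ℝ))
  filter_upwards [hae] with β hβ hm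
  have hpi0 := Real.pi_pos
  have hpi := Real.pi_lt_d2
  rw [uIoc_of_le (by linarith)] at hm
  have hne : ∀ σ : ℂ, σ ^ 2 = -1 → Complex.sin (mkL σ (Z γ - Z (γ - β)) / 2) ≠ 0 := by
    intro σ hσ
    have := hac σ hσ γ hγ (γ - β) (by simpa [mkS] using hγ) (by
      simp only [Complex.sub_re, Complex.ofReal_re, sub_sub_cancel]
      rw [abs_le]; constructor <;> linarith [hm.1, hm.2])
    rw [sub_sub_cancel] at this
    refine norm_pos_iff.mp (lt_of_lt_of_le ?_ this)
    have : 0 < ‖(β:ℂ)‖ := by simpa using hβ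
    positivity
  have hk := mk_kappa ((Z γ).1 - (Z (γ - β)).1) ((Z γ).2 - (Z (γ - β)).2) Complex.I hI
    (hne _ hI) (hne _ hI')
  unfold cQden mkG
  rw [hk, ← add_smul, smul_smul]
  rfl

end

section
/-! ### The regularised nonlinearity near a base curve -/

/-- curves close to the base curve -/
structure MkCl (h ε δ : ℝ) (Zs Z : ℂ → ℂ × ℂ) : Prop where
  d3 : 3 * h ≤ δ
  d4 : δ ≤ 4 * h
  hol : DifferentiableOn ℂ Z (mkS δ)
  per : cPerCurve Z
  close : ∀ γ ∈ mkS δ, ‖Z γ - Zs γ‖ ≤ ε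

lemma MkCl.mono {h ε δ δ' : ℝ} {Zs Z : ℂ → ℂ × ℂ} (H : MkCl h ε δ Zs Z) (h3 : 3 * h ≤ δ')
    (hd : δ' ≤ δ) : MkCl h ε δ' Zs Z :=
  ⟨h3, hd.trans H.d4, H.hol.mono (mkS_mono hd), H.per, fun γ hγ => H.close γ (mkS_mono hd hγ)⟩

/-- smallness of `ε` relative to the base -/
structure MkSm (h c ε : ℝ) : Prop where
  e0 : 0 < ε
  e1 : 288 * ε ≤ h
  e2 : 32 * ε ≤ c * h

lemma mk_sm {h c : ℝ} (hh : 0 < h) (hc : 0 < c) : ∃ ε, MkSm h c ε := by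
  refine ⟨min (h / 288) (c * h / 32), by positivity, ?_, ?_⟩
  · have := min_le_left (h / 288) (c * h / 32); linarith
  · have := min_le_right (h / 288) (c * h / 32); linarith

lemma mkL_half {σ : ℂ} (hσ : σ ^ 2 = -1) (a : ℂ × ℂ) : ‖mkL σ a / 2‖ ≤ ‖a‖ := by
  rw [norm_div, mk_two]; have := mkL_norm hσ a; linarith

lemma mk_line_mem {ρ y : ℝ} (hy : |y| < ρ) (x : ℝ) : ((x:ℂ) + y * Complex.I) ∈ mkS ρ := by
  simpa [mkS] using hy

section
variable {h c M ε δ : ℝ} {Zs Z W : ℂ → ℂ × ℂ}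

lemma mk_cl_sin (B : MkBase h c M Zs) (E : MkSm h c ε) (H : MkCl h ε δ Zs Z) {σ : ℂ}
    (hσ : σ ^ 2 = -1) {γ s : ℂ} (hγ : γ ∈ mkS δ) (hs : s ∈ mkS δ) (him : h ≤ |γ.im - s.im|) :
    c * h / 2 ≤ ‖Complex.sin (mkL σ (Z γ - Z s) / 2)‖ := by
  have hh := B.hpos
  have hc := B.cpos
  obtain ⟨n, hn⟩ := mk_reduce (γ.re - s.re)
  have hpi := Real.pi_lt_d2
  have h1 := B.ac σ hσ (γ + ((2 * π * n : ℝ) : ℂ)) (mkS_per (mkS_mono H.d4 hγ) _) s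
    (mkS_mono H.d4 hs) (by
      simp only [Complex.add_re, Complex.ofReal_re]
      rw [show γ.re + 2 * π * n - s.re = γ.re - s.re + 2 * π * n by ring]; linarith)
  rw [mk_sin_per σ B.per] at h1
  have h2 : h ≤ ‖γ + ((2 * π * n : ℝ) : ℂ) - s‖ := by
    refine him.trans ?_
    have := Complex.abs_im_le_norm (γ + ((2 * π * n : ℝ) : ℂ) - s)
    simpa only [Complex.sub_im, Complex.add_im, Complex.ofReal_im, add_zero] using this
  have h3 : c * h ≤ ‖Complex.sin (mkL σ (Zs γ - Zs s) / 2)‖ :=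
    (mul_le_mul_of_nonneg_left h2 hc.le).trans h1
  have h4 : ‖mkL σ (Z γ - Z s) / 2 - mkL σ (Zs γ - Zs s) / 2‖ ≤ 2 * ε := by
    rw [← sub_div, ← mkL_sub]
    refine (mkL_half hσ _).trans ?_
    rw [show Z γ - Z s - (Zs γ - Zs s) = (Z γ - Zs γ) - (Z s - Zs s) by abel]
    refine (norm_sub_le _ _).trans ?_
    linarith [H.close γ hγ, H.close s hs]
  have h5 := mk_sin_perturb (h4.trans (by linarith [E.e1, B.h1])) (h4.trans (by linarith [E.e2, E.e0]))
  linarith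

lemma mk_cl_dsub (B : MkBase h c M Zs) (H : MkCl h ε δ Zs Z) {γ : ℂ} {d : ℝ} (hd : 0 < d)
    (hγ : |γ.im| + d ≤ δ) : ‖deriv Z γ - deriv Zs γ‖ ≤ 2 * ε / d := by
  have hb := mkS_ball hγ
  have hγ' := hb (Metric.mem_ball_self hd)
  have hsub := hb.trans (mkS_mono H.d4)
  have h1 : deriv (fun w => Z w - Zs w) γ = deriv Z γ - deriv Zs γ :=
    deriv_sub (H.hol.differentiableAt ((mkS_open _).mem_nhds hγ'))
      (B.hol.differentiableAt ((mkS_open _).mem_nhds (mkS_mono H.d4 hγ')))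
  rw [← h1]
  exact mk_cauchy hd ((H.hol.mono hb).sub (B.hol.mono hsub)) (fun w hw => H.close w (hb hw))

lemma mk_cl_mid (B : MkBase h c M Zs) (_E : MkSm h c ε) (H : MkCl h ε δ Zs Z) {γ : ℂ}
    (hγ : γ ∈ mkS (5 * h / 2)) : ‖deriv Z γ - deriv Zs γ‖ ≤ 4 * ε / h := by
  have hh := B.hpos
  have h1 : |γ.im| < 5 * h / 2 := hγ
  refine (mk_cl_dsub B H (d := h / 2) (by linarith) (by linarith [H.d3])).trans (le_of_eq ?_)
  field_simp; ring

lemma mk_e4 (B : MkBase h c M Zs) (E : MkSm h c ε) : 4 * ε / h ≤ 1 / 72 ∧ 4 * ε / h ≤ c / 8 := by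
  have hh := B.hpos
  constructor
  · rw [div_le_iff₀ hh]; linarith [E.e1]
  · rw [div_le_iff₀ hh]; linarith [E.e2]

lemma mk_cl_mid' (B : MkBase h c M Zs) (E : MkSm h c ε) (H : MkCl h ε δ Zs Z) {γ : ℂ}
    (hγ : γ ∈ mkS (5 * h / 2)) : ‖deriv Z γ‖ ≤ M + 1 := by
  have h1 := mk_cl_mid B E H hγ
  have h2 := B.dbd γ (mkS_mono (by linarith [B.hpos]) hγ)
  have h3 := (mk_e4 B E).1
  have := norm_add_le (deriv Z γ - deriv Zs γ) (deriv Zs γ)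
  rw [sub_add_cancel] at this
  linarith

lemma MkAC.mono {ρ ρ' c : ℝ} {Z : ℂ → ℂ × ℂ} (H : MkAC ρ c Z) (hr : ρ' ≤ ρ) : MkAC ρ' c Z :=
  fun σ hσ γ hγ s hs => H σ hσ γ (mkS_mono hr hγ) s (mkS_mono hr hs)

lemma mk_cl_ac (B : MkBase h c M Zs) (E : MkSm h c ε) (H : MkCl h ε δ Zs Z) :
    MkAC (5 * h / 2) (c / 2) Z := by
  have hh := B.hpos
  refine mk_ac_perturb (Z := Zs) (e := 4 * ε / h) (by linarith [B.h1])
    (B.hol.mono (mkS_mono (by linarith))) (H.hol.mono (mkS_mono (by linarith [H.d3])))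
    (B.ac.mono (by linarith)) (fun γ hγ => mk_cl_mid B E H hγ) (mk_e4 B E).1 (mk_e4 B E).2

/-- contour heights -/
def mkY (h : ℝ) (γ : ℂ) : ℝ := if 0 ≤ γ.im then -(2 * h) else 2 * h

/-- nonlinearity -/
def mkFy (Z : ℂ → ℂ × ℂ) (γ : ℂ) (y : ℝ) : ℂ × ℂ :=
  (1 / 2 : ℂ) • (mkI Complex.I Z γ y + mkI (-Complex.I) Z γ y)

def mkF (h : ℝ) (Z : ℂ → ℂ × ℂ) (γ : ℂ) : ℂ × ℂ := mkFy Z γ (mkY h γ)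

lemma mkY_abs (hh : 0 < h) (γ : ℂ) : |mkY h γ| = 2 * h := by
  unfold mkY; split_ifs
  · rw [abs_neg, abs_of_pos (by linarith)]
  · rw [abs_of_pos (by linarith)]

lemma mkY_sep (hh : 0 < h) (γ : ℂ) : h < |γ.im - mkY h γ| := by
  unfold mkY; split_ifs with h0
  · rw [abs_of_nonneg (by linarith)]; linarith
  · rw [abs_of_neg (by linarith)]; linarith

lemma mkF_per (h : ℝ) (hZ : cPerCurve Z) (γ : ℂ) (n : ℤ) :
    mkF h Z (γ + ((2 * π * n : ℝ) : ℂ)) = mkF h Z γ := by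
  have e : mkY h (γ + ((2 * π * n : ℝ) : ℂ)) = mkY h γ := by simp [mkY]
  unfold mkF mkFy mkI
  rw [e]
  simp only [mkG_per_left _ hZ]

lemma mkF_rhs {c' ρ : ℝ} (hh : 0 < h) (hρ : 2 * h < ρ) (hc : 0 < c')
    (hol : DifferentiableOn ℂ Z (mkS ρ)) (hper : cPerCurve Z) (hac : MkAC ρ c' Z) {γ : ℂ}
    (hγ : γ ∈ mkS ρ) : mkF h Z γ = cMuskatRHS Z γ :=
  (mk_rhs hc hol hper hac hγ (by rw [mkY_abs hh]; exact hρ)).symm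

lemma mk_cl_G (B : MkBase h c M Zs) (E : MkSm h c ε) (H : MkCl h ε δ Zs Z) {σ : ℂ}
    (hσ : σ ^ 2 = -1) {γ : ℂ} (hγ : γ ∈ mkS δ) {y : ℝ} (hy : |y| = 2 * h)
    (hs : h ≤ |γ.im - y|) (x : ℝ) :
    ‖mkG σ Z γ (x + y * Complex.I)‖ ≤ (1 + 2 / (c * h)) * (‖deriv Z γ‖ + (M + 1)) := by
  have hh := B.hpos
  have hc := B.cpos
  have hm : ((x:ℂ) + y * Complex.I) ∈ mkS (5 * h / 2) := mk_line_mem (by linarith) x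
  have h1 := mk_cl_sin B E H hσ hγ (mkS_mono (by linarith [H.d3]) hm) (by simpa using hs)
  have h2 := mk_cot_le (by positivity) h1
  have h3 := mk_cl_mid' B E H hm
  unfold mkG
  rw [norm_smul]
  have h4 : 1 + 1 / (c * h / 2) = 1 + 2 / (c * h) := by field_simp
  rw [h4] at h2
  gcongr
  refine (norm_sub_le _ _).trans ?_
  linarith

lemma mk_half_norm : ‖(1 / 2 : ℂ)‖ = 1 / 2 := by simp

lemma mk_I_bound {g : ℝ → ℂ × ℂ} {C : ℝ} (hg : ∀ x, ‖g x‖ ≤ C) :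
    ‖∫ x in (-π)..π, g x‖ ≤ 7 * C := by
  have hpi := Real.pi_lt_d2
  have hC : 0 ≤ C := (norm_nonneg _).trans (hg 0)
  refine (intervalIntegral.norm_integral_le_of_norm_le_const (C := C) (fun x _ => hg x)).trans ?_
  have : |π - -π| = 2 * π := by rw [abs_of_pos (by linarith [Real.pi_pos])]; ring
  rw [this]; nlinarith

lemma mk_Isq : Complex.I ^ 2 = -1 := Complex.I_sq
lemma mk_Isq' : (-Complex.I) ^ 2 = -1 := by simp

lemma mk_cl_bound (B : MkBase h c M Zs) (E : MkSm h c ε) (H : MkCl h ε δ Zs Z)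
    {γ : ℂ} (hγ : γ ∈ mkS δ) :
    ‖mkF h Z γ‖ ≤ 7 * ((1 + 2 / (c * h)) * (‖deriv Z γ‖ + (M + 1))) := by
  have hy := mkY_abs B.hpos γ
  have hs := (mkY_sep B.hpos γ).le
  have h1 := mk_I_bound (fun x => mk_cl_G B E H mk_Isq hγ hy hs x)
  have h2 := mk_I_bound (fun x => mk_cl_G B E H mk_Isq' hγ hy hs x)
  unfold mkF mkFy mkI
  rw [norm_smul, mk_half_norm]
  refine (mul_le_mul_of_nonneg_left (norm_add_le _ _) (by norm_num)).trans ?_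
  linarith

lemma mk_cl_Gc (B : MkBase h c M Zs) (E : MkSm h c ε) (H : MkCl h ε δ Zs Z) {σ : ℂ}
    (hσ : σ ^ 2 = -1) {γ : ℂ} (hγ : γ ∈ mkS δ) {y : ℝ} (hy : |y| = 2 * h)
    (hs : h ≤ |γ.im - y|) : Continuous (fun x : ℝ => mkG σ Z γ (x + y * Complex.I)) := by
  have hh := B.hpos
  have hc := B.cpos
  have hm : ∀ x : ℝ, ((x:ℂ) + y * Complex.I) ∈ mkS δ := mk_line_mem (by linarith [H.d3])
  have hl : Continuous (fun x : ℝ => ((x:ℂ) + y * Complex.I)) := by fun_prop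
  have hZ : Continuous (fun x : ℝ => Z (x + y * Complex.I)) :=
    H.hol.continuousOn.comp_continuous hl hm
  have hdZ : Continuous (fun x : ℝ => deriv Z (x + y * Complex.I)) :=
    (H.hol.deriv (mkS_open _)).continuousOn.comp_continuous hl hm
  have hL : Continuous (fun x : ℝ => mkL σ (Z γ - Z (x + y * Complex.I)) / 2) :=
    ((mkL_continuous σ).comp (continuous_const.sub hZ)).div_const 2
  unfold mkG Complex.cot
  refine Continuous.smul (((Complex.continuous_cos.comp hL)).div (Complex.continuous_sin.comp hL)
    fun x => ?_) (continuous_const.sub hdZ)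
  have := mk_cl_sin B E H hσ hγ (hm x) (by simpa using hs)
  exact norm_pos_iff.mp (lt_of_lt_of_le (by positivity) this)

lemma mk_cl_Id (B : MkBase h c M Zs) (E : MkSm h c ε) (H : MkCl h ε δ Zs Z) {σ : ℂ}
    (hσ : σ ^ 2 = -1) {γ : ℂ} (hγ : γ ∈ mkS δ) {y : ℝ} (hy : |y| = 2 * h)
    (hs : h < |γ.im - y|) : DifferentiableAt ℂ (fun w => mkI σ Z w y) γ := by
  have hh := B.hpos
  have hc := B.cpos
  have hopen : IsOpen {w : ℂ | h < |w.im - y|} := isOpen_lt continuous_const (by fun_prop)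
  obtain ⟨ρ, hρ, hball⟩ := Metric.isOpen_iff.mp ((mkS_open δ).inter hopen) γ ⟨hγ, hs⟩
  have hγ' : |γ.im| < δ := hγ
  set d := min ρ ((δ - |γ.im|) / 2) with hd
  have hd0 : 0 < d := lt_min hρ (by linarith)
  have hdb : ∀ w ∈ Metric.ball γ d, ‖deriv Z w‖ ≤ M + 2 * ε / d := by
    intro w hw
    have hw2 : |w.im| + d ≤ δ := by
      rw [mem_ball_iff_norm] at hw
      have h1 := Complex.abs_im_le_norm (w - γ)
      rw [Complex.sub_im] at h1
      have h2 := abs_add_le (w.im - γ.im) γ.im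
      rw [sub_add_cancel] at h2
      have := min_le_right ρ ((δ - |γ.im|) / 2)
      linarith
    have h1 := mk_cl_dsub B H hd0 hw2
    have h2 := B.dbd w (mkS_mono H.d4 (by change |w.im| < δ; linarith))
    have := norm_add_le (deriv Z w - deriv Zs w) (deriv Zs w)
    rw [sub_add_cancel] at this
    linarith
  have hsub : Metric.ball γ d ⊆ mkS δ ∩ {w : ℂ | h < |w.im - y|} :=
    (Metric.ball_subset_ball (min_le_left _ _)).trans hball
  have hm : ∀ x : ℝ, ((x:ℂ) + y * Complex.I) ∈ mkS δ := mk_line_mem (by linarith [H.d3])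
  refine (mk_paramInt (f := fun (x:ℝ) w => mkG σ Z w (x + y * Complex.I)) (a := -π) (b := π)
    (C := (1 + 2 / (c * h)) * ((M + 2 * ε / d) + (M + 1))) hd0 ?_ ?_ ?_).differentiableAt
  · intro x _
    have hZ : DifferentiableOn ℂ Z (Metric.ball γ d) :=
      H.hol.mono (hsub.trans inter_subset_left)
    have hdZ : DifferentiableOn ℂ (deriv Z) (Metric.ball γ d) := hZ.deriv Metric.isOpen_ball
    have hL : DifferentiableOn ℂ (fun w => mkL σ (Z w - Z (x + y * Complex.I)) / 2)
        (Metric.ball γ d) := (mkL_differentiableOn σ (hZ.sub_const _)).div_const 2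
    unfold mkG Complex.cot
    refine ((hL.ccos).div hL.csin fun w hw => ?_).smul (hdZ.sub_const _)
    have := mk_cl_sin B E H hσ (hsub hw).1 (hm x) (by simpa using (hsub hw).2.le)
    exact norm_pos_iff.mp (lt_of_lt_of_le (by positivity) this)
  · intro x _ w hw
    refine (mk_cl_G B E H hσ (hsub hw).1 hy (le_of_lt (hsub hw).2) x).trans ?_
    gcongr
    exact hdb w hw
  · intro w hw
    exact (mk_cl_Gc B E H hσ (hsub hw).1 hy (le_of_lt (hsub hw).2)).continuousOn

lemma mkF_eq_up (B : MkBase h c M Zs) (E : MkSm h c ε) (H : MkCl h ε δ Zs Z) {y : ℝ} {γ : ℂ}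
    (hγ : γ ∈ mkS (5 * h / 2)) (hy : |y| = 2 * h) : mkF h Z γ = mkFy Z γ y := by
  have hh := B.hpos
  have hol := H.hol.mono (mkS_mono (a := 5 * h / 2) (by linarith [H.d3]))
  have hac := mk_cl_ac B E H
  have hc := B.cpos
  rw [mkF_rhs hh (by linarith) (by positivity) hol H.per hac hγ]
  exact mk_rhs (c := c / 2) (by positivity) hol H.per hac hγ (by linarith)

lemma mk_cl_diff (B : MkBase h c M Zs) (E : MkSm h c ε) (H : MkCl h ε δ Zs Z) :
    DifferentiableOn ℂ (mkF h Z) (mkS δ) := by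
  have hh := B.hpos
  intro γ hγ
  apply DifferentiableAt.differentiableWithinAt
  have hd : ∀ y : ℝ, |y| = 2 * h → h < |γ.im - y| → DifferentiableAt ℂ (fun w => mkFy Z w y) γ :=
    fun y hy hs => ((mk_cl_Id B E H mk_Isq hγ hy hs).add
      (mk_cl_Id B E H mk_Isq' hγ hy hs)).const_smul (1 / 2 : ℂ)
  have hd' := hd _ (mkY_abs hh γ) (mkY_sep hh γ)
  refine hd'.congr_of_eventuallyEq ?_
  have hyc := mkY_abs hh γ
  rcases lt_trichotomy γ.im 0 with h0 | h0 | h0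
  · have : ∀ᶠ w : ℂ in nhds γ, w.im < 0 :=
      (isOpen_lt Complex.continuous_im continuous_const).mem_nhds h0
    filter_upwards [this] with w hw
    unfold mkF mkY
    rw [if_neg (by linarith), if_neg (by linarith)]
  · have : ∀ᶠ w : ℂ in nhds γ, w ∈ mkS (5 * h / 2) := (mkS_open _).mem_nhds (by
      change |γ.im| < _; rw [h0, abs_zero]; linarith)
    filter_upwards [this] with w hw
    exact mkF_eq_up B E H hw hyc
  · have : ∀ᶠ w : ℂ in nhds γ, 0 < w.im :=
      (isOpen_lt continuous_const Complex.continuous_im).mem_nhds h0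
    filter_upwards [this] with w hw
    unfold mkF mkY
    rw [if_pos (by linarith), if_pos (by linarith)]

lemma mk_cl_Gdiff (B : MkBase h c M Zs) (E : MkSm h c ε) (H : MkCl h ε δ Zs Z)
    (H' : MkCl h ε δ Zs W) {η : ℝ} (hη : ∀ w ∈ mkS (5 * h / 2), ‖Z w - W w‖ ≤ η) {σ : ℂ}
    (hσ : σ ^ 2 = -1) {γ : ℂ} (hγ : γ ∈ mkS δ) {y : ℝ} (hy : |y| = 2 * h)
    (hs : h ≤ |γ.im - y|) (x : ℝ) :
    ‖mkG σ Z γ (x + y * Complex.I) - mkG σ W γ (x + y * Complex.I)‖ ≤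
      8 / (c * h) ^ 2 * (‖Z γ - W γ‖ + η) * (‖deriv Z γ‖ + (M + 1)) +
      (1 + 2 / (c * h)) * (‖deriv Z γ - deriv W γ‖ + 4 * η / h) := by
  have hh := B.hpos
  have hc := B.cpos
  set s : ℂ := (x:ℂ) + y * Complex.I with hsdef
  have hm : s ∈ mkS (5 * h / 2) := mk_line_mem (by linarith) x
  have hmd : s ∈ mkS δ := mkS_mono (by linarith [H.d3]) hm
  have him : h ≤ |γ.im - s.im| := by simpa [hsdef] using hs
  have h1 := mk_cl_sin B E H hσ hγ hmd him
  have h1' := mk_cl_sin B E H' hσ hγ hmd him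
  have hdiff : ‖mkL σ (Z γ - Z s) / 2 - mkL σ (W γ - W s) / 2‖ ≤ ‖Z γ - W γ‖ + ‖Z s - W s‖ := by
    rw [← sub_div, ← mkL_sub]
    refine (mkL_half hσ _).trans ?_
    rw [show Z γ - Z s - (W γ - W s) = (Z γ - W γ) - (Z s - W s) by abel]
    exact norm_sub_le _ _
  have hZW : ∀ w ∈ mkS δ, ‖Z w - W w‖ ≤ 2 * ε := by
    intro w hw
    have := norm_sub_le (Z w - Zs w) (W w - Zs w)
    rw [sub_sub_sub_cancel_right] at this
    linarith [H.close w hw, H'.close w hw]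
  have h2 := mk_cot_lip (by positivity) h1 h1' (hdiff.trans (by
    linarith [hZW γ hγ, hZW s hmd, E.e1, B.h1]))
  have h3 := mk_cot_le (by positivity) h1'
  have h4 := mk_cl_mid' B E H hm
  have h5 : ‖deriv Z s - deriv W s‖ ≤ 4 * η / h := by
    have hb : Metric.ball s (h / 2) ⊆ mkS (5 * h / 2) := mkS_ball (by
      have : s.im = y := by simp [hsdef]
      rw [this, hy]; linarith)
    have hbd : Metric.ball s (h / 2) ⊆ mkS δ := hb.trans (mkS_mono (by linarith [H.d3]))
    have e1 : deriv (fun w => Z w - W w) s = deriv Z s - deriv W s :=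
      deriv_sub (H.hol.differentiableAt ((mkS_open _).mem_nhds hmd))
        (H'.hol.differentiableAt ((mkS_open _).mem_nhds hmd))
    rw [← e1]
    refine (mk_cauchy (by linarith) ((H.hol.mono hbd).sub (H'.hol.mono hbd))
      (fun w hw => hη w (hb hw))).trans (le_of_eq ?_)
    field_simp; ring
  have e2 : mkG σ Z γ s - mkG σ W γ s =
      (Complex.cot (mkL σ (Z γ - Z s) / 2) - Complex.cot (mkL σ (W γ - W s) / 2)) •
        (deriv Z γ - deriv Z s) +
      Complex.cot (mkL σ (W γ - W s) / 2) •
        ((deriv Z γ - deriv W γ) - (deriv Z s - deriv W s)) := by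
    unfold mkG; module
  rw [e2]
  refine (norm_add_le _ _).trans ?_
  rw [norm_smul, norm_smul]
  have e3 : 2 / (c * h / 2) ^ 2 = 8 / (c * h) ^ 2 := by field_simp; ring
  have e4 : 1 + 1 / (c * h / 2) = 1 + 2 / (c * h) := by field_simp
  rw [e3] at h2
  rw [e4] at h3
  have h6 : ‖Z s - W s‖ ≤ η := hη s hm
  have hη0 : 0 ≤ η := (norm_nonneg _).trans h6
  gcongr
  · refine h2.trans ?_
    gcongr
    exact hdiff.trans (by linarith)
  · exact (norm_sub_le _ _).trans (by linarith)
  · exact (norm_sub_le _ _).trans (by linarith)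

lemma mk_cl_ii (B : MkBase h c M Zs) (E : MkSm h c ε) (H : MkCl h ε δ Zs Z) {σ : ℂ}
    (hσ : σ ^ 2 = -1) {γ : ℂ} (hγ : γ ∈ mkS δ) :
    IntervalIntegrable (fun x : ℝ => mkG σ Z γ (x + mkY h γ * Complex.I)) volume (-π) π :=
  (mk_cl_Gc B E H hσ hγ (mkY_abs B.hpos γ) (mkY_sep B.hpos γ).le).intervalIntegrable _ _

lemma mk_cl_Fdiff (B : MkBase h c M Zs) (E : MkSm h c ε) (H : MkCl h ε δ Zs Z)
    (H' : MkCl h ε δ Zs W) {η : ℝ} (hη : ∀ w ∈ mkS (5 * h / 2), ‖Z w - W w‖ ≤ η)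
    {γ : ℂ} (hγ : γ ∈ mkS δ) :
    ‖mkF h Z γ - mkF h W γ‖ ≤
      7 * (8 / (c * h) ^ 2 * (‖Z γ - W γ‖ + η) * (‖deriv Z γ‖ + (M + 1)) +
      (1 + 2 / (c * h)) * (‖deriv Z γ - deriv W γ‖ + 4 * η / h)) := by
  have hy := mkY_abs B.hpos γ
  have hs := (mkY_sep B.hpos γ).le
  have h1 := mk_I_bound (fun x => mk_cl_Gdiff B E H H' hη mk_Isq hγ hy hs x)
  have h2 := mk_I_bound (fun x => mk_cl_Gdiff B E H H' hη mk_Isq' hγ hy hs x)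
  rw [intervalIntegral.integral_sub (mk_cl_ii B E H mk_Isq hγ) (mk_cl_ii B E H' mk_Isq hγ)] at h1
  rw [intervalIntegral.integral_sub (mk_cl_ii B E H mk_Isq' hγ) (mk_cl_ii B E H' mk_Isq' hγ)] at h2
  unfold mkF mkFy
  rw [← smul_sub, norm_smul, mk_half_norm, add_sub_add_comm]
  refine (mul_le_mul_of_nonneg_left (norm_add_le _ _) (by norm_num)).trans ?_
  unfold mkI
  linarith

lemma mk_cl_dbound (B : MkBase h c M Zs) (H : MkCl h ε δ Zs Z) {γ : ℂ} {d : ℝ} (hd : 0 < d)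
    (hγ : |γ.im| + d ≤ δ) : ‖deriv Z γ‖ ≤ M + 2 * ε / d := by
  have h1 := mk_cl_dsub B H hd hγ
  have h2 := B.dbd γ (mkS_mono H.d4 (by change |γ.im| < δ; linarith))
  have := norm_add_le (deriv Z γ - deriv Zs γ) (deriv Zs γ)
  rw [sub_add_cancel] at this
  linarith

end

lemma mk_cl_dcont {h c M ε δ : ℝ} {Zs : ℂ → ℂ × ℂ} {Z : ℝ → ℂ → ℂ × ℂ} {s : Set ℝ}
    (B : MkBase h c M Zs) (H : ∀ t ∈ s, MkCl h ε δ Zs (Z t))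
    (hc : ∀ γ ∈ mkS δ, ContinuousOn (fun t => Z t γ) s) {γ : ℂ} (hγ : γ ∈ mkS δ) :
    ContinuousOn (fun t => deriv (Z t) γ) s := by
  rcases s.eq_empty_or_nonempty with rfl | ⟨t₀, ht₀⟩
  · exact continuousOn_empty _
  have hd4 := (H t₀ ht₀).d4
  have hγ' : |γ.im| < δ := hγ
  set d := (δ - |γ.im|) / 2 with hd
  have hd0 : 0 < d := by rw [hd]; linarith
  have hcb : Metric.closedBall γ d ⊆ mkS δ :=
    (Metric.closedBall_subset_ball (by linarith)).trans (mkS_ball (d := 2 * d) (by rw [hd]; linarith))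
  obtain ⟨C, hC⟩ := (isCompact_closedBall γ d).exists_bound_of_continuousOn
    ((B.hol.mono (mkS_mono hd4)).continuousOn.mono hcb)
  have hb : Metric.ball γ d ⊆ mkS δ := Metric.ball_subset_closedBall.trans hcb
  refine mk_contDeriv (C := C + ε) hd0 (fun t ht => (H t ht).hol.mono hb) (fun t ht w hw => ?_)
    (fun w hw => hc w (hb hw))
  have h1 := (H t ht).close w (hb hw)
  have h2 := hC w (Metric.ball_subset_closedBall hw)
  have := norm_add_le (Z t w - Zs w) (Zs w)
  rw [sub_add_cancel] at this
  linarith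

lemma mk_cl_Fcont {h c M ε δ : ℝ} {Zs : ℂ → ℂ × ℂ} {Z : ℝ → ℂ → ℂ × ℂ} {s : Set ℝ}
    (B : MkBase h c M Zs) (E : MkSm h c ε) (H : ∀ t ∈ s, MkCl h ε δ Zs (Z t))
    (hc : ∀ γ ∈ mkS δ, ContinuousOn (fun t => Z t γ) s) {γ : ℂ} (hγ : γ ∈ mkS δ) :
    ContinuousOn (fun t => mkF h (Z t) γ) s := by
  rcases s.eq_empty_or_nonempty with rfl | ⟨t₀, ht₀⟩
  · exact continuousOn_empty _
  have hd3 := (H t₀ ht₀).d3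
  have hh := B.hpos
  have hcp := B.cpos
  have hγ' : |γ.im| < δ := hγ
  have hy := mkY_abs hh γ
  have hs := (mkY_sep hh γ).le
  have hm : ∀ x : ℝ, ((x:ℂ) + mkY h γ * Complex.I) ∈ mkS δ := mk_line_mem (by linarith)
  have key : ∀ σ : ℂ, σ ^ 2 = -1 → ContinuousOn (fun t => mkI σ (Z t) γ (mkY h γ)) s := by
    intro σ hσ t ht
    unfold mkI
    refine intervalIntegral.continuousWithinAt_of_dominated_interval
      (bound := fun _ => (1 + 2 / (c * h)) * ((M + 2 * ε / (δ - |γ.im|)) + (M + 1))) ?_ ?_ ?_ ?_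
    · filter_upwards [self_mem_nhdsWithin] with t ht
      exact (mk_cl_Gc B E (H t ht) hσ hγ hy hs).aestronglyMeasurable
    · filter_upwards [self_mem_nhdsWithin] with t ht
      refine Filter.Eventually.of_forall fun x _ => ?_
      refine (mk_cl_G B E (H t ht) hσ hγ hy hs x).trans ?_
      gcongr
      exact mk_cl_dbound B (H t ht) (by linarith) (by linarith)
    · exact intervalIntegrable_const
    · refine Filter.Eventually.of_forall fun x _ => ?_
      have h1 := hc γ hγ t ht
      have h2 := hc _ (hm x) t ht
      have h3 := mk_cl_dcont B H hc hγ t ht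
      have h4 := mk_cl_dcont B H hc (hm x) t ht
      have hL : ContinuousWithinAt (fun t => mkL σ (Z t γ - Z t (x + mkY h γ * Complex.I)) / 2) s t :=
        (((mkL_continuous σ).continuousAt.comp_continuousWithinAt (h1.sub h2))).div_const 2
      unfold mkG Complex.cot
      refine ContinuousWithinAt.smul ((Complex.continuous_cos.continuousAt.comp_continuousWithinAt
        hL).div (Complex.continuous_sin.continuousAt.comp_continuousWithinAt hL) ?_) (h3.sub h4)
      have := mk_cl_sin B E (H t ht) hσ hγ (hm x) (by simpa using hs)
      exact norm_pos_iff.mp (lt_of_lt_of_le (by positivity) this)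
  unfold mkF mkFy
  exact ((key _ mk_Isq).add (key _ mk_Isq')).const_smul (1 / 2 : ℂ)

end

section
/-! ### The cone, Picard map -/

def mkC1 (h c M : ℝ) : ℝ := 7 * ((1 + 2 / (c * h)) * (2 * M + 2))

def mkC3 (h c M : ℝ) : ℝ :=
  7 * (8 / (c * h) ^ 2 * (1 + 1 / √(h / 2)) * (2 * M + 2) +
    (1 + 2 / (c * h)) * (8 + 4 * (1 / √(h / 2)) / h))

structure MkK (h c M ε K : ℝ) : Prop where
  k0 : 0 < K
  k1 : 2 * mkC1 h c M ≤ ε * K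
  k2 : 16 * mkC1 h c M ≤ K
  k3 : 4 * mkC3 h c M ≤ K

lemma mk_K (h c M : ℝ) {ε : ℝ} (he : 0 < ε) (L : ℝ) : ∃ K, L ≤ K ∧ MkK h c M ε K := by
  refine ⟨max (max L 1) (max (2 * mkC1 h c M / ε) (max (16 * mkC1 h c M) (4 * mkC3 h c M))), ?_, ?_⟩
  · exact (le_max_left _ _).trans (le_max_left _ _)
  · constructor
    · exact lt_of_lt_of_le one_pos ((le_max_right L 1).trans (le_max_left _ _))
    · rw [mul_comm ε, ← div_le_iff₀ he]
      exact (le_max_left _ _).trans (le_max_right _ _)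
    · exact (le_max_left _ _).trans ((le_max_right _ _).trans (le_max_right _ _))
    · exact (le_max_right _ _).trans ((le_max_right _ _).trans (le_max_right _ _))

lemma mk_q1 {d : ℝ} (h0 : 0 < d) (h1 : d ≤ 1) : 1 ≤ 1 / √d := by
  rw [le_div_iff₀ (Real.sqrt_pos.mpr h0), one_mul]
  exact Real.sqrt_le_one.mpr h1

lemma mk_q3 {d : ℝ} (h0 : 0 < d) : 1 / (d * √d) = (1 / √d) ^ 3 := by
  have : √d ^ 2 = d := Real.sq_sqrt h0.le
  have hs := Real.sqrt_pos.mpr h0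
  rw [div_pow, one_pow]
  congr 1
  rw [pow_succ, this]

lemma mk_qhalf {d d' : ℝ} (h0 : 0 < d) (h1 : d / 2 ≤ d') : 1 / √d' ≤ 2 / √d := by
  have hs := Real.sqrt_pos.mpr h0
  have hs' := Real.sqrt_pos.mpr (by linarith : 0 < d')
  rw [div_le_div_iff₀ hs' hs, one_mul]
  apply Real.sqrt_le_iff.mpr
  refine ⟨by positivity, ?_⟩
  rw [mul_pow, Real.sq_sqrt (by linarith)]
  linarith

lemma mk_ball_im {γ w : ℂ} {d : ℝ} (hw : w ∈ Metric.ball γ d) : |w.im| < |γ.im| + d := by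
  rw [mem_ball_iff_norm] at hw
  have h1 := Complex.abs_im_le_norm (w - γ)
  rw [Complex.sub_im] at h1
  have h2 := abs_add_le (w.im - γ.im) γ.im
  rw [sub_add_cancel] at h2
  linarith

lemma mk_cone_cauchy {f : ℂ → ℂ × ℂ} {δ A : ℝ} (hA : 0 ≤ A) (hf : DifferentiableOn ℂ f (mkS δ))
    (hb : ∀ w ∈ mkS δ, ‖f w‖ ≤ A * (1 / √(δ - |w.im|))) {γ : ℂ} (hγ : γ ∈ mkS δ) :
    ‖deriv f γ‖ ≤ 8 * A * (1 / √(δ - |γ.im|)) ^ 3 := by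
  have hγ' : |γ.im| < δ := hγ
  set d := δ - |γ.im| with hd
  have hd0 : 0 < d := by rw [hd]; linarith
  have hsub : Metric.ball γ (d / 2) ⊆ mkS δ := mkS_ball (by rw [hd]; linarith)
  have := mk_cauchy (R := d / 2) (C := A * (2 / √d)) (by linarith) (hf.mono hsub) (fun w hw => by
    refine (hb w (hsub hw)).trans ?_
    gcongr ?_ * ?_
    exact mk_qhalf hd0 (by have := mk_ball_im hw; linarith))
  refine this.trans (le_of_eq ?_)
  rw [← mk_q3 hd0]
  have hs := Real.sqrt_pos.mpr hd0
  field_simp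
  ring

structure MkCone (h ε K N : ℝ) (Zs : ℂ → ℂ × ℂ) (Z : ℝ → ℂ → ℂ × ℂ) : Prop where
  cl : ∀ t, K * |t| < h → MkCl h ε (4 * h - K * |t|) Zs (Z t)
  cont : ∀ t, K * |t| < h → ∀ γ ∈ mkS (4 * h - K * |t|),
    ContinuousOn (fun τ => Z τ γ) (Icc (-|t|) |t|)
  dbd : ∀ t, K * |t| < h → ∀ γ ∈ mkS (4 * h - K * |t|),
    ‖deriv (Z t) γ‖ ≤ N * (1 / √(4 * h - K * |t| - |γ.im|))

def mkPhi (h : ℝ) (Zs : ℂ → ℂ × ℂ) (Z : ℝ → ℂ → ℂ × ℂ) (t : ℝ) (γ : ℂ) : ℂ × ℂ :=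
  Zs γ + ∫ τ in (0:ℝ)..t, mkF h (Z τ) γ

section
variable {h c M ε K : ℝ} {Zs : ℂ → ℂ × ℂ} {Z W : ℝ → ℂ → ℂ × ℂ}

lemma mkC1_nn (B : MkBase h c M Zs) : 0 ≤ mkC1 h c M := by
  have := B.hpos; have := B.cpos; have := B.Mnn
  unfold mkC1; positivity

lemma mkC3_nn (B : MkBase h c M Zs) : 0 ≤ mkC3 h c M := by
  have := B.hpos; have := B.cpos; have := B.Mnn
  unfold mkC3; positivity

lemma mk_cone_F (B : MkBase h c M Zs) (E : MkSm h c ε) (hK : MkK h c M ε K)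
    (H : MkCone h ε K (M + 1) Zs Z) {t : ℝ} (ht : K * |t| < h) {γ : ℂ}
    (hγ : γ ∈ mkS (4 * h - K * |t|)) :
    ‖mkF h (Z t) γ‖ ≤ mkC1 h c M * (1 / √(4 * h - K * |t| - |γ.im|)) := by
  have h1 := mk_cl_bound B E (H.cl t ht) hγ
  have h2 := H.dbd t ht γ hγ
  have hh := B.hpos; have hc := B.cpos; have hM := B.Mnn
  have hγ' : |γ.im| < 4 * h - K * |t| := hγ
  have hq := mk_q1 (d := 4 * h - K * |t| - |γ.im|) (by linarith) (by
    have := mul_nonneg hK.k0.le (abs_nonneg t)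
    linarith [B.h1, abs_nonneg γ.im])
  set q := 1 / √(4 * h - K * |t| - |γ.im|)
  refine h1.trans ?_
  unfold mkC1
  rw [mul_assoc, mul_assoc]
  gcongr
  nlinarith

lemma mk_cone_dF (B : MkBase h c M Zs) (E : MkSm h c ε) (hK : MkK h c M ε K)
    (H : MkCone h ε K (M + 1) Zs Z) {t : ℝ} (ht : K * |t| < h) {γ : ℂ}
    (hγ : γ ∈ mkS (4 * h - K * |t|)) :
    ‖deriv (mkF h (Z t)) γ‖ ≤ 8 * mkC1 h c M * (1 / √(4 * h - K * |t| - |γ.im|)) ^ 3 :=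
  mk_cone_cauchy (mkC1_nn B) (mk_cl_diff B E (H.cl t ht))
    (fun _ hw => mk_cone_F B E hK H ht hw) hγ

lemma mk_cone_sub (hK : 0 < K) {t τ : ℝ} (hτ : |τ| ≤ |t|) :
    mkS (4 * h - K * |t|) ⊆ mkS (4 * h - K * |τ|) :=
  mkS_mono (by have := mul_le_mul_of_nonneg_left hτ hK.le; linarith)

lemma mk_cone_lt (hK : 0 < K) {t τ : ℝ} (ht : K * |t| < h) (hτ : |τ| ≤ |t|) : K * |τ| < h :=
  (mul_le_mul_of_nonneg_left hτ hK.le).trans_lt ht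

lemma mk_cone_Fcont (B : MkBase h c M Zs) (E : MkSm h c ε) (hK : MkK h c M ε K)
    (H : MkCone h ε K (M + 1) Zs Z) {t : ℝ} (ht : K * |t| < h) {γ : ℂ}
    (hγ : γ ∈ mkS (4 * h - K * |t|)) :
    ContinuousOn (fun τ => mkF h (Z τ) γ) (Icc (-|t|) |t|) := by
  refine mk_cl_Fcont (δ := 4 * h - K * |t|) B E (fun τ hτ => ?_) (fun w hw => H.cont t ht w hw) hγ
  have hτ' : |τ| ≤ |t| := abs_le.mpr hτ
  refine (H.cl τ (mk_cone_lt hK.k0 ht hτ')).mono (by linarith) ?_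
  have := mul_le_mul_of_nonneg_left hτ' hK.k0.le; linarith

lemma mk_uIcc_abs {t τ : ℝ} (h : τ ∈ uIcc 0 t) : |τ| ≤ |t| := by
  have := abs_sub_left_of_mem_uIcc h
  simpa using this

lemma mk_uIcc_sub (t : ℝ) : uIcc 0 t ⊆ Icc (-|t|) |t| := fun _ h => abs_le.mp (mk_uIcc_abs h)

lemma mk_cone_ii (B : MkBase h c M Zs) (E : MkSm h c ε) (hK : MkK h c M ε K)
    (H : MkCone h ε K (M + 1) Zs Z) {t : ℝ} (ht : K * |t| < h) {γ : ℂ}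
    (hγ : γ ∈ mkS (4 * h - K * |t|)) :
    IntervalIntegrable (fun τ => mkF h (Z τ) γ) volume 0 t :=
  ((mk_cone_Fcont B E hK H ht hγ).mono (mk_uIcc_sub t)).intervalIntegrable

lemma mk_phi_deriv (B : MkBase h c M Zs) (E : MkSm h c ε) (hK : MkK h c M ε K)
    (H : MkCone h ε K (M + 1) Zs Z) {t : ℝ} (ht : K * |t| < h) {γ : ℂ}
    (hγ : γ ∈ mkS (4 * h - K * |t|)) :
    HasDerivAt (mkPhi h Zs Z t) (deriv Zs γ + ∫ τ in (0:ℝ)..t, deriv (mkF h (Z τ)) γ) γ := by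
  have hγ' : |γ.im| < 4 * h - K * |t| := hγ
  have hk := mul_nonneg hK.k0.le (abs_nonneg t)
  set d := 4 * h - K * |t| - |γ.im| with hd
  have hd0 : 0 < d := by rw [hd]; linarith
  have hsub : Metric.ball γ (d / 2) ⊆ mkS (4 * h - K * |t|) := mkS_ball (by rw [hd]; linarith)
  refine HasDerivAt.add (B.hol.differentiableAt ((mkS_open _).mem_nhds
    (mkS_mono (by linarith) hγ))).hasDerivAt ?_
  refine mk_paramInt (f := fun τ w => mkF h (Z τ) w) (ρ := d / 2)
    (C := mkC1 h c M * (2 / √d)) (by linarith) ?_ ?_ ?_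
  · intro τ hτ
    have hτ' := mk_uIcc_abs hτ
    exact (mk_cl_diff B E (H.cl τ (mk_cone_lt hK.k0 ht hτ'))).mono
      (hsub.trans (mk_cone_sub hK.k0 hτ'))
  · intro τ hτ w hw
    have hτ' := mk_uIcc_abs hτ
    refine (mk_cone_F B E hK H (mk_cone_lt hK.k0 ht hτ')
      (mk_cone_sub hK.k0 hτ' (hsub hw))).trans ?_
    refine mul_le_mul_of_nonneg_left (mk_qhalf hd0 ?_) (mkC1_nn B)
    have := mul_le_mul_of_nonneg_left hτ' hK.k0.le
    have := mk_ball_im hw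
    linarith
  · intro w hw
    exact (mk_cone_Fcont B E hK H ht (hsub hw)).mono (mk_uIcc_sub t)

lemma mk_phi_cone (B : MkBase h c M Zs) (E : MkSm h c ε) (hK : MkK h c M ε K)
    (H : MkCone h ε K (M + 1) Zs Z) : MkCone h ε K (M + 1) Zs (mkPhi h Zs Z) := by
  have hM := B.Mnn
  have hk0 := hK.k0
  constructor
  · intro t ht
    have hk := mul_nonneg hK.k0.le (abs_nonneg t)
    refine ⟨by linarith, by linarith, fun γ hγ =>
      (mk_phi_deriv B E hK H ht hγ).differentiableAt.differentiableWithinAt, ?_, ?_⟩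
    · intro γ
      unfold mkPhi
      have e : (∫ τ in (0:ℝ)..t, mkF h (Z τ) (γ + ((2 * π : ℝ) : ℂ))) =
          ∫ τ in (0:ℝ)..t, mkF h (Z τ) γ := by
        refine intervalIntegral.integral_congr fun τ hτ => ?_
        have := mkF_per h (H.cl τ (mk_cone_lt hK.k0 ht (mk_uIcc_abs hτ))).per γ 1
        simpa using this
      rw [e, B.per γ]
      abel
    · intro γ hγ
      have hγ' : |γ.im| < 4 * h - K * |t| := hγ
      unfold mkPhi
      rw [add_sub_cancel_left]
      refine (mk_int12 (A := mkC1 h c M) (c := 4 * h - |γ.im|) hK.k0 (mkC1_nn B)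
        (by linarith [B.h1, abs_nonneg γ.im]) (by linarith) (fun τ hτ => ?_)).trans ?_
      · have := mk_cone_F B E hK H (mk_cone_lt hK.k0 ht hτ) (mk_cone_sub hK.k0 hτ hγ)
        rw [mul_one_div] at this
        rwa [show 4 * h - |γ.im| - K * |τ| = 4 * h - K * |τ| - |γ.im| by ring]
      · rw [div_le_iff₀ hK.k0]; exact hK.k1
  · intro t ht γ hγ
    have h1 := (mk_cone_Fcont B E hK H ht hγ)
    have hu : Icc (-|t|) |t| = uIcc (-|t|) |t| := by
      rw [uIcc_of_le (by linarith [abs_nonneg t])]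
    rw [hu] at h1 ⊢
    unfold mkPhi
    refine continuousOn_const.add ?_
    refine intervalIntegral.continuousOn_primitive_interval' h1.intervalIntegrable ?_
    rw [← hu]; simp
  · intro t ht γ hγ
    have hγ' : |γ.im| < 4 * h - K * |t| := hγ
    have hk := mul_nonneg hK.k0.le (abs_nonneg t)
    rw [(mk_phi_deriv B E hK H ht hγ).deriv]
    refine (norm_add_le _ _).trans ?_
    have h1 := mk_int32 (G := fun τ => deriv (mkF h (Z τ)) γ) (A := 8 * mkC1 h c M)
      (c := 4 * h - |γ.im|) (t := t) hK.k0 (by have := mkC1_nn B; positivity)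
      (by linarith) (fun τ hτ => by
        have hm := mk_cone_sub hK.k0 hτ hγ
        have hm' : |γ.im| < 4 * h - K * |τ| := hm
        have := mk_cone_dF B E hK H (mk_cone_lt hK.k0 ht hτ) hm
        rw [← mk_q3 (by linarith), mul_one_div] at this
        rwa [show 4 * h - |γ.im| - K * |τ| = 4 * h - K * |τ| - |γ.im| by ring])
    rw [show 4 * h - |γ.im| - K * |t| = 4 * h - K * |t| - |γ.im| by ring] at h1
    have h2 := B.dbd γ (mkS_mono (by linarith) hγ)
    have hq := mk_q1 (d := 4 * h - K * |t| - |γ.im|) (by linarith) (by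
      linarith [B.h1, abs_nonneg γ.im])
    set q := 1 / √(4 * h - K * |t| - |γ.im|)
    have h3 : 2 * (8 * mkC1 h c M) / K ≤ 1 := by
      rw [div_le_one hK.k0]; linarith [hK.k2]
    have h4 : 2 * (8 * mkC1 h c M) / K * q ≤ 1 * q := by gcongr
    nlinarith

lemma mk_cone_Fdiff (B : MkBase h c M Zs) (E : MkSm h c ε) (hK : MkK h c M ε K)
    (H : MkCone h ε K (M + 1) Zs Z) (H' : MkCone h ε K (M + 1) Zs W) {Δ : ℝ} (hΔ : 0 ≤ Δ)
    {t : ℝ} (ht : K * |t| < h)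
    (hd : ∀ γ ∈ mkS (4 * h - K * |t|),
      ‖Z t γ - W t γ‖ ≤ Δ * (1 / √(4 * h - K * |t| - |γ.im|))) {γ : ℂ}
    (hγ : γ ∈ mkS (4 * h - K * |t|)) :
    ‖mkF h (Z t) γ - mkF h (W t) γ‖ ≤
      mkC3 h c M * Δ * (1 / √(4 * h - K * |t| - |γ.im|)) ^ 3 := by
  have hh := B.hpos; have hc := B.cpos; have hM := B.Mnn
  have hk := mul_nonneg hK.k0.le (abs_nonneg t)
  have hγ' : |γ.im| < 4 * h - K * |t| := hγ
  have hη : ∀ w ∈ mkS (5 * h / 2), ‖Z t w - W t w‖ ≤ Δ * (1 / √(h / 2)) := by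
    intro w hw
    have hw' : |w.im| < 5 * h / 2 := hw
    refine (hd w (by change |w.im| < _; linarith)).trans ?_
    gcongr
    linarith
  have h1 := mk_cl_Fdiff B E (H.cl t ht) (H'.cl t ht) hη hγ
  have h2 := hd γ hγ
  have h3 := H.dbd t ht γ hγ
  have h4 : ‖deriv (Z t) γ - deriv (W t) γ‖ ≤ 8 * Δ * (1 / √(4 * h - K * |t| - |γ.im|)) ^ 3 := by
    have e1 : deriv (fun w => Z t w - W t w) γ = deriv (Z t) γ - deriv (W t) γ :=
      deriv_sub ((H.cl t ht).hol.differentiableAt ((mkS_open _).mem_nhds hγ))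
        ((H'.cl t ht).hol.differentiableAt ((mkS_open _).mem_nhds hγ))
    rw [← e1]
    exact mk_cone_cauchy hΔ ((H.cl t ht).hol.sub (H'.cl t ht).hol) hd hγ
  have hq := mk_q1 (d := 4 * h - K * |t| - |γ.im|) (by linarith) (by
      linarith [B.h1, abs_nonneg γ.im])
  set q := 1 / √(4 * h - K * |t| - |γ.im|)
  set p := 1 / √(h / 2) with hp
  have hp0 : 0 ≤ p := by positivity
  have hq2 : q ^ 2 ≤ q ^ 3 := pow_le_pow_right₀ hq (by norm_num)
  have hq1 : q ≤ q ^ 3 := le_self_pow₀ hq (by norm_num)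
  refine h1.trans ?_
  have e : mkC3 h c M * Δ * q ^ 3 = 7 * (8 / (c * h) ^ 2 * ((1 + p) * Δ * ((2 * M + 2) * q ^ 3)) +
    (1 + 2 / (c * h)) * ((8 * Δ * q ^ 3) + 4 * (Δ * p) / h * q ^ 3)) := by
    unfold mkC3; rw [← hp]; ring
  rw [e, mul_assoc (8 / (c * h) ^ 2)]
  have h5 : (‖Z t γ - W t γ‖ + Δ * p) * (‖deriv (Z t) γ‖ + (M + 1)) ≤
      (1 + p) * Δ * ((2 * M + 2) * q ^ 3) := by
    calc (‖Z t γ - W t γ‖ + Δ * p) * (‖deriv (Z t) γ‖ + (M + 1))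
        ≤ (Δ * q + Δ * p * q) * ((M + 1) * q + (M + 1) * q) := by
          have a1 : Δ * p ≤ Δ * p * q := le_mul_of_one_le_right (by positivity) hq
          have a2 : M + 1 ≤ (M + 1) * q := le_mul_of_one_le_right (by positivity) hq
          exact mul_le_mul (add_le_add h2 a1) (add_le_add h3 a2) (by positivity) (by positivity)
      _ = (1 + p) * Δ * ((2 * M + 2) * q ^ 2) := by ring
      _ ≤ _ := by gcongr
  have h6 : 4 * (Δ * p) / h ≤ 4 * (Δ * p) / h * q ^ 3 :=
    le_mul_of_one_le_right (by positivity) (one_le_pow₀ hq)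
  gcongr

lemma mk_phi_contract (B : MkBase h c M Zs) (E : MkSm h c ε) (hK : MkK h c M ε K)
    (H : MkCone h ε K (M + 1) Zs Z) (H' : MkCone h ε K (M + 1) Zs W) {Δ : ℝ} (hΔ : 0 ≤ Δ)
    (hd : ∀ t, K * |t| < h → ∀ γ ∈ mkS (4 * h - K * |t|),
      ‖Z t γ - W t γ‖ ≤ Δ * (1 / √(4 * h - K * |t| - |γ.im|))) :
    ∀ t, K * |t| < h → ∀ γ ∈ mkS (4 * h - K * |t|),
      ‖mkPhi h Zs Z t γ - mkPhi h Zs W t γ‖ ≤ (Δ / 2) * (1 / √(4 * h - K * |t| - |γ.im|)) := by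
  intro t ht γ hγ
  have hγ' : |γ.im| < 4 * h - K * |t| := hγ
  unfold mkPhi
  rw [add_sub_add_left_eq_sub, ← intervalIntegral.integral_sub (mk_cone_ii B E hK H ht hγ)
    (mk_cone_ii B E hK H' ht hγ)]
  have h1 := mk_int32 (G := fun τ => mkF h (Z τ) γ - mkF h (W τ) γ) (A := mkC3 h c M * Δ)
      (c := 4 * h - |γ.im|) (t := t) hK.k0 (by have := mkC3_nn B; positivity)
      (by linarith) (fun τ hτ => by
        have hm := mk_cone_sub hK.k0 hτ hγ
        have hm' : |γ.im| < 4 * h - K * |τ| := hm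
        have hlt := mk_cone_lt hK.k0 ht hτ
        have := mk_cone_Fdiff B E hK H H' hΔ hlt (hd τ hlt) hm
        rw [← mk_q3 (by linarith), mul_one_div] at this
        rwa [show 4 * h - |γ.im| - K * |τ| = 4 * h - K * |τ| - |γ.im| by ring])
  rw [show 4 * h - |γ.im| - K * |t| = 4 * h - K * |t| - |γ.im| by ring] at h1
  refine h1.trans (mul_le_mul_of_nonneg_right ?_ (by positivity))
  rw [div_le_iff₀ hK.k0]
  nlinarith [hK.k3]

end

end

section
section
variable {h c M ε K : ℝ} {Zs : ℂ → ℂ × ℂ} {Z W : ℝ → ℂ → ℂ × ℂ}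

lemma mk_cone_q (B : MkBase h c M Zs) (hK : 0 < K) {t : ℝ} {γ : ℂ}
    (hγ : γ ∈ mkS (4 * h - K * |t|)) : 1 ≤ 1 / √(4 * h - K * |t| - |γ.im|) := by
  have hγ' : |γ.im| < 4 * h - K * |t| := hγ
  have hk := mul_nonneg hK.le (abs_nonneg t)
  exact mk_q1 (by linarith) (by linarith [B.h1, abs_nonneg γ.im])

lemma mk_cone_unique (B : MkBase h c M Zs) (E : MkSm h c ε) (hK : MkK h c M ε K)
    (H : MkCone h ε K (M + 1) Zs Z) (H' : MkCone h ε K (M + 1) Zs W)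
    (hZ : ∀ t, K * |t| < h → ∀ γ ∈ mkS (4 * h - K * |t|), Z t γ = mkPhi h Zs Z t γ)
    (hW : ∀ t, K * |t| < h → ∀ γ ∈ mkS (4 * h - K * |t|), W t γ = mkPhi h Zs W t γ) :
    ∀ t, K * |t| < h → ∀ γ ∈ mkS (4 * h - K * |t|), Z t γ = W t γ := by
  have he := E.e0
  have key : ∀ n : ℕ, ∀ t, K * |t| < h → ∀ γ ∈ mkS (4 * h - K * |t|),
      ‖Z t γ - W t γ‖ ≤ (2 * ε * (1 / 2) ^ n) * (1 / √(4 * h - K * |t| - |γ.im|)) := by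
    intro n
    induction n with
    | zero =>
      intro t ht γ hγ
      have hq := mk_cone_q B hK.k0 hγ
      have := norm_sub_le (Z t γ - Zs γ) (W t γ - Zs γ)
      rw [sub_sub_sub_cancel_right] at this
      have h1 := (H.cl t ht).close γ hγ
      have h2 := (H'.cl t ht).close γ hγ
      rw [pow_zero, mul_one]
      nlinarith
    | succ n ih =>
      intro t ht γ hγ
      have := mk_phi_contract B E hK H H' (by positivity) ih t ht γ hγ
      rw [hZ t ht γ hγ, hW t ht γ hγ]
      refine this.trans (le_of_eq ?_)
      rw [pow_succ]; ring
  intro t ht γ hγ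
  have h1 : Filter.Tendsto (fun n : ℕ => (2 * ε * (1 / 2 : ℝ) ^ n) *
      (1 / √(4 * h - K * |t| - |γ.im|))) Filter.atTop (nhds 0) := by
    have := (tendsto_pow_atTop_nhds_zero_of_lt_one (r := (1/2:ℝ)) (by norm_num) (by norm_num))
    simpa using (this.const_mul (2 * ε)).mul_const (1 / √(4 * h - K * |t| - |γ.im|))
  have h2 := ge_of_tendsto' h1 (fun n => key n t ht γ hγ)
  exact sub_eq_zero.mp (norm_le_zero_iff.mp h2)

/-- Picard iterates -/
def mkIt (h : ℝ) (Zs : ℂ → ℂ × ℂ) : ℕ → ℝ → ℂ → ℂ × ℂ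
  | 0 => fun _ => Zs
  | n + 1 => mkPhi h Zs (mkIt h Zs n)

lemma mk_it_cone (B : MkBase h c M Zs) (E : MkSm h c ε) (hK : MkK h c M ε K) (n : ℕ) :
    MkCone h ε K (M + 1) Zs (mkIt h Zs n) := by
  induction n with
  | zero =>
    constructor
    · intro t ht
      have hk := mul_nonneg hK.k0.le (abs_nonneg t)
      exact ⟨by linarith, by linarith, B.hol.mono (mkS_mono (by linarith)), B.per,
        fun γ _ => by simpa [mkIt] using E.e0.le⟩
    · intro t ht γ hγ
      exact continuousOn_const
    · intro t ht γ hγ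
      have hk := mul_nonneg hK.k0.le (abs_nonneg t)
      have hq := mk_cone_q B hK.k0 hγ
      have h1 := B.dbd γ (mkS_mono (by linarith) hγ)
      have hM := B.Mnn
      simp only [mkIt]
      nlinarith
  | succ n ih => exact mk_phi_cone B E hK ih

lemma mk_it_diff (B : MkBase h c M Zs) (E : MkSm h c ε) (hK : MkK h c M ε K) (n : ℕ) :
    ∀ t, K * |t| < h → ∀ γ ∈ mkS (4 * h - K * |t|),
      ‖mkIt h Zs (n + 1) t γ - mkIt h Zs n t γ‖ ≤
        (ε * (1 / 2) ^ n) * (1 / √(4 * h - K * |t| - |γ.im|)) := by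
  have he := E.e0
  induction n with
  | zero =>
    intro t ht γ hγ
    have hq := mk_cone_q B hK.k0 hγ
    have h1 := ((mk_it_cone B E hK 1).cl t ht).close γ hγ
    rw [pow_zero, mul_one]
    simp only [mkIt, zero_add] at h1 ⊢
    nlinarith
  | succ n ih =>
    intro t ht γ hγ
    have := mk_phi_contract B E hK (mk_it_cone B E hK (n + 1)) (mk_it_cone B E hK n)
      (by positivity) ih t ht γ hγ
    refine this.trans (le_of_eq ?_)
    rw [pow_succ]; ring

open Classical in
/-- limit of the Picard iterates -/
def mkLim (h K : ℝ) (Zs : ℂ → ℂ × ℂ) (t : ℝ) (γ : ℂ) : ℂ × ℂ :=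
  if γ ∈ mkS (4 * h - K * |t|) then
    (if H : ∃ a, Filter.Tendsto (fun n => mkIt h Zs n t γ) Filter.atTop (nhds a) then H.choose else 0)
  else Zs γ

lemma mk_lim_tendsto (B : MkBase h c M Zs) (E : MkSm h c ε) (hK : MkK h c M ε K) {t : ℝ}
    (ht : K * |t| < h) {γ : ℂ} (hγ : γ ∈ mkS (4 * h - K * |t|)) :
    Filter.Tendsto (fun n => mkIt h Zs n t γ) Filter.atTop (nhds (mkLim h K Zs t γ)) ∧
    ∀ n, ‖mkIt h Zs n t γ - mkLim h K Zs t γ‖ ≤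
      (2 * ε * (1 / 2) ^ n) * (1 / √(4 * h - K * |t| - |γ.im|)) := by
  set q := 1 / √(4 * h - K * |t| - |γ.im|) with hq
  have hd : ∀ n, dist (mkIt h Zs n t γ) (mkIt h Zs (n + 1) t γ) ≤ (ε * q) * (1 / 2) ^ n := by
    intro n
    rw [dist_comm, dist_eq_norm]
    refine (mk_it_diff B E hK n t ht γ hγ).trans (le_of_eq ?_)
    rw [← hq]; ring
  have hcs := cauchySeq_of_le_geometric (1 / 2 : ℝ) (ε * q) (by norm_num) hd
  have hl : Filter.Tendsto (fun n => mkIt h Zs n t γ) Filter.atTop (nhds (mkLim h K Zs t γ)) := by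
    unfold mkLim
    rw [if_pos hγ]
    have H := cauchySeq_tendsto_of_complete hcs
    rw [dif_pos H]
    exact H.choose_spec
  refine ⟨hl, fun n => ?_⟩
  have := dist_le_of_le_geometric_of_tendsto (1 / 2 : ℝ) (ε * q) (by norm_num) hd hl n
  rw [dist_eq_norm] at this
  refine this.trans (le_of_eq ?_)
  ring

lemma mk_geo (A q : ℝ) : Filter.Tendsto (fun n : ℕ => (A * (1 / 2 : ℝ) ^ n) * q)
    Filter.atTop (nhds 0) := by
  have := (tendsto_pow_atTop_nhds_zero_of_lt_one (r := (1/2:ℝ)) (by norm_num) (by norm_num))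
  simpa using (this.const_mul A).mul_const q

lemma mk_lim_cone (B : MkBase h c M Zs) (E : MkSm h c ε) (hK : MkK h c M ε K) :
    MkCone h ε K (M + 1) Zs (mkLim h K Zs) := by
  have he := E.e0
  have hlu : ∀ t, K * |t| < h → TendstoLocallyUniformlyOn (fun n => mkIt h Zs n t)
      (mkLim h K Zs t) Filter.atTop (mkS (4 * h - K * |t|)) := by
    intro t ht
    rw [Metric.tendstoLocallyUniformlyOn_iff]
    intro e he' γ hγ
    have hγ' : |γ.im| < 4 * h - K * |t| := hγ
    set d := 4 * h - K * |t| - |γ.im| with hd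
    have hd0 : 0 < d := by rw [hd]; linarith
    have hsub : Metric.ball γ (d / 2) ⊆ mkS (4 * h - K * |t|) := mkS_ball (by rw [hd]; linarith)
    refine ⟨Metric.ball γ (d / 2),
      mem_nhdsWithin_of_mem_nhds (Metric.ball_mem_nhds _ (by linarith)), ?_⟩
    filter_upwards [(mk_geo (2 * ε) (2 / √d)).eventually_lt_const he'] with n hn w hw
    rw [dist_comm, dist_eq_norm]
    refine ((mk_lim_tendsto B E hK ht (hsub hw)).2 n).trans_lt (lt_of_le_of_lt ?_ hn)
    refine mul_le_mul_of_nonneg_left (mk_qhalf hd0 ?_) (by positivity)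
    have := mk_ball_im hw
    linarith
  constructor
  · intro t ht
    have hk := mul_nonneg hK.k0.le (abs_nonneg t)
    refine ⟨by linarith, by linarith, ?_, ?_, ?_⟩
    · exact (hlu t ht).differentiableOn (Filter.Eventually.of_forall fun n =>
        ((mk_it_cone B E hK n).cl t ht).hol) (mkS_open _)
    · intro γ
      by_cases hγ : γ ∈ mkS (4 * h - K * |t|)
      · have hγ2 : γ + ((2 * π : ℝ) : ℂ) ∈ mkS (4 * h - K * |t|) := mkS_per hγ _
        refine tendsto_nhds_unique (mk_lim_tendsto B E hK ht hγ2).1 ?_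
        refine ((mk_lim_tendsto B E hK ht hγ).1.add_const _).congr fun n => ?_
        exact (((mk_it_cone B E hK n).cl t ht).per γ).symm
      · have hγ2 : γ + ((2 * π : ℝ) : ℂ) ∉ mkS (4 * h - K * |t|) := by
          simpa [mkS] using hγ
        unfold mkLim
        rw [if_neg hγ, if_neg hγ2]
        exact B.per γ
    · intro γ hγ
      exact le_of_tendsto' ((mk_lim_tendsto B E hK ht hγ).1.sub_const (Zs γ)).norm
        fun n => ((mk_it_cone B E hK n).cl t ht).close γ hγ
  · intro t ht γ hγ
    have hγ' : |γ.im| < 4 * h - K * |t| := hγ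
    have hu : TendstoUniformlyOn (fun n τ => mkIt h Zs n τ γ) (fun τ => mkLim h K Zs τ γ)
        Filter.atTop (Icc (-|t|) |t|) := by
      rw [Metric.tendstoUniformlyOn_iff]
      intro e he'
      filter_upwards [(mk_geo (2 * ε) (1 / √(4 * h - K * |t| - |γ.im|))).eventually_lt_const he']
        with n hn τ hτ
      have hτ' : |τ| ≤ |t| := abs_le.mpr hτ
      have hKt := mul_le_mul_of_nonneg_left hτ' hK.k0.le
      rw [dist_comm, dist_eq_norm]
      refine ((mk_lim_tendsto B E hK (mk_cone_lt hK.k0 ht hτ')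
        (mk_cone_sub hK.k0 hτ' hγ)).2 n).trans_lt (lt_of_le_of_lt ?_ hn)
      refine mul_le_mul_of_nonneg_left ?_ (by positivity)
      refine one_div_le_one_div_of_le (Real.sqrt_pos.mpr (by linarith)) (Real.sqrt_le_sqrt ?_)
      linarith
    exact hu.continuousOn (Filter.Frequently.of_forall fun n =>
      (mk_it_cone B E hK n).cont t ht γ hγ)
  · intro t ht γ hγ
    have h1 := ((hlu t ht).deriv (Filter.Eventually.of_forall fun n =>
        ((mk_it_cone B E hK n).cl t ht).hol) (mkS_open _)).tendsto_at hγ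
    exact le_of_tendsto' h1.norm fun n => (mk_it_cone B E hK n).dbd t ht γ hγ

lemma mk_lim_eq (B : MkBase h c M Zs) (E : MkSm h c ε) (hK : MkK h c M ε K) :
    ∀ t, K * |t| < h → ∀ γ ∈ mkS (4 * h - K * |t|),
      mkLim h K Zs t γ = mkPhi h Zs (mkLim h K Zs) t γ := by
  intro t ht γ hγ
  have he := E.e0
  refine tendsto_nhds_unique
    ((Filter.tendsto_add_atTop_iff_nat 1).mpr (mk_lim_tendsto B E hK ht hγ).1) ?_
  rw [tendsto_iff_norm_sub_tendsto_zero]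
  refine squeeze_zero (fun _ => norm_nonneg _) (fun n => ?_)
    (mk_geo (2 * ε / 2) (1 / √(4 * h - K * |t| - |γ.im|)))
  have := mk_phi_contract B E hK (mk_it_cone B E hK n) (mk_lim_cone B E hK)
    (Δ := 2 * ε * (1 / 2) ^ n) (by positivity)
    (fun t ht γ hγ => (mk_lim_tendsto B E hK ht hγ).2 n) t ht γ hγ
  refine this.trans (le_of_eq ?_)
  ring

end

lemma mk_exists {r₀ : ℝ} (hr₀ : 0 < r₀) {Z₀ : ℂ → ℂ × ℂ}
    (hol : ∀ w ∈ stripC r₀, DifferentiableAt ℂ Z₀ w) (hper : cPerCurve Z₀)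
    (hac : cArcChordOn Z₀ (stripC r₀)) :
    ∃ T > 0, ∃ r : ℝ, 0 < r ∧ r < r₀ ∧ ∃ Z : ℝ → ℂ → ℂ × ℂ, IsCKSol r T Z₀ Z := by
  obtain ⟨h, c, M, hH, B⟩ := mk_base (H := r₀ / 8) hr₀ (by linarith) hol hper hac
  have hh := B.hpos
  have hcp := B.cpos
  obtain ⟨ε, E⟩ := mk_sm hh B.cpos
  obtain ⟨K, _, hK⟩ := mk_K h c M E.e0 0
  have hk0 := hK.k0
  have HC := mk_lim_cone B E hK
  have HE := mk_lim_eq B E hK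
  set Z := mkLim h K Z₀
  have hT : 0 < h / (2 * K) := by positivity
  have ht1 : ∀ t ∈ Icc (-(h / (2 * K))) (h / (2 * K)), K * |t| ≤ h / 2 := by
    intro t ht
    have : |t| ≤ h / (2 * K) := abs_le.mpr ht
    calc K * |t| ≤ K * (h / (2 * K)) := by gcongr
      _ = h / 2 := by field_simp
  have ht2 : ∀ t ∈ Icc (-(h / (2 * K))) (h / (2 * K)), K * |t| < h := fun t ht => by
    linarith [ht1 t ht]
  have hs : ∀ t ∈ Icc (-(h / (2 * K))) (h / (2 * K)), stripC (h / 2) ⊆ mkS (4 * h - K * |t|) :=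
    fun t ht => strip_sub_mkS (by linarith [ht1 t ht])
  have hs5 : stripC (h / 2) ⊆ mkS (5 * h / 2) := strip_sub_mkS (by linarith)
  refine ⟨h / (2 * K), hT, h / 2, by linarith, by linarith, Z, ?_, ?_, ?_, ?_, ?_, ?_⟩
  · intro t ht w hw
    exact (HC.cl t (ht2 t ht)).hol.differentiableAt ((mkS_open _).mem_nhds (hs t ht hw))
  · intro t ht
    exact (HC.cl t (ht2 t ht)).per
  · intro γ hγ
    have hTm : h / (2 * K) ∈ Icc (-(h / (2 * K))) (h / (2 * K)) := ⟨by linarith, le_rfl⟩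
    have := HC.cont (h / (2 * K)) (ht2 _ hTm) γ (hs _ hTm hγ)
    rwa [abs_of_pos hT] at this
  · intro γ hγ
    have h0 : (0:ℝ) ∈ Icc (-(h / (2 * K))) (h / (2 * K)) := ⟨by linarith, hT.le⟩
    rw [HE 0 (ht2 0 h0) γ (hs 0 h0 hγ)]
    simp [mkPhi]
  · intro t ht γ hγ
    have hγ' : |γ.im| ≤ h / 2 := hγ
    have hcl := HC.cl t (ht2 t ht)
    have e : mkF h (Z t) γ = cMuskatRHS (Z t) γ :=
      mkF_rhs (ρ := 5 * h / 2) (c' := c / 2) hh (by linarith) (by linarith)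
        (hcl.hol.mono (mkS_mono (by linarith [hcl.d3]))) hcl.per (mk_cl_ac B E hcl) (hs5 hγ)
    rw [← e]
    have htp : 0 < 3 * h / (4 * K) := by positivity
    have htK : K * |3 * h / (4 * K)| = 3 * h / 4 := by
      rw [abs_of_pos htp]; field_simp
    have hcont := mk_cone_Fcont B E hK HC (t := 3 * h / (4 * K)) (γ := γ) (by rw [htK]; linarith)
      (by change |γ.im| < _; rw [htK]; linarith)
    rw [abs_of_pos htp] at hcont
    have hlt : h / (2 * K) < 3 * h / (4 * K) := by
      rw [div_lt_div_iff₀ (by positivity) (by positivity)]; nlinarith [mul_pos hh hk0]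
    have htI : t ∈ Ioo (-(3 * h / (4 * K))) (3 * h / (4 * K)) := by
      constructor <;> linarith [ht.1, ht.2]
    have hco := hcont.mono Ioo_subset_Icc_self
    have hca : ContinuousAt (fun τ => mkF h (Z τ) γ) t := hco.continuousAt (isOpen_Ioo.mem_nhds htI)
    have hd : HasDerivAt (fun s => ∫ τ in (0:ℝ)..s, mkF h (Z τ) γ) (mkF h (Z t) γ) t :=
      intervalIntegral.integral_hasDerivAt_right
        (mk_cone_ii B E hK HC (ht2 t ht) (hs t ht hγ))
        (hco.stronglyMeasurableAtFilter isOpen_Ioo t htI) hca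
    have hd2 : HasDerivWithinAt (mkPhi h Z₀ Z · γ) (mkF h (Z t) γ)
        (Icc (-(h / (2 * K))) (h / (2 * K))) t := (hd.const_add (Z₀ γ)).hasDerivWithinAt
    exact hd2.congr (fun s hs' => HE s (ht2 s hs') γ (hs s hs' hγ)) (HE t (ht2 t ht) γ (hs t ht hγ))
  · intro t ht
    have hcl := HC.cl t (ht2 t ht)
    exact mk_ac_arcchord (ρ := 5 * h / 2) (c := c / 2) (by linarith) (by linarith) hcl.per
      (mk_cl_ac B E hcl)

end

section
/-- one of the two holomorphic combinations of a solution -/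
structure MkP (r : ℝ) (P : ℂ → ℂ) : Prop where
  hol : DifferentiableOn ℂ P (mkS r)
  per : ∀ γ : ℂ, ∀ n : ℤ, P (γ + ((2 * π * n : ℝ) : ℂ)) = P γ + ((2 * π * n : ℝ) : ℂ)
  avoid : ∀ γ ∈ mkS r, ∀ β : ℝ, distTZ β ≠ 0 → ∀ n : ℤ, P γ - P (γ - β) ≠ 2 * π * n

lemma mk_gron {u : ℂ → ℂ} {r K : ℝ} (hK : 0 < K)
    (hol : DifferentiableOn ℂ u (mkS r))
    (hd : ∀ γ ∈ mkS r, ‖deriv u γ‖ ≤ K * (1 + ‖u γ‖)) {γ : ℂ} (hγ : γ ∈ mkS r) {R : ℝ}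
    (hR0 : 0 < R) (hR : ‖γ‖ ≤ R) : ‖u γ‖ ≤ Real.exp (K * R) * (1 + ‖u 0‖) := by
  have hmem : ∀ s ∈ Icc (0:ℝ) 1, (s : ℂ) * γ ∈ mkS r := by
    intro s hs
    change |((s : ℂ) * γ).im| < r
    have : ((s : ℂ) * γ).im = s * γ.im := by simp
    rw [this, abs_mul, abs_of_nonneg hs.1]
    have h2 : |γ.im| < r := hγ
    nlinarith [abs_nonneg γ.im, hs.2]
  have hder : ∀ s ∈ Icc (0:ℝ) 1, HasDerivAt (fun s : ℝ => u ((s : ℂ) * γ))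
      (deriv u ((s:ℂ) * γ) * γ) s := by
    intro s hs
    have h1 := (hol.differentiableAt ((mkS_open r).mem_nhds (hmem s hs))).hasDerivAt
    have h2 : HasDerivAt (fun w : ℂ => w * γ) γ (s : ℂ) := by
      simpa using (hasDerivAt_id (s : ℂ)).mul_const γ
    exact (HasDerivAt.comp (s : ℂ) h1 h2).comp_ofReal
  have hg := norm_le_gronwallBound_of_norm_deriv_right_le (f := fun s : ℝ => u ((s : ℂ) * γ))
    (f' := fun s => deriv u ((s:ℂ) * γ) * γ) (δ := ‖u 0‖) (K := K * R) (ε := K * R) (a := 0) (b := 1)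
    (fun s hs => (hder s hs).continuousAt.continuousWithinAt)
    (fun s hs => (hder s (Ico_subset_Icc_self hs)).hasDerivWithinAt) (by simp)
    (fun s hs => by
      rw [norm_mul]
      have h1 := hd _ (hmem s (Ico_subset_Icc_self hs))
      calc _ ≤ (K * (1 + ‖u (s * γ)‖)) * R := by gcongr
        _ = _ := by ring) 1 (by simp)
  have hKR : K * R ≠ 0 := by positivity
  rw [gronwallBound_of_K_ne_0 hKR] at hg
  simp only [Complex.ofReal_one, one_mul, sub_zero, mul_one, div_self hKR] at hg
  nlinarith [hg]

lemma mk_distTZ_zero {β : ℝ} (h : distTZ β = 0) : ∃ n : ℤ, β = 2 * π * n :=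
  ⟨round (β / (2 * π)), by unfold distTZ at h; linarith [abs_eq_zero.mp h]⟩

lemma mk_A {r : ℝ} (hr : 0 < r) : ∃ D : ℝ, 0 ≤ D ∧ ∀ P, MkP r P → ∀ β : ℝ, ∀ γ ∈ mkS (3 * r / 4),
    ‖P γ - P (γ - β)‖ ≤ D * (1 + ‖P 0 - P (-(β : ℂ))‖) := by
  have hpi := Real.pi_pos
  have hpi3 := Real.pi_gt_three
  refine ⟨2 * π * Real.exp (4608 / r * (π + r)), by positivity, fun P H β γ hγ => ?_⟩
  have hE : 1 ≤ Real.exp (4608 / r * (π + r)) := Real.one_le_exp (by positivity)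
  by_cases hβ : distTZ β = 0
  · obtain ⟨n, rfl⟩ := mk_distTZ_zero hβ
    have e : ∀ γ : ℂ, P γ - P (γ - ((2 * π * n : ℝ) : ℂ)) = ((2 * π * n : ℝ) : ℂ) := by
      intro γ
      have := H.per (γ - ((2 * π * n : ℝ) : ℂ)) n
      rw [sub_add_cancel] at this
      rw [this]; ring
    have e0 := e 0
    rw [zero_sub] at e0
    rw [e γ, e0]
    have hge : 1 ≤ 2 * π * Real.exp (4608 / r * (π + r)) := by nlinarith
    have hn0 := norm_nonneg ((2 * π * n : ℝ) : ℂ)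
    generalize ‖((2 * π * n : ℝ) : ℂ)‖ = q at hn0 ⊢
    nlinarith
  · set u : ℂ → ℂ := fun γ => (P γ - P (γ - β)) / (2 * π) with hu
    have hsub : ∀ w ∈ mkS r, w - (β : ℂ) ∈ mkS r := by
      intro w hw
      have := mkS_per hw (-β)
      simpa [sub_eq_add_neg] using this
    have huh : DifferentiableOn ℂ u (mkS r) := by
      refine DifferentiableOn.div_const (H.hol.sub ?_) _
      exact H.hol.comp (by fun_prop) hsub
    have h2pi : (2 * (π : ℂ)) ≠ 0 := by
      simp [hpi.ne']
    have h0 : ∀ w ∈ mkS r, ∀ n : ℤ, u w ≠ n := by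
      intro w hw n hn
      rw [hu] at hn
      simp only at hn
      rw [div_eq_iff h2pi] at hn
      exact H.avoid w hw β hβ n (by rw [hn]; ring)
    have hd : ∀ w ∈ mkS (3 * r / 4), ‖deriv u w‖ ≤ 4608 / r * (1 + ‖u w‖) := by
      intro w hw
      have hb : Metric.ball w (r / 4) ⊆ mkS r := mkS_ball (by
        have : |w.im| < 3 * r / 4 := hw
        linarith)
      have := mk_landau (by linarith : 0 < r / 4) (huh.mono hb) (fun z hz => h0 z (hb hz))
      convert this using 2
      field_simp; norm_num
    obtain ⟨n, hn⟩ := mk_reduce γ.re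
    set γ' := γ + ((2 * π * n : ℝ) : ℂ) with hγ'
    have hm : γ' ∈ mkS (3 * r / 4) := mkS_per hγ _
    have hnorm : ‖γ'‖ ≤ π + r := by
      refine (Complex.norm_le_abs_re_add_abs_im γ').trans ?_
      have h1 : |γ'.im| < 3 * r / 4 := hm
      have h2 : γ'.re = γ.re + 2 * π * n := by simp [hγ']
      rw [h2]; linarith
    have hg := mk_gron (by positivity) (huh.mono (mkS_mono (by linarith))) hd hm
      (by positivity) hnorm
    have e1 : u γ' = u γ := by
      simp only [hu]
      rw [hγ', H.per]
      have : γ + ((2 * π * n : ℝ) : ℂ) - β = (γ - β) + ((2 * π * n : ℝ) : ℂ) := by ring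
      rw [this, H.per]
      ring
    rw [e1] at hg
    have e2 : ∀ w, P w - P (w - β) = 2 * π * u w := by
      intro w; simp only [hu]; field_simp
    have hn2 : ‖(2 * (π : ℂ))‖ = 2 * π := by
      rw [norm_mul]; simp [abs_of_pos hpi]
    have e3 := e2 0
    rw [zero_sub] at e3
    rw [e2, e3, norm_mul (2 * (π:ℂ)), norm_mul (2 * (π:ℂ)), hn2]
    have : 2 * π * ‖u γ‖ ≤ 2 * π * (Real.exp (4608 / r * (π + r)) * (1 + ‖u 0‖)) := by gcongr
    refine this.trans ?_
    rw [← mul_assoc]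
    gcongr
    nlinarith [norm_nonneg (u 0)]

/-- from a bound on an interval of increments to a derivative bound -/
lemma mk_C {r δ D : ℝ} (hr : 0 < r) (hδ : 0 < δ) (hD : 0 ≤ D) :
    ∃ L, ∀ P, MkP r P → (∀ x ∈ Icc 0 δ, ∀ γ ∈ mkS (3 * r / 4), ‖P γ - P (γ - (x : ℝ))‖ ≤ D) →
      ∀ γ ∈ mkS (r / 2), ‖deriv P γ‖ ≤ L := by
  have hpi := Real.pi_pos
  obtain ⟨N, hN⟩ := exists_nat_ge (2 * π / δ)
  have hN' : 2 * π ≤ N * δ := by rwa [div_le_iff₀ hδ] at hN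
  refine ⟨1 + 2 * (N * D) / (r / 4), fun P H hb γ hγ => ?_⟩
  have hsub : ∀ {ρ : ℝ} (x : ℝ), ∀ w ∈ mkS ρ, w - (x : ℂ) ∈ mkS ρ := by
    intro ρ x w hw
    have := mkS_per hw (-x)
    simpa [sub_eq_add_neg] using this
  have hit : ∀ k : ℕ, ∀ x ∈ Icc (0:ℝ) (k * δ), ∀ γ ∈ mkS (3 * r / 4), ‖P γ - P (γ - (x : ℝ))‖ ≤ k * D := by
    intro k
    induction k with
    | zero =>
      intro x hx γ hγ
      have : x = 0 := by simpa using hx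
      subst this; simp
    | succ k ih =>
      intro x hx γ hγ
      have hx2 := hx.2
      push_cast at hx2 ⊢
      rcases le_total x (k * δ) with h | h
      · linarith [ih x ⟨hx.1, h⟩ γ hγ]
      · have h1 := ih (k * δ) ⟨by positivity, le_rfl⟩ γ hγ
        have h2 := hb (x - k * δ) ⟨by linarith, by linarith⟩ _ (hsub (k * δ) γ hγ)
        have e : γ - ((k * δ : ℝ) : ℂ) - ((x - k * δ : ℝ) : ℂ) = γ - (x : ℂ) := by
          push_cast; ring
        rw [e] at h2
        have := norm_sub_le_norm_sub_add_norm_sub (P γ) (P (γ - ((k * δ : ℝ) : ℂ))) (P (γ - x))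
        linarith
  have hdiff : ∀ w ∈ mkS r, HasDerivAt P (deriv P w) w := fun w hw =>
    (H.hol.differentiableAt ((mkS_open r).mem_nhds hw)).hasDerivAt
  have hγr : γ ∈ mkS r := mkS_mono (by linarith) hγ
  have hd : ∀ x ∈ Icc (0:ℝ) (2 * π), ‖deriv P γ - deriv P (γ - x)‖ ≤ 2 * (N * D) / (r / 4) := by
    intro x hx
    have hball : Metric.ball γ (r / 4) ⊆ mkS (3 * r / 4) := mkS_ball (by
        have : |γ.im| < r / 2 := hγ
        linarith)
    have h1 : HasDerivAt (fun w => P w - P (w - x)) (deriv P γ - deriv P (γ - x)) γ := by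
      refine (hdiff γ hγr).sub ?_
      have := (hdiff (γ - x) (hsub x γ hγr))
      exact this.comp_sub_const γ (x : ℂ)
    rw [← h1.deriv]
    refine mk_cauchy (by linarith) ?_ (fun z hz => hit N x ⟨hx.1, hx.2.trans hN'⟩ z (hball hz))
    have hol' := H.hol.mono (mkS_mono (by linarith : 3 * r / 4 ≤ r))
    exact (hol'.sub (hol'.comp (by fun_prop) (hsub x))).mono hball
  have hintg : ∫ x in (0:ℝ)..(2 * π), deriv P (γ - x) = 2 * π := by
    have hd2 : ∀ x ∈ uIcc 0 (2 * π), HasDerivAt (fun x : ℝ => - P (γ - x)) (deriv P (γ - x)) x := by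
      intro x _
      have h1 := hdiff (γ - x) (hsub x γ hγr)
      have h2 : HasDerivAt (fun w : ℂ => γ - w) (-1) (x : ℂ) := by
        simpa using (hasDerivAt_id (x : ℂ)).const_sub γ
      have := (HasDerivAt.comp (x : ℂ) h1 h2).neg.comp_ofReal
      simpa using this
    have hc : ContinuousOn (fun x : ℝ => deriv P (γ - x)) (uIcc 0 (2 * π)) := by
      have : ContinuousOn (deriv P) (mkS r) := (H.hol.deriv (mkS_open r)).continuousOn
      exact this.comp (by fun_prop) (fun x _ => hsub x γ hγr)
    rw [intervalIntegral.integral_eq_sub_of_hasDerivAt hd2 hc.intervalIntegrable]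
    have := H.per (γ - ((2 * π : ℝ) : ℂ)) 1
    have e : ((2 * π * (1:ℤ) : ℝ) : ℂ) = ((2 * π : ℝ) : ℂ) := by norm_num
    rw [e, sub_add_cancel] at this
    simp only [Complex.ofReal_zero, sub_zero]
    rw [this]; push_cast; ring
  have hci : IntervalIntegrable (fun x : ℝ => deriv P (γ - x)) volume 0 (2 * π) := by
    have : ContinuousOn (deriv P) (mkS r) := (H.hol.deriv (mkS_open r)).continuousOn
    have hc : ContinuousOn (fun x : ℝ => deriv P (γ - x)) (uIcc 0 (2 * π)) :=
      this.comp (by fun_prop) (fun x _ => hsub x γ hγr)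
    exact hc.intervalIntegrable
  have hI : ∫ x in (0:ℝ)..(2 * π), (deriv P γ - deriv P (γ - x)) = 2 * π * (deriv P γ - 1) := by
    rw [intervalIntegral.integral_sub (by simp) hci, hintg]
    simp; ring
  have hle := intervalIntegral.norm_integral_le_of_norm_le_const
    (f := fun x : ℝ => deriv P γ - deriv P (γ - x)) (a := 0) (b := 2 * π)
    (C := 2 * (N * D) / (r / 4)) (fun x hx => by
      rw [uIoc_of_le (by positivity)] at hx
      exact hd x ⟨hx.1.le, hx.2⟩)
  rw [hI, norm_mul, sub_zero, abs_of_pos (by positivity : 0 < 2 * π)] at hle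
  have hn2 : ‖(2 * (π : ℂ))‖ = 2 * π := by
    rw [norm_mul]; simp [abs_of_pos hpi]
  rw [hn2, mul_comm] at hle
  have h3 := le_of_mul_le_mul_right hle (by positivity)
  have h4 := norm_add_le (deriv P γ - 1) 1
  rw [sub_add_cancel, norm_one] at h4
  linarith

/-- uniform in time derivative bound for a family -/
lemma mk_unif {r : ℝ} (hr : 0 < r) {s : Set ℝ} (hs : IsCompact s) {P : ℝ → ℂ → ℂ}
    (H : ∀ t ∈ s, MkP r (P t)) (hc : ∀ x : ℝ, ContinuousOn (fun t => P t x) s) :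
    ∃ L, ∀ t ∈ s, ∀ γ ∈ mkS (r / 2), ‖deriv (P t) γ‖ ≤ L := by
  obtain ⟨D, hD, hA⟩ := mk_A hr
  have hreal : ∀ x : ℝ, (x : ℂ) ∈ mkS r := by
    intro x; simp [mkS, hr]
  obtain ⟨n, hn⟩ := nonempty_interior_of_iUnion_of_closed
    (f := fun n : ℕ => {β : ℝ | ∀ t ∈ s, ‖P t 0 - P t (-(β : ℂ))‖ ≤ n}) (by
      intro n
      have : {β : ℝ | ∀ t ∈ s, ‖P t 0 - P t (-(β : ℂ))‖ ≤ n} =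
        ⋂ t ∈ s, {β : ℝ | ‖P t 0 - P t (-(β : ℂ))‖ ≤ n} := by ext; simp
      rw [this]
      refine isClosed_biInter fun t ht => isClosed_le ?_ continuous_const
      refine (continuous_const.sub ?_).norm
      have h1 : Continuous (fun β : ℝ => -(β : ℂ)) := by fun_prop
      have := (H t ht).hol.continuousOn.comp_continuous h1 (fun β => by
        have := hreal (-β); simpa using this)
      exact this) (by
      rw [eq_univ_iff_forall]
      intro β
      have h1 : ContinuousOn (fun t => P t 0 - P t (-(β : ℂ))) s := by
        have a := hc 0
        have b := hc (-β)
        push_cast at a b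
        exact a.sub b
      obtain ⟨C, hC⟩ := hs.exists_bound_of_continuousOn h1
      obtain ⟨n, hn⟩ := exists_nat_ge C
      exact mem_iUnion.mpr ⟨n, fun t ht => (hC t ht).trans hn⟩)
  obtain ⟨β₀, hβ₀⟩ := hn
  obtain ⟨δ, hδ, hball⟩ := Metric.isOpen_iff.mp isOpen_interior β₀ hβ₀
  have hball' : ∀ β, |β - β₀| < δ → ∀ t ∈ s, ‖P t 0 - P t (-(β : ℂ))‖ ≤ n := fun β hβ =>
    interior_subset (hball (by rwa [Metric.mem_ball, Real.dist_eq]))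
  obtain ⟨L, hL⟩ := mk_C (r := r) (δ := δ / 2) (D := 2 * (D * (1 + n))) hr (by linarith) (by positivity)
  refine ⟨L, fun t ht => hL (P t) (H t ht) ?_⟩
  intro x hx γ hγ
  have hγ' : γ + (β₀ : ℂ) ∈ mkS (3 * r / 4) := mkS_per hγ β₀
  have key : ∀ β, |β - β₀| < δ → ‖P t (γ + β₀) - P t (γ + β₀ - β)‖ ≤ D * (1 + n) := fun β hβ => by
    refine (hA _ (H t ht) β _ hγ').trans ?_
    gcongr
    exact hball' β hβ t ht
  have k1 := key β₀ (by simpa using hδ)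
  have k2 := key (β₀ + x) (by
    rw [add_sub_cancel_left, abs_of_nonneg hx.1]; linarith [hx.2])
  have e1 : γ + β₀ - β₀ = γ := by ring
  have e2 : γ + β₀ - ((β₀ + x : ℝ) : ℂ) = γ - x := by push_cast; ring
  rw [e1, norm_sub_rev] at k1
  rw [e2] at k2
  have := norm_sub_le_norm_sub_add_norm_sub (P t γ) (P t (γ + β₀)) (P t (γ - x))
  linarith

end

section
lemma mk_sol_P {r : ℝ} {Z : ℂ → ℂ × ℂ} (hol : ∀ w ∈ stripC r, DifferentiableAt ℂ Z w)
    (hper : cPerCurve Z) (hac : cArcChordOn Z (stripC r)) {σ : ℂ} (hσ : σ ^ 2 = -1) :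
    MkP r (fun γ => mkL σ (Z γ)) := by
  refine ⟨mkL_differentiableOn σ fun w hw => (hol w (mkS_sub_strip r hw)).differentiableWithinAt, ?_, ?_⟩
  · intro γ n
    rw [mk_per_int hper]
    simp [mkL]; ring
  · intro γ hγ β hβ n hn
    obtain ⟨C, hC, hac⟩ := hac
    have h1 := hac γ (mkS_sub_strip r hγ) β
    have h2 : cQden Z γ β = 0 := by
      rw [mk_cQden Z γ β hσ, mkL_sub, hn]
      have : (2 * (π : ℂ) * n) / 2 = n * π := by ring
      rw [this, Complex.sin_int_mul_pi]; ring
    rw [h2] at h1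
    simp only [mul_zero, norm_zero] at h1
    exact hβ (pow_eq_zero_iff (two_ne_zero)|>.mp (le_antisymm h1 (sq_nonneg _)))

lemma mkL_both (a : ℂ × ℂ) {L : ℝ} (h1 : ‖mkL Complex.I a‖ ≤ L) (h2 : ‖mkL (-Complex.I) a‖ ≤ L) :
    ‖a‖ ≤ L := by
  have e1 : a.1 = (mkL Complex.I a + mkL (-Complex.I) a) / 2 := by simp [mkL]; ring
  have e2 : a.2 = (mkL Complex.I a - mkL (-Complex.I) a) / (2 * Complex.I) := by
    simp [mkL]; field_simp; ring
  have n1 := norm_add_le (mkL Complex.I a) (mkL (-Complex.I) a)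
  have n2 := norm_sub_le (mkL Complex.I a) (mkL (-Complex.I) a)
  rw [Prod.norm_def]
  apply max_le
  · rw [e1, norm_div, mk_two]; linarith
  · rw [e2, norm_div, norm_mul, mk_two, Complex.norm_I]; linarith

lemma mk_sol_lip {r T : ℝ} (hr : 0 < r) {Z₀ : ℂ → ℂ × ℂ} {Y : ℝ → ℂ → ℂ × ℂ}
    (H : IsCKSol r T Z₀ Y) :
    ∃ L, 0 ≤ L ∧ ∀ t ∈ Icc (-T) T, ∀ γ ∈ mkS (r / 2), ‖deriv (Y t) γ‖ ≤ L := by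
  obtain ⟨hol, per, cont, _, _, ac⟩ := H
  have key : ∀ σ : ℂ, σ ^ 2 = -1 → ∃ L, ∀ t ∈ Icc (-T) T, ∀ γ ∈ mkS (r / 2),
      ‖mkL σ (deriv (Y t) γ)‖ ≤ L := by
    intro σ hσ
    obtain ⟨L, hL⟩ := mk_unif hr (isCompact_Icc (a := -T) (b := T))
      (P := fun t γ => mkL σ (Y t γ)) (fun t ht => mk_sol_P (hol t ht) (per t ht) (ac t ht) hσ)
      (fun x => (mkL_continuous σ).comp_continuousOn (cont x (by simp [stripC, hr.le])))
    refine ⟨L, fun t ht γ hγ => ?_⟩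
    have h1 := hL t ht γ hγ
    have hγ' : |γ.im| < r / 2 := hγ
    rwa [(mkL_hasDerivAt σ (hol t ht γ (by change |γ.im| ≤ r; linarith)).hasDerivAt).deriv] at h1
  obtain ⟨L1, h1⟩ := key Complex.I (by simp)
  obtain ⟨L2, h2⟩ := key (-Complex.I) (by simp)
  exact ⟨max 0 (max L1 L2), le_max_left _ _, fun t ht γ hγ => mkL_both _
    ((h1 t ht γ hγ).trans ((le_max_left _ _).trans (le_max_right _ _)))
    ((h2 t ht γ hγ).trans ((le_max_right _ _).trans (le_max_right _ _)))⟩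

lemma mk_sol_close {r T : ℝ} (hr : 0 < r) {Z₀ : ℂ → ℂ × ℂ} {Y : ℝ → ℂ → ℂ × ℂ}
    (H : IsCKSol r T Z₀ Y) {a : ℝ} (ha : a ∈ Ioo (-T) T) {η : ℝ} (hη : 0 < η) :
    ∀ᶠ t in nhds a, t ∈ Ioo (-T) T ∧ ∀ γ ∈ mkS (r / 2), ‖Y t γ - Y a γ‖ ≤ η := by
  obtain ⟨L, hL0, hL⟩ := mk_sol_lip hr H
  obtain ⟨hol, per, cont, _, _, ac⟩ := H
  have hcomp : IsCompact (Icc (-π) π ×ℂ Icc (-(r / 2)) (r / 2)) := isCompact_Icc.reProdIm isCompact_Icc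
  have he : 0 < η / (6 * (L + 1)) := by positivity
  obtain ⟨F, hF, hfin, hcov⟩ := hcomp.finite_cover_balls he
  have hopen : ∀ᶠ t in nhds a, t ∈ Ioo (-T) T := isOpen_Ioo.mem_nhds ha
  have hFs : ∀ c ∈ F, c ∈ stripC (r / 2) := by
    intro c hc
    have := hF hc
    rw [Complex.mem_reProdIm] at this
    exact abs_le.mpr this.2
  have hev : ∀ᶠ t in nhds a, ∀ c ∈ F, ‖Y t c - Y a c‖ ≤ η / 3 := by
    rw [Filter.eventually_all_finite hfin]
    intro c hc
    have hcr : |c.im| ≤ r / 2 := hFs c hc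
    have h1 : ContinuousAt (fun t => Y t c) a :=
      (cont c (by change |c.im| ≤ r; linarith)).continuousAt (Icc_mem_nhds ha.1 ha.2)
    have h2 := Metric.continuousAt_iff.mp h1 (η / 3) (by linarith)
    obtain ⟨δ, hδ, h3⟩ := h2
    filter_upwards [Metric.ball_mem_nhds a hδ] with t ht
    have := h3 ht
    rw [dist_eq_norm] at this
    exact this.le
  have hclos : ∀ t ∈ Icc (-T) T, ∀ x ∈ mkS (r / 2), ∀ y ∈ stripC (r / 2),
      ‖Y t x - Y t y‖ ≤ L * ‖x - y‖ := by
    intro t ht x hx y hy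
    have hho : ∀ w ∈ mkS (r / 2), DifferentiableAt ℂ (Y t) w := by
      intro w hw
      have : |w.im| < r / 2 := hw
      exact hol t ht w (by change |w.im| ≤ r; linarith)
    have hy' : |y.im| ≤ r / 2 := hy
    have hx' : |x.im| < r / 2 := hx
    -- approximate y by points s * y
    have hlim : Filter.Tendsto (fun n : ℕ => ((1 - 1 / ((n:ℝ) + 1) : ℝ) : ℂ) * y) Filter.atTop (nhds y) := by
      have h1 : Filter.Tendsto (fun n : ℕ => (1 - 1 / ((n:ℝ) + 1) : ℝ)) Filter.atTop (nhds (1 - 0)) :=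
        tendsto_const_nhds.sub tendsto_one_div_add_atTop_nhds_zero_nat
      rw [sub_zero] at h1
      have h2 := ((Complex.continuous_ofReal.tendsto 1).comp h1).mul_const y
      simpa using h2
    have hcy : ContinuousAt (Y t) y := (hol t ht y (by change |y.im| ≤ r; linarith)).continuousAt
    have hl1 : Filter.Tendsto (fun n : ℕ => ‖Y t x - Y t (((1 - 1 / ((n:ℝ) + 1) : ℝ) : ℂ) * y)‖)
        Filter.atTop (nhds ‖Y t x - Y t y‖) := (tendsto_const_nhds.sub (hcy.tendsto.comp hlim)).norm
    have hl2 : Filter.Tendsto (fun n : ℕ => L * ‖x - (((1 - 1 / ((n:ℝ) + 1) : ℝ) : ℂ) * y)‖)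
        Filter.atTop (nhds (L * ‖x - y‖)) := ((tendsto_const_nhds.sub hlim).norm).const_mul L
    refine le_of_tendsto_of_tendsto' hl1 hl2 fun n => ?_
    refine mk_lip_strip (fun w hw => (hho w hw).differentiableWithinAt) (hL t ht) hx ?_
    change |((((1 - 1 / ((n:ℝ) + 1) : ℝ) : ℂ) * y)).im| < r / 2
    rw [Complex.im_ofReal_mul, abs_mul]
    have hn : (0:ℝ) < 1 / ((n:ℝ) + 1) := by positivity
    have hn1 : 1 / ((n:ℝ) + 1) ≤ 1 := by
      rw [div_le_one (by positivity)]; linarith [Nat.cast_nonneg (α := ℝ) n]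
    rw [abs_of_nonneg (by linarith)]
    nlinarith [abs_nonneg y.im]
  filter_upwards [hopen, hev] with t ht hc
  refine ⟨ht, fun γ hγ => ?_⟩
  obtain ⟨n, hn⟩ := mk_reduce γ.re
  set γ' := γ + ((2 * π * n : ℝ) : ℂ) with hγ'
  have hm : γ' ∈ mkS (r / 2) := mkS_per hγ _
  have e : Y t γ - Y a γ = Y t γ' - Y a γ' := by
    rw [hγ', mk_per_int (per t (Ioo_subset_Icc_self ht)), mk_per_int (per a (Ioo_subset_Icc_self ha))]
    abel
  have hmem : γ' ∈ (Icc (-π) π ×ℂ Icc (-(r / 2)) (r / 2)) := by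
    rw [Complex.mem_reProdIm]
    refine ⟨abs_le.mp ?_, abs_le.mp (le_of_lt hm)⟩
    have h2 : γ'.re = γ.re + 2 * π * n := by simp [hγ']
    rwa [h2]
  obtain ⟨c, hcF, hcb⟩ := mem_iUnion₂.mp (hcov hmem)
  rw [mem_ball_iff_norm] at hcb
  have b1 := hclos t (Ioo_subset_Icc_self ht) γ' hm c (hFs c hcF)
  have b2 := hclos a (Ioo_subset_Icc_self ha) γ' hm c (hFs c hcF)
  have b3 := hc c hcF
  have b4 : L * ‖γ' - c‖ ≤ η / 6 := by
    calc L * ‖γ' - c‖ ≤ (L + 1) * (η / (6 * (L + 1))) := by gcongr; linarith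
      _ = η / 6 := by field_simp
  rw [e]
  have : Y t γ' - Y a γ' = (Y t γ' - Y t c) + (Y t c - Y a c) - (Y a γ' - Y a c) := by abel
  rw [this]
  have c1 := norm_sub_le ((Y t γ' - Y t c) + (Y t c - Y a c)) (Y a γ' - Y a c)
  have c2 := norm_add_le (Y t γ' - Y t c) (Y t c - Y a c)
  linarith

end

section
/-- a solution near a reference time lies in the cone class and satisfies the fixed point equation -/
lemma mk_sol_cone {r T : ℝ} (hr : 0 < r) {Z₀ Zs : ℂ → ℂ × ℂ} {Y : ℝ → ℂ → ℂ × ℂ}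
    (H : IsCKSol r T Z₀ Y) {a h c M ε K η τ : ℝ} (B : MkBase h c M Zs) (E : MkSm h c ε)
    (hK : MkK h c M ε K) (hh : 4 * h ≤ r / 4)
    (hη1 : η ≤ ε) (hη2 : 2 * η / (r / 4) ≤ 1 / 72) (hη3 : 2 * η / (r / 4) ≤ c / 8)
    (hKτ : h / τ ≤ K) (hτ : 0 < τ) (hY0 : ∀ γ ∈ stripC r, Y a γ = Zs γ)
    (hcl : ∀ t, |t| < τ → a + t ∈ Ioo (-T) T ∧ ∀ γ ∈ mkS (r / 2), ‖Y (a + t) γ - Y a γ‖ ≤ η) :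
    MkCone h ε K (M + 1) Zs (fun t => Y (a + t)) ∧
    ∀ t, K * |t| < h → ∀ γ ∈ mkS (4 * h - K * |t|),
      Y (a + t) γ = mkPhi h Zs (fun t => Y (a + t)) t γ := by
  obtain ⟨hol, per, cont, _, hde, ac⟩ := H
  have hh0 := B.hpos
  have hk0 := hK.k0
  have hM := B.Mnn
  have htτ : ∀ t, K * |t| < h → |t| < τ := by
    intro t ht
    rw [div_le_iff₀ hτ] at hKτ
    by_contra hcon
    push Not at hcon
    nlinarith
  have hsr : ∀ {ρ : ℝ}, ρ ≤ r → mkS ρ ⊆ stripC r := fun hρ w hw => le_of_lt (lt_of_lt_of_le hw hρ)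
  have hdo : ∀ t, |t| < τ → ∀ ρ ≤ r, DifferentiableOn ℂ (Y (a + t)) (mkS ρ) := fun t ht ρ hρ w hw =>
    (hol _ (Ioo_subset_Icc_self (hcl t ht).1) w (hsr hρ hw)).differentiableWithinAt
  have ha0 : a ∈ Icc (-T) T := by
    have := (hcl 0 (by simpa using hτ)).1
    rw [add_zero] at this
    exact Ioo_subset_Icc_self this
  have hdZs : ∀ w ∈ mkS r, HasDerivAt Zs (deriv (Y a) w) w := by
    intro w hw
    have h1 := (hol a ha0 w (hsr le_rfl hw)).hasDerivAt
    refine h1.congr_of_eventuallyEq ?_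
    filter_upwards [(mkS_open r).mem_nhds hw] with x hx
    exact (hY0 x (hsr le_rfl hx)).symm
  have hderiv : ∀ t, |t| < τ → ∀ γ ∈ mkS (4 * h), ‖deriv (Y (a + t)) γ - deriv Zs γ‖ ≤ 2 * η / (r / 4) := by
    intro t ht γ hγ
    have hγ' : |γ.im| < 4 * h := hγ
    have hball : Metric.ball γ (r / 4) ⊆ mkS (r / 2) := mkS_ball (by linarith)
    have hγr : γ ∈ mkS r := mkS_mono (by linarith) hγ
    rw [(hdZs γ hγr).deriv]
    have h1 : HasDerivAt (fun w => Y (a + t) w - Y a w) (deriv (Y (a + t)) γ - deriv (Y a) γ) γ :=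
      (hol _ (Ioo_subset_Icc_self (hcl t ht).1) γ (hsr le_rfl hγr)).hasDerivAt.sub
        (hol _ ha0 γ (hsr le_rfl hγr)).hasDerivAt
    rw [← h1.deriv]
    refine mk_cauchy (by linarith) ?_ (fun z hz => (hcl t ht).2 z (hball hz))
    have h2 := hdo t ht (r / 2) (by linarith)
    have h3 := hdo 0 (by simpa using hτ) (r / 2) (by linarith)
    rw [add_zero] at h3
    exact (h2.sub h3).mono hball
  have hac : ∀ t, |t| < τ → MkAC (4 * h) (c / 2) (Y (a + t)) := fun t ht =>
    mk_ac_perturb B.h1 B.hol (hdo t ht _ (by linarith)) B.ac (hderiv t ht) hη2 hη3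
  have HC : MkCone h ε K (M + 1) Zs (fun t => Y (a + t)) := by
    refine ⟨?_, ?_, ?_⟩
    · intro t ht
      have htt := htτ t ht
      have hp : 0 ≤ K * |t| := by positivity
      refine ⟨by linarith, by linarith, hdo t htt _ (by linarith),
        per _ (Ioo_subset_Icc_self (hcl t htt).1), fun γ hγ => ?_⟩
      rw [← hY0 γ (hsr (by linarith) hγ)]
      exact ((hcl t htt).2 γ (mkS_mono (by linarith) hγ)).trans hη1
    · intro t ht γ hγ
      have htt := htτ t ht
      have hp : 0 ≤ K * |t| := by positivity
      refine (cont γ (hsr (by linarith) hγ)).comp (by fun_prop) ?_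
      intro s hs
      exact Ioo_subset_Icc_self (hcl s ((abs_le.mpr hs).trans_lt htt)).1
    · intro t ht γ hγ
      have htt := htτ t ht
      have hp : 0 ≤ K * |t| := by positivity
      have hγ4 : γ ∈ mkS (4 * h) := mkS_mono (by linarith) hγ
      have h1 := hderiv t htt γ hγ4
      have h2 := B.dbd γ hγ4
      have h3 : ‖deriv (Y (a + t)) γ‖ ≤ M + 1 := by
        have := norm_add_le (deriv (Y (a + t)) γ - deriv Zs γ) (deriv Zs γ)
        rw [sub_add_cancel] at this
        linarith
      have h4 : |γ.im| < 4 * h - K * |t| := hγ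
      have h5 : 1 ≤ 1 / √(4 * h - K * |t| - |γ.im|) := by
        rw [le_div_iff₀ (Real.sqrt_pos.mpr (by linarith)), one_mul]
        refine (Real.sqrt_le_sqrt (y := 1) ?_).trans (le_of_eq Real.sqrt_one)
        linarith [B.h1, abs_nonneg γ.im]
      exact h3.trans (le_mul_of_one_le_right (by linarith) h5)
  refine ⟨HC, fun t ht γ hγ => ?_⟩
  have htt := htτ t ht
  have hp : 0 ≤ K * |t| := by positivity
  have hγ4 : γ ∈ mkS (4 * h) := mkS_mono (by linarith) hγ
  have hγr : γ ∈ stripC r := hsr (by linarith) hγ4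
  have hD : ∀ s ∈ uIcc 0 t, HasDerivAt (fun s => Y (a + s) γ) (mkF h (Y (a + s)) γ) s := by
    intro s hs
    have hst : |s| < τ := (mk_uIcc_abs hs).trans_lt htt
    have hIo := (hcl s hst).1
    have e : mkF h (Y (a + s)) γ = cMuskatRHS (Y (a + s)) γ :=
      mkF_rhs hh0 (by linarith) (by linarith [B.cpos]) (hdo s hst _ (by linarith))
        (per _ (Ioo_subset_Icc_self hIo)) (hac s hst) hγ4
    rw [e]
    have h1 := (hde (a + s) (Ioo_subset_Icc_self hIo) γ hγr).hasDerivAt (Icc_mem_nhds hIo.1 hIo.2)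
    exact h1.comp_const_add a s
  have := intervalIntegral.integral_eq_sub_of_hasDerivAt hD (mk_cone_ii B E hK HC ht hγ)
  unfold mkPhi
  rw [this, add_zero, hY0 γ hγr]
  abel

lemma mk_identity {r ρ : ℝ} (hr : 0 < r) (hρ : 0 < ρ) {Y W : ℂ → ℂ × ℂ}
    (hY : ∀ w ∈ stripC r, DifferentiableAt ℂ Y w) (hW : ∀ w ∈ stripC r, DifferentiableAt ℂ W w)
    (h : ∀ γ ∈ mkS ρ, Y γ = W γ) : ∀ γ ∈ stripC r, Y γ = W γ := by
  have hd : ∀ {Y : ℂ → ℂ × ℂ}, (∀ w ∈ stripC r, DifferentiableAt ℂ Y w) → AnalyticOnNhd ℂ Y (mkS r) :=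
    fun hY => DifferentiableOn.analyticOnNhd
      (fun w hw => (hY w (mkS_sub_strip r hw)).differentiableWithinAt) (mkS_open r)
  have h0 : ∀ {ρ : ℝ}, 0 < ρ → (0 : ℂ) ∈ mkS ρ := fun h => by simpa [mkS] using h
  have heq : EqOn Y W (mkS r) := (hd hY).eqOn_of_preconnected_of_eventuallyEq (hd hW)
    (mkS_convex r).isPreconnected (h0 hr) (by
      filter_upwards [(mkS_open ρ).mem_nhds (h0 hρ)] with x hx
      exact h x hx)
  refine heq.of_subset_closure (fun w hw => (hY w hw).continuousAt.continuousWithinAt)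
    (fun w hw => (hW w hw).continuousAt.continuousWithinAt) (mkS_sub_strip r) ?_
  intro y hy
  have hy' : |y.im| ≤ r := hy
  have hlim : Filter.Tendsto (fun n : ℕ => ((1 - 1 / ((n:ℝ) + 1) : ℝ) : ℂ) * y) Filter.atTop (nhds y) := by
    have h1 : Filter.Tendsto (fun n : ℕ => (1 - 1 / ((n:ℝ) + 1) : ℝ)) Filter.atTop (nhds (1 - 0)) :=
      tendsto_const_nhds.sub tendsto_one_div_add_atTop_nhds_zero_nat
    rw [sub_zero] at h1
    have h2 := ((Complex.continuous_ofReal.tendsto 1).comp h1).mul_const y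
    simpa using h2
  refine mem_closure_of_tendsto hlim (Filter.Eventually.of_forall fun n => ?_)
  change |((((1 - 1 / ((n:ℝ) + 1) : ℝ) : ℂ) * y)).im| < r
  rw [Complex.im_ofReal_mul, abs_mul]
  have hn : (0:ℝ) < 1 / ((n:ℝ) + 1) := by positivity
  have hn1 : 1 / ((n:ℝ) + 1) ≤ 1 := by
    rw [div_le_one (by positivity)]; linarith [Nat.cast_nonneg (α := ℝ) n]
  rw [abs_of_nonneg (by linarith)]
  nlinarith [abs_nonneg y.im]

lemma mk_local_unique {r T : ℝ} (hr : 0 < r) {Z₀ : ℂ → ℂ × ℂ} {Y W : ℝ → ℂ → ℂ × ℂ}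
    (HY : IsCKSol r T Z₀ Y) (HW : IsCKSol r T Z₀ W) {a : ℝ} (ha : a ∈ Ioo (-T) T)
    (hYW : ∀ γ ∈ stripC r, Y a γ = W a γ) :
    ∀ᶠ t in nhds a, t ∈ Ioo (-T) T ∧ ∀ γ ∈ stripC r, Y t γ = W t γ := by
  have haI := Ioo_subset_Icc_self ha
  obtain ⟨h, c, M, hH, B⟩ := mk_base (H := r / 16) hr (by linarith) (HY.1 a haI) (HY.2.1 a haI)
    (HY.2.2.2.2.2 a haI)
  have hh0 := B.hpos
  have hcp := B.cpos
  obtain ⟨ε, E⟩ := mk_sm hh0 hcp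
  have hε := E.e0
  set η := min ε (r / 8 * min (1 / 72) (c / 8)) with hη
  have hη0 : 0 < η := by rw [hη]; positivity
  have hηε : η ≤ ε := min_le_left _ _
  have hη' : 2 * η / (r / 4) ≤ min (1 / 72) (c / 8) := by
    rw [div_le_iff₀ (by linarith)]
    have : η ≤ r / 8 * min (1 / 72) (c / 8) := min_le_right _ _
    linarith
  have hev := (mk_sol_close hr HY ha hη0).and (mk_sol_close hr HW ha hη0)
  obtain ⟨τ, hτ, hb⟩ := Metric.eventually_nhds_iff.mp hev
  obtain ⟨K, hLK, hK⟩ := mk_K h c M hε (h / τ)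
  have hk0 := hK.k0
  have hd : ∀ t, |t| < τ → dist (a + t) a < τ := fun t ht => by simpa [Real.dist_eq] using ht
  obtain ⟨CY, FY⟩ := mk_sol_cone hr HY B E hK (by linarith) hηε (hη'.trans (min_le_left _ _))
    (hη'.trans (min_le_right _ _)) hLK hτ (fun _ _ => rfl) (fun t ht => (hb (hd t ht)).1)
  obtain ⟨CW, FW⟩ := mk_sol_cone hr HW B E hK (by linarith) hηε (hη'.trans (min_le_left _ _))
    (hη'.trans (min_le_right _ _)) hLK hτ (fun γ hγ => (hYW γ hγ).symm) (fun t ht => (hb (hd t ht)).2)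
  have hu := mk_cone_unique B E hK CY CW FY FW
  have hball : Metric.ball a (h / K) ∈ nhds a := Metric.ball_mem_nhds a (by positivity)
  filter_upwards [hball, hev] with t ht ht2
  have ht' : K * |t - a| < h := by
    rw [Metric.mem_ball, Real.dist_eq, lt_div_iff₀ hk0] at ht
    linarith
  refine ⟨ht2.1.1, ?_⟩
  have htI := Ioo_subset_Icc_self ht2.1.1
  refine mk_identity hr (ρ := 3 * h) (by linarith) (HY.1 t htI) (HW.1 t htI) fun γ hγ => ?_
  have := hu (t - a) ht' γ (mkS_mono (by linarith) hγ)
  simpa using this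

lemma mk_unique {r T : ℝ} (hr : 0 < r) (hT : 0 < T) {Z₀ : ℂ → ℂ × ℂ} {Y W : ℝ → ℂ → ℂ × ℂ}
    (HY : IsCKSol r T Z₀ Y) (HW : IsCKSol r T Z₀ W) :
    ∀ t ∈ Icc (-T) T, ∀ γ ∈ stripC r, Y t γ = W t γ := by
  set A : Set ℝ := {t | t ∈ Ioo (-T) T ∧ ∀ γ ∈ stripC r, Y t γ = W t γ} with hA
  have hcY := HY.2.2.1
  have hcW := HW.2.2.1
  have hAo : IsOpen A := isOpen_iff_mem_nhds.mpr fun a ha => mk_local_unique hr HY HW ha.1 ha.2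
  have h0 : (0:ℝ) ∈ Ioo (-T) T := ⟨by linarith, hT⟩
  have hsub : Ioo (-T) T ⊆ A := by
    refine isPreconnected_Ioo.subset_of_closure_inter_subset hAo
      ⟨0, h0, h0, fun γ hγ => ?_⟩ ?_
    · rw [HY.2.2.2.1 γ hγ, HW.2.2.2.1 γ hγ]
    · rintro t ⟨htc, ht⟩
      refine ⟨ht, fun γ hγ => ?_⟩
      have hss : closure A ∩ Ioo (-T) T ⊆ Icc (-T) T := fun x hx => Ioo_subset_Icc_self hx.2
      have : EqOn (fun t => Y t γ) (fun t => W t γ) (closure A ∩ Ioo (-T) T) :=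
        EqOn.of_subset_closure (s := A) (fun x hx => hx.2 γ hγ) ((hcY γ hγ).mono hss)
          ((hcW γ hγ).mono hss) (fun x hx => ⟨subset_closure hx, hx.1⟩) (fun x hx => hx.1)
      exact this ⟨htc, ht⟩
  intro t ht γ hγ
  have : EqOn (fun t => Y t γ) (fun t => W t γ) (Icc (-T) T) :=
    EqOn.of_subset_closure (s := Ioo (-T) T) (fun x hx => (hsub hx).2 γ hγ) (hcY γ hγ) (hcW γ hγ)
      Ioo_subset_Icc_self (by rw [closure_Ioo (by linarith : -T ≠ T)])
  exact this ht

end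

/-- Local existence and uniqueness, forwards and backwards in time, for analytic
initial data satisfying the arc-chord condition; no Rayleigh–Taylor assumption. -/
theorem muskat_cauchy_kowalewski (r₀ : ℝ) (hr₀ : 0 < r₀) (Z₀ : ℂ → ℂ × ℂ)
    (hol : ∀ w ∈ stripC r₀, DifferentiableAt ℂ Z₀ w)
    (hper : cPerCurve Z₀)
    (hreal : ∀ α : ℝ, (Z₀ (α : ℂ)).1.im = 0 ∧ (Z₀ (α : ℂ)).2.im = 0)
    (hac : cArcChordOn Z₀ (stripC r₀)) :
    ∃ T > 0, ∃ r : ℝ, 0 < r ∧ r < r₀ ∧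
      ∃ Z : ℝ → ℂ → ℂ × ℂ, IsCKSol r T Z₀ Z ∧
        ∀ Z' : ℝ → ℂ → ℂ × ℂ, IsCKSol r T Z₀ Z' →
          ∀ t ∈ Icc (-T) T, ∀ γ ∈ stripC r, Z' t γ = Z t γ := by
  obtain ⟨T, hT, r, hr, hrr, Z, hZ⟩ := mk_exists hr₀ hol hper hac
  exact ⟨T, hT, r, hr, hrr, Z, hZ, fun Z' hZ' => mk_unique hr hT hZ' hZ⟩
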